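/- arXiv:1911.09995 — 2 statements merged into one kernel-verified Lean document; each statement's English description precedes it below -/
import Mathlib

section
/- Let n ≥ 1 be an integer and δ ∈ {0,1}. Let u : ℝ → ℝ be a 2π-periodic, (n+1)-times continuously differentiable function possessing a point y_c such that u^(j)(y_c) = 0 for all 1 ≤ j ≤ n−1 (for n = 1 this is no condition). If u is diffusion enhancing at some rate r : (0,κ₀] → (0,1), then liminf_{κ→0⁺} κ^{n/(n+2)}/r(κ) > 0; that is, there exist c > 0 and κ₁ ∈ (0,κ₀] such that r(κ) ≤ c⁻¹ κ^{n/(n+2)} for all κ ∈ (0,κ₁]. -/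
/-!
The upper bound on the rate comes from one explicit family of initial data. Near `y_c` the shear is
almost constant: vanishing of `u⁽ʲ⁾(y_c)` for `1 ≤ j ≤ n - 1` gives
`|u(y) - u(y_c)| ≤ A |y - y_c|ⁿ`. A profile `φ` concentrated at scale `ℓ` around `y_c` is therefore
an approximate stationary state: in the frame moving with speed `u(y_c)`, the operator
`κ ∂ᵧᵧ - i (u - u(y_c)) - κ δ` acting on the first Fourier mode in `x` sends `φ` to a residual `ψ`
with `‖ψ‖ ≲ (κ ℓ⁻² + ℓⁿ) ‖φ‖`. Balancing the two terms, `ℓ = κ^{1/(n+2)}`, the residual has size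
`B ~ κ^{n/(n+2)}`.

Let `f` be the solution of the mode equation started from `φ`, with `L²` norm `‖·‖`. Since the
operator is symmetric for the bilinear pairing `∫ φ f`, one has `d/dt ∫ φ f = ∫ ψ f`, and the
assumed decay bounds `‖f‖²` by `C ‖φ‖²`. Hence `∫ φ f` stays above `‖φ‖² / 2` up to time
`T = 1 / (2 B C)`, so at least a quarter of `‖φ‖²` survives at time `T`. Compared with
`C e^{-r T} ‖φ‖²` this forces `r ≤ 8 C² B` (`rate_le_of_quasimode`).

The profile is `φ(y) = ((1 + cos (y - y_c)) / 2)^N` with `N ~ ℓ⁻²` (`bump`,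
`exists_concentration`). It is periodic, a trigonometric polynomial, and all integrals needed for
the residual satisfy an exact recursion (`trigMoment_succ`), which yields `residual_bound`.

The decay hypothesis quantifies over classical solutions, so a classical solution with this datum
has to be produced (`exists_mode_solution`). Its Fourier coefficients in `y` solve an infinite
linear system; after damping by `e^{-μ t}` the Duhamel form of this system is a contraction on the
absolutely summable sequences of bounded continuous functions of time, as soon as `μ` exceeds the
`ℓ¹` norm of the Fourier coefficients of the potential. Parabolic smoothing gives two spatial
derivatives with absolutely convergent Fourier series.
-/

open MeasureTheory Real Set Filter

noncomputable section

/-- `ρ : ℝ → ℝ → ℝ → ℝ`, as `ρ t x y`, is a solution of the shear advection–diffusion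
equation `∂ₜρ + u(y) ∂ₓρ = κ (δ ∂ₓₓρ + ∂ᵧᵧρ)` on `[0,∞) × 𝕋²` (2π-periodic in `x` and `y`),
continuous up to `t = 0`, C¹ in time and C² in space for `t > 0`. -/
structure IsShearSolution (δ κ : ℝ) (u : ℝ → ℝ) (ρ : ℝ → ℝ → ℝ → ℝ) : Prop where
  cont : ContinuousOn (fun p : ℝ × ℝ × ℝ => ρ p.1 p.2.1 p.2.2) {p : ℝ × ℝ × ℝ | 0 ≤ p.1}
  periodic_x : ∀ t x y, ρ t (x + 2 * π) y = ρ t x y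
  periodic_y : ∀ t x y, ρ t x (y + 2 * π) = ρ t x y
  diff_t : ∀ t, 0 < t → ∀ x y, DifferentiableAt ℝ (fun s => ρ s x y) t
  diff_x : ∀ t, 0 < t → ∀ x y, DifferentiableAt ℝ (fun a => ρ t a y) x
  diff_xx : ∀ t, 0 < t → ∀ x y, DifferentiableAt ℝ (fun a => deriv (fun b => ρ t b y) a) x
  diff_y : ∀ t, 0 < t → ∀ x y, DifferentiableAt ℝ (fun b => ρ t x b) y
  diff_yy : ∀ t, 0 < t → ∀ x y, DifferentiableAt ℝ (fun b => deriv (fun c => ρ t x c) b) y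
  cont_dt : ContinuousOn (fun p : ℝ × ℝ × ℝ => deriv (fun s => ρ s p.2.1 p.2.2) p.1)
      {p : ℝ × ℝ × ℝ | 0 < p.1}
  cont_dxx : ContinuousOn
      (fun p : ℝ × ℝ × ℝ => deriv (fun a => deriv (fun b => ρ p.1 b p.2.2) a) p.2.1)
      {p : ℝ × ℝ × ℝ | 0 < p.1}
  cont_dyy : ContinuousOn
      (fun p : ℝ × ℝ × ℝ => deriv (fun b => deriv (fun c => ρ p.1 p.2.1 c) b) p.2.2)
      {p : ℝ × ℝ × ℝ | 0 < p.1}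
  pde : ∀ t, 0 < t → ∀ x y,
    deriv (fun s => ρ s x y) t + u y * deriv (fun a => ρ t a y) x =
      κ * (δ * deriv (fun a => deriv (fun b => ρ t b y) a) x +
        deriv (fun b => deriv (fun c => ρ t x c) b) y)

/-- The squared `L²` norm of `ρ(t)` on the torus `[0,2π]²`. -/
def l2normSq (ρ : ℝ → ℝ → ℝ → ℝ) (t : ℝ) : ℝ :=
  ∫ x in (0:ℝ)..(2 * π), ∫ y in (0:ℝ)..(2 * π), (ρ t x y) ^ 2

/-- `r : (0,κ₀] → (0,1)` is a rate function: continuous, increasing, with `κ/r(κ) → 0`. -/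
def IsRateFunction (κ₀ : ℝ) (r : ℝ → ℝ) : Prop :=
  ContinuousOn r (Ioc 0 κ₀) ∧ MonotoneOn r (Ioc 0 κ₀) ∧
    (∀ κ ∈ Ioc (0:ℝ) κ₀, r κ ∈ Ioo (0:ℝ) 1) ∧
    Tendsto (fun κ => κ / r κ) (nhdsWithin 0 (Ioi 0)) (nhds 0)

/-- The shear flow `u` is diffusion enhancing at rate `r` on `(0,κ₀]`: every solution with
streamline-mean-free initial datum decays like `C e^{-r(κ)t}` in `L²`. -/
def DiffusionEnhancing (δ κ₀ : ℝ) (u : ℝ → ℝ) (r : ℝ → ℝ) : Prop :=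
  ∃ C : ℝ, 1 ≤ C ∧ ∀ κ ∈ Ioc (0:ℝ) κ₀, ∀ ρ : ℝ → ℝ → ℝ → ℝ,
    IsShearSolution δ κ u ρ →
    (∀ y : ℝ, (∫ x in (0:ℝ)..(2 * π), ρ 0 x y) = 0) →
    ∀ t : ℝ, 0 ≤ t → l2normSq ρ t ≤ C * Real.exp (-(r κ) * t) * l2normSq ρ 0


/-! ### Operators on absolutely summable Fourier sequences -/

section SequenceSpace

variable {E : Type*} [NormedAddCommGroup E]

theorem l1_summable (c : lp (fun _ : ℤ => E) 1) : Summable fun m => ‖c m‖ := by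
  simpa using (lp.memℓp c).summable (by simp)

theorem l1_norm (c : lp (fun _ : ℤ => E) 1) : ‖c‖ = ∑' m, ‖c m‖ := by
  simpa using lp.norm_eq_tsum_rpow (p := 1) (by simp) c

theorem l1_mem {c : ℤ → E} (hc : Summable fun m => ‖c m‖) : Memℓp c 1 :=
  memℓp_gen (by simpa using hc)

variable [NormedSpace ℂ E]

/-- A uniformly bounded family of operators acts diagonally on `ℓ¹(ℤ, E)`. -/
theorem exists_diag (D : ℤ → E →L[ℂ] E) {C : ℝ} (hC : 0 ≤ C) (hD : ∀ m, ‖D m‖ ≤ C) :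
    ∃ L : lp (fun _ : ℤ => E) 1 →L[ℂ] lp (fun _ : ℤ => E) 1,
      ‖L‖ ≤ C ∧ ∀ c m, L c m = D m (c m) := by
  have hb : ∀ (c : lp (fun _ : ℤ => E) 1) m, ‖D m (c m)‖ ≤ C * ‖c m‖ := fun c m =>
    (D m).le_of_opNorm_le (hD m) _
  have hs : ∀ c : lp (fun _ : ℤ => E) 1, Summable fun m => ‖D m (c m)‖ := fun c =>
    .of_nonneg_of_le (fun _ => norm_nonneg _) (hb c) ((l1_summable c).mul_left C)
  let L : lp (fun _ : ℤ => E) 1 →ₗ[ℂ] lp (fun _ : ℤ => E) 1 :=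
    { toFun := fun c => ⟨fun m => D m (c m), l1_mem (hs c)⟩
      map_add' := fun a b => by ext m; simp; rfl
      map_smul' := fun a b => by ext m; simp }
  refine ⟨L.mkContinuous C fun c => ?_, L.mkContinuous_norm_le hC _, fun c m => rfl⟩
  rw [l1_norm, l1_norm, ← tsum_mul_left]
  exact (hs c).tsum_le_tsum (hb c) ((l1_summable c).mul_left C)

theorem exists_shift (j : ℤ) :
    ∃ S : lp (fun _ : ℤ => E) 1 →L[ℂ] lp (fun _ : ℤ => E) 1,
      ‖S‖ ≤ 1 ∧ ∀ c m, S c m = c (m - j) := by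
  have hs : ∀ c : lp (fun _ : ℤ => E) 1, Summable fun m => ‖c (m - j)‖ := fun c =>
    (Equiv.subRight j).summable_iff.mpr (l1_summable c)
  let L : lp (fun _ : ℤ => E) 1 →ₗ[ℂ] lp (fun _ : ℤ => E) 1 :=
    { toFun := fun c => ⟨fun m => c (m - j), l1_mem (hs c)⟩
      map_add' := fun a b => by ext m; simp; rfl
      map_smul' := fun a b => by ext m; simp }
  refine ⟨L.mkContinuous 1 fun c => ?_, L.mkContinuous_norm_le zero_le_one _, fun c m => rfl⟩
  rw [l1_norm, l1_norm, one_mul]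
  exact ((Equiv.subRight j).tsum_eq fun m => ‖c m‖).le

theorem norm_exp_int (m : ℤ) (y : ℝ) : ‖Complex.exp (m * y * Complex.I)‖ = 1 := by
  have := Complex.norm_exp_ofReal_mul_I (m * y)
  push_cast at this
  exact this

/-- Summation of the Fourier series with given `ℓ¹` coefficients, at the point `y`, as a bounded
operator. -/
theorem exists_synthesis [CompleteSpace E] (y : ℝ) :
    ∃ T : lp (fun _ : ℤ => E) 1 →L[ℂ] E,
      ∀ c, HasSum (fun m : ℤ => Complex.exp (m * y * Complex.I) • c m) (T c) := by
  have hn : ∀ (c : lp (fun _ : ℤ => E) 1) (m : ℤ),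
      ‖Complex.exp (m * y * Complex.I) • c m‖ = ‖c m‖ := fun c m => by
    rw [norm_smul, norm_exp_int, one_mul]
  have hs : ∀ c : lp (fun _ : ℤ => E) 1,
      Summable fun m : ℤ => Complex.exp (m * y * Complex.I) • c m := fun c =>
    .of_norm (by simpa only [hn] using l1_summable c)
  let L : lp (fun _ : ℤ => E) 1 →ₗ[ℂ] E :=
    { toFun := fun c => ∑' m : ℤ, Complex.exp (m * y * Complex.I) • c m
      map_add' := fun a b => by
        rw [← (hs a).tsum_add (hs b)]
        simp
      map_smul' := fun a b => by
        simp only [RingHom.id_apply]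
        rw [← (hs b).tsum_const_smul]
        simp [smul_comm a] }
  refine ⟨L.mkContinuous 1 fun c => ?_, fun c => (hs c).hasSum⟩
  rw [l1_norm, one_mul, ← tsum_congr (hn c)]
  exact norm_tsum_le_tsum_norm (by simpa only [hn] using l1_summable c)

/-- Neumann-series solution of `c = c₀ + D (v * c)`, where `v * c` is convolution of Fourier
coefficients. The second conclusion says that `b = v * c` are the coefficients of the product of
`V` with the function whose coefficients are `c`. -/
theorem exists_fixed_point [CompleteSpace E] {v : ℤ → ℂ} (hv : Summable fun j => ‖v j‖)
    {V : ℝ → ℂ} (hV : ∀ y : ℝ, HasSum (fun j : ℤ => v j * Complex.exp (j * y * Complex.I)) (V y))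
    (D : ℤ → E →L[ℂ] E) {C : ℝ} (hC : 0 ≤ C) (hD : ∀ m, ‖D m‖ ≤ C)
    (hsmall : C * ∑' j, ‖v j‖ < 1) (c₀ : lp (fun _ : ℤ => E) 1) :
    ∃ c b : lp (fun _ : ℤ => E) 1, (∀ m, c m = c₀ m + D m (b m)) ∧
      ∀ y : ℝ, ∑' m : ℤ, Complex.exp (m * y * Complex.I) • b m =
        V y • ∑' m : ℤ, Complex.exp (m * y * Complex.I) • c m := by
  obtain ⟨L, hLn, hL⟩ := exists_diag D hC hD
  choose S hSn hS using exists_shift (E := E)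
  have hvS : ∀ j, ‖v j • S j‖ ≤ ‖v j‖ := fun j => by
    rw [norm_smul]
    exact mul_le_of_le_one_right (norm_nonneg _) (hSn j)
  have hsum : Summable fun j => ‖v j • S j‖ :=
    .of_nonneg_of_le (fun _ => norm_nonneg _) hvS hv
  set M := ∑' j, v j • S j with hM
  have hMn : ‖M‖ ≤ ∑' j, ‖v j‖ :=
    (norm_tsum_le_tsum_norm hsum).trans (hsum.tsum_le_tsum hvS hv)
  have ht : ‖L * M‖ < 1 := calc
    ‖L * M‖ ≤ ‖L‖ * ‖M‖ := norm_mul_le _ _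
    _ ≤ C * ∑' j, ‖v j‖ := by gcongr
    _ < 1 := hsmall
  have hinv := mul_neg_geom_series (L * M) ht
  set G := ∑' i : ℕ, (L * M) ^ i
  refine ⟨G c₀, M (G c₀), fun m => ?_, fun y => ?_⟩
  · have h1 : G c₀ - L (M (G c₀)) = c₀ := by
      have := congrArg (fun A : lp (fun _ : ℤ => E) 1 →L[ℂ] lp (fun _ : ℤ => E) 1 => A c₀) hinv
      simpa [sub_mul] using this
    have h2 : G c₀ = c₀ + L (M (G c₀)) := sub_eq_iff_eq_add.mp h1
    rw [← hL]
    conv_lhs => rw [h2]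
    rfl
  · obtain ⟨T, hT⟩ := exists_synthesis (E := E) y
    rw [(hT _).tsum_eq, (hT _).tsum_eq]
    generalize G c₀ = c
    have hTS : ∀ j, T (S j c) = Complex.exp (j * y * Complex.I) • T c := by
      intro j
      refine (hT (S j c)).unique ?_
      have h := ((Equiv.subRight j).hasSum_iff.mpr (hT c)).const_smul
        (Complex.exp (j * y * Complex.I))
      convert h using 2 with m
      simp only [Function.comp_apply, Equiv.subRight_apply]
      rw [hS, smul_smul, ← Complex.exp_add]
      congr 2
      push_cast
      ring
    have h1 : HasSum (fun j => T ((v j • S j) c)) (T (M c)) := by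
      have := (hsum.of_norm.hasSum.mapL (ContinuousLinearMap.apply ℂ _ c)).mapL T
      simpa using this
    have h2 := (hV y).smul_const (T c)
    refine h1.unique ?_
    convert h2 using 2 with j
    simp [hTS, mul_smul]

end SequenceSpace

/-! ### Construction of classical solutions of the mode equation -/

/-- The Duhamel operator `b ↦ ∫₀ᵗ e^{-l (t - s)} b(s) ds` on bounded continuous functions of time;
its norm is at most `1 / l`. Times live in `NNReal`, so that functions on `[0, ∞)` form a space of
bounded continuous functions; `s.toNNReal` is the harmless truncation of a real time. -/
theorem exists_duhamel {l : ℝ} (hl : 0 < l) :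
    ∃ D : BoundedContinuousFunction NNReal ℂ →L[ℂ] BoundedContinuousFunction NNReal ℂ,
      ‖D‖ ≤ 1 / l ∧ ∀ b (t : NNReal), D b t =
        (Real.exp (-l * t) : ℂ) * ∫ s in (0:ℝ)..t, (Real.exp (l * s) : ℂ) * b s.toNNReal := by
  have hcs : ∀ b : BoundedContinuousFunction NNReal ℂ,
      Continuous fun s : ℝ => (Real.exp (l * s) : ℂ) * b s.toNNReal := fun b =>
    (Complex.continuous_ofReal.comp (by fun_prop)).mul
      (b.continuous.comp continuous_real_toNNReal)
  have hintg : ∀ (b : BoundedContinuousFunction NNReal ℂ) (x y : ℝ), IntervalIntegrable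
      (fun s : ℝ => (Real.exp (l * s) : ℂ) * b s.toNNReal) volume x y := fun b x y =>
    (hcs b).intervalIntegrable _ _
  have hcont : ∀ b : BoundedContinuousFunction NNReal ℂ, Continuous fun t : NNReal =>
      (Real.exp (-l * t) : ℂ) * ∫ s in (0:ℝ)..t, (Real.exp (l * s) : ℂ) * b s.toNNReal := by
    intro b
    refine (Complex.continuous_ofReal.comp (by fun_prop)).mul ?_
    exact (intervalIntegral.continuous_primitive (hintg b) 0).comp NNReal.continuous_coe
  have hbd : ∀ (b : BoundedContinuousFunction NNReal ℂ) (t : NNReal),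
      ‖(Real.exp (-l * t) : ℂ) * ∫ s in (0:ℝ)..t, (Real.exp (l * s) : ℂ) * b s.toNNReal‖
        ≤ 1 / l * ‖b‖ := by
    intro b t
    have hI : ∫ s in (0:ℝ)..t, Real.exp (l * s) * ‖b‖ = (Real.exp (l * t) - 1) / l * ‖b‖ := by
      rw [intervalIntegral.integral_mul_const,
        intervalIntegral.integral_comp_mul_left (fun s => Real.exp s) hl.ne', integral_exp]
      simp
      left; ring
    have h1 : ‖∫ s in (0:ℝ)..t, (Real.exp (l * s) : ℂ) * b s.toNNReal‖ ≤
        (Real.exp (l * t) - 1) / l * ‖b‖ := by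
      rw [← hI]
      refine intervalIntegral.norm_integral_le_of_norm_le t.2 (ae_of_all _ fun s _ => ?_)
        (Continuous.intervalIntegrable (by fun_prop) _ _)
      rw [norm_mul, Complex.norm_real, Real.norm_eq_abs, abs_of_pos (Real.exp_pos _)]
      gcongr
      exact b.norm_coe_le_norm _
    rw [norm_mul, Complex.norm_real, Real.norm_eq_abs, abs_of_pos (Real.exp_pos _)]
    calc Real.exp (-l * t) * _ ≤ Real.exp (-l * t) * ((Real.exp (l * t) - 1) / l * ‖b‖) := by gcongr
      _ = (1 - Real.exp (-l * t)) / l * ‖b‖ := by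
        have : Real.exp (-l * t) * Real.exp (l * t) = 1 := by rw [← Real.exp_add]; simp
        linear_combination this / l * ‖b‖
      _ ≤ 1 / l * ‖b‖ := by
        gcongr
        linarith [Real.exp_pos (-l * t)]
  let L : BoundedContinuousFunction NNReal ℂ →ₗ[ℂ] BoundedContinuousFunction NNReal ℂ :=
    { toFun := fun b => BoundedContinuousFunction.ofNormedAddCommGroup _ (hcont b) _ (hbd b)
      map_add' := fun a b => by
        ext t
        simp only [BoundedContinuousFunction.coe_ofNormedAddCommGroup,
          BoundedContinuousFunction.coe_add, Pi.add_apply, mul_add]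
        rw [intervalIntegral.integral_add (hintg a _ _) (hintg b _ _), mul_add]
      map_smul' := fun a b => by
        ext t
        simp only [BoundedContinuousFunction.coe_ofNormedAddCommGroup,
          BoundedContinuousFunction.coe_smul, smul_eq_mul, RingHom.id_apply]
        simp only [mul_left_comm _ a, intervalIntegral.integral_const_mul] }
  refine ⟨L.mkContinuous (1 / l) fun b => ?_, L.mkContinuous_norm_le (by positivity) _,
    fun b t => rfl⟩
  exact (BoundedContinuousFunction.norm_le (by positivity)).mpr (hbd b)

theorem fourierCoeffOn_bound (f : ℝ → ℂ) :
    ∃ C : ℝ, 0 ≤ C ∧ ∀ n : ℤ, ‖fourierCoeffOn two_pi_pos f n‖ ≤ C := by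
  refine ⟨|1 / (2 * π)| * (∫ x in (0:ℝ)..(2 * π), ‖f x‖), ?_, fun n => ?_⟩
  · have : 0 ≤ ∫ x in (0:ℝ)..(2 * π), ‖f x‖ :=
      intervalIntegral.integral_nonneg two_pi_pos.le fun _ _ => norm_nonneg _
    positivity
  · rw [fourierCoeffOn_eq_integral, sub_zero, norm_smul, Real.norm_eq_abs]
    gcongr
    refine (intervalIntegral.norm_integral_le_integral_norm two_pi_pos.le).trans (le_of_eq ?_)
    refine intervalIntegral.integral_congr fun x _ => ?_
    simp only [norm_smul, fourier_apply, Circle.norm_coe, one_mul]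

theorem fourierCoeffOn_norm_deriv {f f' : ℝ → ℂ} (hf : ∀ x, HasDerivAt f (f' x) x)
    (hf' : Continuous f') (hper : ∀ x, f (x + 2 * π) = f x) {n : ℤ} (hn : n ≠ 0) :
    ‖fourierCoeffOn two_pi_pos f n‖ = ‖fourierCoeffOn two_pi_pos f' n‖ / |(n : ℝ)| := by
  rw [fourierCoeffOn_of_hasDerivAt two_pi_pos hn (fun x _ => hf x) (hf'.intervalIntegrable _ _)]
  have h0 : f (2 * π) - f 0 = 0 := by rw [← hper 0]; simp
  rw [h0]
  simp
  have := pi_pos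
  have h : |(n : ℝ)| ≠ 0 := by simpa using hn
  rw [abs_of_pos this]
  field_simp

/-- A periodic `C²` function is the sum of its absolutely convergent Fourier series, since its
coefficients are `O(1 / n²)`. -/
theorem exists_fourier_series {V : ℝ → ℂ} (hV : ContDiff ℝ 2 V)
    (hper : ∀ x, V (x + 2 * π) = V x) :
    ∃ v : ℤ → ℂ, Summable (fun j => ‖v j‖) ∧
      ∀ y : ℝ, HasSum (fun j : ℤ => v j * Complex.exp (j * y * Complex.I)) (V y) := by
  have : Fact (0 < 2 * π) := ⟨two_pi_pos⟩
  have hP : Function.Periodic V (2 * π) := hper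
  have hV1 : ContDiff ℝ 1 (deriv V) := by
    have h2 : ContDiff ℝ (1 + 1) V := by simpa [one_add_one_eq_two] using hV
    exact (contDiff_succ_iff_deriv.1 h2).2.2
  have hV2 : Continuous (deriv (deriv V)) := hV1.continuous_deriv le_rfl
  have hd : ∀ x, HasDerivAt V (deriv V x) x := fun x =>
    (hV.differentiable (by norm_num) x).hasDerivAt
  have hd1 : ∀ x, HasDerivAt (deriv V) (deriv (deriv V) x) x := fun x =>
    (hV1.differentiable (by norm_num) x).hasDerivAt
  have hper1 : ∀ x, deriv V (x + 2 * π) = deriv V x := by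
    intro x
    rw [← deriv_comp_add_const]
    congr 1
    ext y; exact hper y
  have hcont : Continuous hP.lift := continuous_coinduced_dom.mpr hV.continuous
  let F : C(AddCircle (2 * π), ℂ) := ⟨hP.lift, hcont⟩
  have hF : ∀ y : ℝ, F (y : AddCircle (2 * π)) = V y := fun y => Function.Periodic.lift_coe hP y
  have hco : ∀ n, fourierCoeff F n = fourierCoeffOn two_pi_pos V n := by
    intro n
    rw [fourierCoeff_eq_intervalIntegral _ _ 0, fourierCoeffOn_eq_integral]
    simp [hF]
  obtain ⟨C, hC0, hC⟩ := fourierCoeffOn_bound (deriv (deriv V))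
  have hsum : Summable (fun n : ℤ => C * (1 / (n : ℝ) ^ 2)) :=
    (Real.summable_one_div_int_pow.mpr (by norm_num)).mul_left C
  have hs : Summable (fourierCoeff F) := by
    refine .of_norm_bounded_eventually hsum ?_
    have : ({0}ᶜ : Set ℤ) ∈ cofinite := (Set.finite_singleton (0 : ℤ)).compl_mem_cofinite
    filter_upwards [this] with n hn
    have hn' : n ≠ 0 := by simpa using hn
    rw [hco, fourierCoeffOn_norm_deriv hd hV1.continuous hper hn',
      fourierCoeffOn_norm_deriv hd1 hV2 hper1 hn', div_div, ← sq, sq_abs, ← div_eq_mul_one_div]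
    gcongr
    exact hC n
  refine ⟨fourierCoeff F, hs.norm, fun y => ?_⟩
  have h := has_pointwise_sum_fourier_series_of_summable hs (y : AddCircle (2 * π))
  rw [hF] at h
  convert h using 2 with j
  rw [smul_eq_mul, fourier_coe_apply]
  congr 2
  have : (π : ℂ) ≠ 0 := by exact_mod_cast pi_ne_zero
  push_cast
  field_simp

theorem continuous_series (c : ℤ → BoundedContinuousFunction NNReal ℂ) (w : ℤ → ℂ)
    (h : Summable fun m => ‖w m‖ * ‖c m‖) :
    Continuous fun p : ℝ × ℝ =>
      ∑' m : ℤ, w m * c m p.1.toNNReal * Complex.exp (m * p.2 * Complex.I) := by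
  refine continuous_tsum (fun m => ?_) h fun m p => ?_
  · have : Continuous fun p : ℝ × ℝ => c m p.1.toNNReal :=
      (c m).continuous.comp (continuous_real_toNNReal.comp continuous_fst)
    fun_prop
  · rw [norm_mul, norm_mul, norm_exp_int, mul_one]
    gcongr
    exact (c m).norm_coe_le_norm _

theorem hasDerivAt_exp_int (m : ℤ) (z : ℂ) (y : ℝ) :
    HasDerivAt (fun y : ℝ => z * Complex.exp (m * y * Complex.I))
      ((m * Complex.I) * z * Complex.exp (m * y * Complex.I)) y := by
  have h : HasDerivAt (fun y : ℝ => (m * y * Complex.I : ℂ)) (m * Complex.I) y := by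
    have := ((Complex.ofRealCLM.hasDerivAt (x := y)).const_mul (m : ℂ)).mul_const Complex.I
    simpa using this
  exact (h.cexp.const_mul z).congr_deriv (by ring)

theorem hasDerivAt_series (c : ℤ → BoundedContinuousFunction NNReal ℂ) (w : ℤ → ℂ)
    (h0 : Summable fun m => ‖w m‖ * ‖c m‖)
    (h : Summable fun m : ℤ => ‖m * Complex.I * w m‖ * ‖c m‖) (t y : ℝ) :
    HasDerivAt (fun y : ℝ => ∑' m : ℤ, w m * c m t.toNNReal * Complex.exp (m * y * Complex.I))
      (∑' m : ℤ, m * Complex.I * w m * c m t.toNNReal * Complex.exp (m * y * Complex.I)) y := by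
  have hb : ∀ (w : ℤ → ℂ) (m : ℤ) (y : ℝ),
      ‖w m * c m t.toNNReal * Complex.exp (m * y * Complex.I)‖ ≤ ‖w m‖ * ‖c m‖ := by
    intro w m y
    rw [norm_mul, norm_mul, norm_exp_int, mul_one]
    gcongr
    exact (c m).norm_coe_le_norm _
  refine hasDerivAt_tsum (y₀ := 0) h (fun m y => ?_)
    (fun m y => hb (fun m => m * Complex.I * w m) m y) ?_ y
  · exact (hasDerivAt_exp_int m (w m * c m t.toNNReal) y).congr_deriv (by ring)
  · exact .of_norm_bounded h0 fun m => hb w m 0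

/-- The Duhamel formula solves `dc/dt = -l c + b`, `c(0) = z`. -/
theorem hasDerivAt_duhamel {l : ℝ} (z : ℂ) (b : BoundedContinuousFunction NNReal ℂ) (t : ℝ) :
    HasDerivAt (fun t : ℝ => (Real.exp (-l * t) : ℂ) *
        (z + ∫ s in (0:ℝ)..t, (Real.exp (l * s) : ℂ) * b s.toNNReal))
      (-l * ((Real.exp (-l * t) : ℂ) *
        (z + ∫ s in (0:ℝ)..t, (Real.exp (l * s) : ℂ) * b s.toNNReal)) + b t.toNNReal) t := by
  have hcs : Continuous fun s : ℝ => (Real.exp (l * s) : ℂ) * b s.toNNReal :=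
    (Complex.continuous_ofReal.comp (by fun_prop)).mul
      (b.continuous.comp continuous_real_toNNReal)
  have h1 := (intervalIntegral.integral_hasDerivAt_right (hcs.intervalIntegrable 0 t)
    (hcs.stronglyMeasurableAtFilter _ _) hcs.continuousAt).const_add z
  have h2 : HasDerivAt (fun t : ℝ => (Real.exp (-l * t) : ℂ)) ((Real.exp (-l * t) * (-l) : ℝ) : ℂ) t :=
    ((((hasDerivAt_id t).const_mul (-l)).exp).congr_deriv (by simp)).ofReal_comp
  refine (h2.mul h1).congr_deriv ?_
  have h3 : (Real.exp (-l * t) : ℂ) * (Real.exp (l * t) : ℂ) = 1 := by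
    rw [← Complex.ofReal_mul, ← Real.exp_add]; simp
  push_cast at h3 ⊢
  linear_combination (b t.toNNReal) * h3

/-- The function `t ↦ e^{-l t}` on `[0, ∞)`, as a bounded continuous function. -/
def expDecay (l : ℝ) (hl : 0 ≤ l) : BoundedContinuousFunction NNReal ℂ :=
  BoundedContinuousFunction.ofNormedAddCommGroup (fun t : NNReal => (Real.exp (-l * t) : ℂ))
    (Complex.continuous_ofReal.comp (by fun_prop)) 1 (fun t => by
      rw [Complex.norm_real, Real.norm_eq_abs, abs_of_pos (Real.exp_pos _)]
      exact Real.exp_le_one_iff.mpr (by nlinarith [mul_nonneg hl t.2]))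

/-- A classical solution of `∂ₜf = κ ∂ᵧᵧf + V f` whose initial datum is the trigonometric polynomial
with coefficients `a`. The functions `fy` and `fyy` are its first two derivatives in `y`; both, like
`f`, are defined for all real `t`, but the equation is only asserted for `t > 0`. -/
theorem exists_mode_solution {κ : ℝ} (hκ : 0 < κ) {V : ℝ → ℂ} (hV : ContDiff ℝ 2 V)
    (hper : ∀ x, V (x + 2 * π) = V x) (a : ℤ →₀ ℂ) :
    ∃ f fy fyy : ℝ → ℝ → ℂ,
      Continuous (fun p : ℝ × ℝ => f p.1 p.2) ∧ Continuous (fun p : ℝ × ℝ => fyy p.1 p.2) ∧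
      (∀ y : ℝ, f 0 y = a.sum fun m z => z * Complex.exp (m * y * Complex.I)) ∧
      (∀ t y, f t (y + 2 * π) = f t y) ∧ (∀ t y, fy t (y + 2 * π) = fy t y) ∧
      (∀ t y, HasDerivAt (f t) (fy t y) y) ∧ (∀ t y, HasDerivAt (fy t) (fyy t y) y) ∧
      ∀ t, 0 < t → ∀ y, HasDerivAt (fun s => f s y) (κ * fyy t y + V y * f t y) t := by
  obtain ⟨v, hv, hvV⟩ := exists_fourier_series hV hper
  -- The damping `μ` makes `‖D‖ ∑ ‖v j‖ ≤ (∑ ‖v j‖) / μ < 1`, so the fixed point exists globally.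
  set μ : ℝ := ∑' j, ‖v j‖ + 1 with hμ
  have hv0 : 0 ≤ ∑' j, ‖v j‖ := tsum_nonneg fun _ => norm_nonneg _
  have hμ0 : 0 < μ := by positivity
  have hl : ∀ m : ℤ, 0 < μ + κ * (m : ℝ) ^ 2 := fun m => by positivity
  choose D hDn hD using fun m : ℤ => exists_duhamel (hl m)
  have hDμ : ∀ m, ‖D m‖ ≤ 1 / μ := fun m => (hDn m).trans <| by
    gcongr
    have : 0 ≤ κ * (m : ℝ) ^ 2 := by positivity
    linarith
  let c₀ : ℤ → BoundedContinuousFunction NNReal ℂ := fun m => a m • expDecay _ (hl m).le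
  have hc₀fin : (Function.support c₀).Finite := by
    refine a.support.finite_toSet.subset fun m hm => ?_
    simp only [Function.mem_support, c₀] at hm
    simp only [Finset.mem_coe, Finsupp.mem_support_iff]
    rintro h
    exact hm (by simp [h])
  have hfs : ∀ w : ℤ → ℝ, Summable fun m => w m * ‖c₀ m‖ := fun w =>
    summable_of_hasFiniteSupport (hc₀fin.subset fun m hm => by
      simp only [Function.mem_support] at hm ⊢
      rintro h
      exact hm (by simp [h]))
  obtain ⟨c, b, hcb, hbV⟩ := exists_fixed_point hv hvV D (by positivity) hDμ
    (by rw [div_mul_eq_mul_div, div_lt_one hμ0]; linarith) ⟨c₀, l1_mem (by simpa using hfs 1)⟩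
  replace hcb : ∀ m, c m = c₀ m + D m (b m) := hcb
  have hbs := l1_summable b
  have hs0 : Summable fun m => ‖c m‖ := l1_summable c
  -- Parabolic smoothing: the Duhamel operator of mode `m` gains a factor `1 / (κ m²)`.
  have hs2 : Summable fun m : ℤ => (m : ℝ) ^ 2 * ‖c m‖ := by
    refine .of_nonneg_of_le (fun m => by positivity) (fun m => ?_)
      ((hfs fun m => (m : ℝ) ^ 2).add (hbs.mul_left (1 / κ)))
    rw [hcb]
    calc (m : ℝ) ^ 2 * ‖c₀ m + D m (b m)‖
        ≤ (m : ℝ) ^ 2 * (‖c₀ m‖ + 1 / (μ + κ * (m : ℝ) ^ 2) * ‖b m‖) := by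
          gcongr
          exact (norm_add_le _ _).trans (add_le_add le_rfl ((D m).le_of_opNorm_le (hDn m) _))
      _ = (m : ℝ) ^ 2 * ‖c₀ m‖ + ((m : ℝ) ^ 2 / (μ + κ * (m : ℝ) ^ 2)) * ‖b m‖ := by ring
      _ ≤ (m : ℝ) ^ 2 * ‖c₀ m‖ + 1 / κ * ‖b m‖ := by
          refine add_le_add le_rfl (mul_le_mul_of_nonneg_right ?_ (norm_nonneg _))
          rw [div_le_div_iff₀ (hl m) hκ]
          nlinarith
  have hs1 : Summable fun m : ℤ => |(m : ℝ)| * ‖c m‖ := by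
    refine .of_nonneg_of_le (fun m => by positivity) (fun m => ?_) (hs0.add hs2)
    have : |(m : ℝ)| ≤ 1 + (m : ℝ) ^ 2 := by
      rw [abs_le]; constructor <;> nlinarith [sq_nonneg ((m : ℝ) - 1), sq_nonneg ((m : ℝ) + 1)]
    nlinarith [norm_nonneg (c m)]
  have hw0 : Summable fun m : ℤ => ‖(1 : ℂ)‖ * ‖c m‖ := by simpa using hs0
  have hw1 : Summable fun m : ℤ => ‖m * Complex.I * 1‖ * ‖c m‖ := by simpa using hs1
  have hw2 : Summable fun m : ℤ => ‖m * Complex.I * (m * Complex.I * 1)‖ * ‖c m‖ := by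
    refine hs2.congr fun m => ?_
    congr 1
    simp [← sq]
  have hexpper : ∀ (m : ℤ) (y : ℝ), Complex.exp (m * (y + 2 * π : ℝ) * Complex.I) =
      Complex.exp (m * y * Complex.I) := fun m y => by
    rw [← Complex.exp_periodic.int_mul m (m * y * Complex.I)]
    congr 1
    push_cast
    ring
  -- Here `c m` are the coefficients of `e^{-μ t} f`, and the weight `w` takes derivatives in `y`.
  let g : (ℤ → ℂ) → ℝ → ℝ → ℂ := fun w t y =>
    ∑' m : ℤ, w m * c m t.toNNReal * Complex.exp (m * y * Complex.I)
  have hgper : ∀ w t y, g w t (y + 2 * π) = g w t y := fun w t y =>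
    tsum_congr fun m => by rw [hexpper]
  have hE : Continuous fun p : ℝ × ℝ => (Real.exp (μ * p.1) : ℂ) :=
    Complex.continuous_ofReal.comp (by fun_prop)
  refine ⟨fun t y => Real.exp (μ * t) * g (fun _ => 1) t y,
    fun t y => Real.exp (μ * t) * g (fun m => m * Complex.I * 1) t y,
    fun t y => Real.exp (μ * t) * g (fun m => m * Complex.I * (m * Complex.I * 1)) t y,
    hE.mul (continuous_series _ _ hw0), hE.mul (continuous_series _ _ hw2), fun y => ?_,
    fun t y => congrArg _ (hgper _ t y), fun t y => congrArg _ (hgper _ t y),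
    fun t y => (hasDerivAt_series _ _ hw0 hw1 t y).const_mul _,
    fun t y => (hasDerivAt_series _ _ hw1 hw2 t y).const_mul _, fun t ht y => ?_⟩
  · have h0 : ∀ m, c m 0 = a m := fun m => by
      rw [hcb, BoundedContinuousFunction.add_apply, hD]
      simp [c₀, expDecay]
    simp only [mul_zero, Real.exp_zero, Complex.ofReal_one, one_mul, g, Real.toNNReal_zero, h0]
    rw [tsum_eq_sum (s := a.support)]
    · rfl
    · intro m hm
      simp [Finsupp.notMem_support_iff.mp hm]
  · have hct : ∀ (m : ℤ) (s : ℝ), 0 < s → HasDerivAt (fun s : ℝ => c m s.toNNReal)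
        (-((μ + κ * (m : ℝ) ^ 2 : ℝ) : ℂ) * c m s.toNNReal + b m s.toNNReal) s := by
      intro m s hs
      have hform : ∀ s : ℝ, 0 ≤ s → c m s.toNNReal = (Real.exp (-(μ + κ * (m : ℝ) ^ 2) * s) : ℂ) *
          (a m + ∫ r in (0:ℝ)..s,
            (Real.exp ((μ + κ * (m : ℝ) ^ 2) * r) : ℂ) * b m r.toNNReal) := by
        intro s hs
        rw [hcb, BoundedContinuousFunction.add_apply, hD]
        simp only [c₀, expDecay, BoundedContinuousFunction.coe_smul,
          BoundedContinuousFunction.coe_ofNormedAddCommGroup, Real.coe_toNNReal _ hs, smul_eq_mul]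
        ring
      have := hasDerivAt_duhamel (l := μ + κ * (m : ℝ) ^ 2) (a m) (b m) s
      rw [← hform s hs.le] at this
      refine this.congr_of_eventuallyEq ?_
      filter_upwards [lt_mem_nhds hs] with r hr using hform r hr.le
    have hcb' : ∀ (w : ℂ) (h : BoundedContinuousFunction NNReal ℂ) (m : ℤ) (s y : ℝ),
        ‖w * h s.toNNReal * Complex.exp (m * y * Complex.I)‖ ≤ ‖w‖ * ‖h‖ := by
      intro w h m s y
      rw [norm_mul, norm_mul, norm_exp_int, mul_one]
      gcongr
      exact h.norm_coe_le_norm _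
    have hdt : HasDerivAt (fun s : ℝ => g (fun _ => 1) s y)
        (∑' m : ℤ, (-((μ + κ * (m : ℝ) ^ 2 : ℝ) : ℂ) * c m t.toNNReal + b m t.toNNReal) *
          Complex.exp (m * y * Complex.I)) t := by
      refine hasDerivAt_tsum_of_isPreconnected (t := Ioi 0) (y₀ := t)
        (g := fun (m : ℤ) (s : ℝ) => 1 * c m s.toNNReal * Complex.exp (m * y * Complex.I))
        (g' := fun (m : ℤ) (s : ℝ) => (-((μ + κ * (m : ℝ) ^ 2 : ℝ) : ℂ) * c m s.toNNReal +
          b m s.toNNReal) * Complex.exp (m * y * Complex.I))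
        (((hs0.mul_left μ).add (hs2.mul_left κ)).add hbs) isOpen_Ioi isPreconnected_Ioi
        (fun m s hs => ?_) (fun m s hs => ?_) ht ?_ ht
      · simpa using (hct m s hs).mul_const (Complex.exp (m * y * Complex.I))
      · rw [add_mul]
        refine (norm_add_le _ _).trans (add_le_add ((hcb' _ _ _ _ _).trans (le_of_eq ?_)) ?_)
        · rw [norm_neg, Complex.norm_real, Real.norm_eq_abs, abs_of_pos (hl m)]
          ring
        · simpa using hcb' 1 (b m) m s y
      · exact .of_norm_bounded hw0 fun m => hcb' _ _ _ _ _
    have hbsum : ∑' m : ℤ, b m t.toNNReal * Complex.exp (m * y * Complex.I) =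
        V y * g (fun _ => 1) t y := by
      have hsm : ∀ d : lp (fun _ : ℤ => BoundedContinuousFunction NNReal ℂ) 1,
          Summable fun m : ℤ => Complex.exp (m * y * Complex.I) • d m := fun d =>
        .of_norm (by simpa only [norm_smul, norm_exp_int, one_mul] using l1_summable d)
      have := congrArg (BoundedContinuousFunction.evalCLM ℂ t.toNNReal) (hbV y)
      rw [map_smul, (BoundedContinuousFunction.evalCLM ℂ t.toNNReal).map_tsum (hsm b),
        (BoundedContinuousFunction.evalCLM ℂ t.toNNReal).map_tsum (hsm c)] at this
      simp only [map_smul, BoundedContinuousFunction.evalCLM_apply, smul_eq_mul] at this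
      simpa [g, mul_comm] using this
    have hsplit : ∑' m : ℤ, (-((μ + κ * (m : ℝ) ^ 2 : ℝ) : ℂ) * c m t.toNNReal + b m t.toNNReal) *
          Complex.exp (m * y * Complex.I) = -μ * g (fun _ => 1) t y +
          κ * g (fun m => m * Complex.I * (m * Complex.I * 1)) t y + V y * g (fun _ => 1) t y := by
      rw [← hbsum]
      simp only [g]
      rw [← tsum_mul_left, ← tsum_mul_left, ← Summable.tsum_add, ← Summable.tsum_add]
      · refine tsum_congr fun m => ?_
        push_cast
        linear_combination (-κ * (m : ℂ) ^ 2 * c m t.toNNReal * Complex.exp (m * y * Complex.I)) *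
          Complex.I_sq
      · exact (Summable.of_norm_bounded hw0 fun m => hcb' _ _ _ _ _).mul_left _ |>.add
          ((Summable.of_norm_bounded hw2 fun m => hcb' _ _ _ _ _).mul_left _)
      · exact .of_norm_bounded hbs fun m => by simpa using hcb' 1 (b m) m t y
      · exact (Summable.of_norm_bounded hw0 fun m => hcb' _ _ _ _ _).mul_left _
      · exact (Summable.of_norm_bounded hw2 fun m => hcb' _ _ _ _ _).mul_left _
    rw [hsplit] at hdt
    have hexp : HasDerivAt (fun t : ℝ => (Real.exp (μ * t) : ℂ))
        ((Real.exp (μ * t) * μ : ℝ) : ℂ) t :=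
      ((((hasDerivAt_id t).const_mul μ).exp).congr_deriv (by simp)).ofReal_comp
    refine (hexp.mul hdt).congr_deriv ?_
    push_cast
    ring

/-! ### Flatness of the shear at the critical point -/

theorem shear_taylor_bound {n : ℕ} (hn : 1 ≤ n) {u : ℝ → ℝ} (hu : ContDiff ℝ (n + 1 : ℕ) u)
    {yc : ℝ} (hcrit : ∀ j : ℕ, 1 ≤ j → j ≤ n - 1 → iteratedDeriv j u yc = 0) :
    ∃ A : ℝ, 0 ≤ A ∧ ∀ y, |y - yc| ≤ π → |u y - u yc| ≤ A * |y - yc| ^ n := by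
  obtain ⟨k, rfl⟩ : ∃ k, n = k + 1 := ⟨n - 1, by omega⟩
  have hcont : Continuous (iteratedDeriv (k + 1) u) :=
    hu.continuous_iteratedDeriv _ (by exact_mod_cast Nat.le_succ _)
  obtain ⟨B, hB⟩ := (isCompact_Icc (a := yc - π) (b := yc + π)).exists_bound_of_continuousOn
    hcont.continuousOn
  refine ⟨max B 0 / (k + 1).factorial, by positivity, fun y hy => ?_⟩
  rcases eq_or_ne yc y with rfl | hne
  · simp
  have hk : ContDiff ℝ (k + 1) u := hu.of_le (by exact_mod_cast Nat.le_succ _)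
  obtain ⟨z, hz, h⟩ := taylor_mean_remainder_lagrange_iteratedDeriv (n := k) hne hk.contDiffOn
  have hT : taylorWithinEval u k (uIcc yc y) yc y = u yc := by
    rw [taylor_within_apply, Finset.sum_range_succ', Finset.sum_eq_zero]
    · simp
    · intro j hj
      have hj' : j < k := Finset.mem_range.mp hj
      rw [iteratedDerivWithin_eq_iteratedDeriv (uniqueDiffOn_uIcc hne)
        (hk.of_le (by exact_mod_cast (by omega : j + 1 ≤ k + 1))).contDiffAt left_mem_uIcc,
        hcrit (j + 1) (by omega) (by omega), smul_zero]
  have hz' : z ∈ Icc (yc - π) (yc + π) := by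
    have h1 := abs_sub_left_of_mem_uIcc (uIoo_subset_uIcc_self hz)
    have h2 := abs_le.mp (h1.trans hy)
    constructor <;> linarith [h2.1, h2.2]
  rw [hT] at h
  rw [h, abs_div, abs_mul, abs_pow, Nat.abs_cast, div_mul_eq_mul_div]
  gcongr
  exact (hB z hz').trans (le_max_left _ _)

/-- The Taylor bound `|u - u(yc)| ≲ |y - yc|ⁿ` in periodic form: `(1 - cos (y - yc)) / 2` equals
`sin² ((y - yc) / 2)` and is comparable to the squared distance from `yc` modulo `2π`. -/
theorem shear_global_bound {n : ℕ} (hn : 1 ≤ n) {u : ℝ → ℝ} (hu : ContDiff ℝ (n + 1 : ℕ) u)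
    (hper : ∀ y, u (y + 2 * π) = u y)
    {yc : ℝ} (hcrit : ∀ j : ℕ, 1 ≤ j → j ≤ n - 1 → iteratedDeriv j u yc = 0) :
    ∃ A : ℝ, 0 ≤ A ∧ ∀ y, (u y - u yc) ^ 2 ≤ A * ((1 - cos (y - yc)) / 2) ^ n := by
  obtain ⟨A, hA, h⟩ := shear_taylor_bound hn hu hcrit
  refine ⟨(A * π ^ n) ^ 2, by positivity, fun y => ?_⟩
  have hpi := pi_pos
  have hP : Function.Periodic u (2 * π) := hper
  set k : ℤ := round ((y - yc) / (2 * π))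
  set y' := y - k * (2 * π) with hy'
  have hu' : u y = u y' := (hP.sub_int_mul_eq k).symm
  have hc' : cos (y - yc) = cos (y' - yc) := by
    rw [hy', sub_right_comm, Real.cos_sub_int_mul_two_pi]
  have hle : |y' - yc| ≤ π := by
    have h1 := abs_sub_round ((y - yc) / (2 * π))
    have h2 : y' - yc = ((y - yc) / (2 * π) - k) * (2 * π) := by rw [hy']; field_simp; ring
    rw [h2, abs_mul, abs_of_pos two_pi_pos]
    nlinarith
  have hj : |y' - yc| ≤ π * |sin ((y' - yc) / 2)| := by
    have h1 : |(y' - yc) / 2| ≤ π / 2 := by rw [abs_div, abs_two]; linarith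
    have h2 := mul_abs_le_abs_sin h1
    rw [abs_div, abs_two] at h2
    calc |y' - yc| = π * (2 / π * (|y' - yc| / 2)) := by field_simp
      _ ≤ _ := by gcongr
  have hs : (1 - cos (y' - yc)) / 2 = |sin ((y' - yc) / 2)| ^ 2 := by
    rw [sq_abs, Real.sin_sq_eq_half_sub]
    rw [show 2 * ((y' - yc) / 2) = y' - yc by ring]
    ring
  rw [hu', hc', hs, ← sq_abs, ← pow_mul, mul_comm 2 n, pow_mul, ← mul_pow]
  gcongr
  calc |u y' - u yc| ≤ A * |y' - yc| ^ n := h y' hle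
    _ ≤ A * (π * |sin ((y' - yc) / 2)|) ^ n := by gcongr
    _ = _ := by rw [mul_pow]; ring

/-! ### Trigonometric moments and the concentrated profile -/

/-- The integral over a period of `sin^{2k}(z / 2) cos^{2M}(z / 2)`, `z = y - yc`, written through
`(1 ∓ cos z) / 2`. For large `M` the weight `cos^{2M}(z / 2)` concentrates at `yc`. -/
def trigMoment (yc : ℝ) (k M : ℕ) : ℝ :=
  ∫ y in (0:ℝ)..(2 * π), ((1 - cos (y - yc)) / 2) ^ k * ((1 + cos (y - yc)) / 2) ^ M

theorem trigMoment_integrable (yc : ℝ) (k M : ℕ) : IntervalIntegrable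
    (fun y => ((1 - cos (y - yc)) / 2) ^ k * ((1 + cos (y - yc)) / 2) ^ M) volume 0 (2 * π) :=
  Continuous.intervalIntegrable (by fun_prop) _ _

/-- Integrating the derivative of `sin z · sin^{2k}(z / 2) cos^{2M}(z / 2)` over a period gives the
recursion of the moments. -/
theorem trigMoment_succ (yc : ℝ) (k M : ℕ) :
    (2 * M + 1) * trigMoment yc (k + 1) M = (2 * k + 1) * trigMoment yc k (M + 1) := by
  have hd : ∀ y : ℝ, HasDerivAt
      (fun y => sin (y - yc) * (((1 - cos (y - yc)) / 2) ^ k * ((1 + cos (y - yc)) / 2) ^ M))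
      ((2 * k + 1) * (((1 - cos (y - yc)) / 2) ^ k * ((1 + cos (y - yc)) / 2) ^ (M + 1)) -
        (2 * M + 1) * (((1 - cos (y - yc)) / 2) ^ (k + 1) * ((1 + cos (y - yc)) / 2) ^ M)) y := by
    intro y
    have h0 : HasDerivAt (fun y => y - yc) 1 y := (hasDerivAt_id y).sub_const yc
    have hs := h0.sin
    have hc := h0.cos
    have hq : HasDerivAt (fun y => (1 - cos (y - yc)) / 2) (sin (y - yc) / 2) y :=
      ((hc.const_sub 1).div_const 2).congr_deriv (by ring)
    have hp : HasDerivAt (fun y => (1 + cos (y - yc)) / 2) (-sin (y - yc) / 2) y :=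
      ((hc.const_add 1).div_const 2).congr_deriv (by ring)
    refine (hs.mul ((hq.pow k).mul (hp.pow M))).congr_deriv ?_
    have h1 : sin (y - yc) ^ 2 = 1 - cos (y - yc) ^ 2 := by
      linear_combination sin_sq_add_cos_sq (y - yc)
    simp only [Pi.pow_apply, Pi.mul_apply]
    generalize sin (y - yc) = s at *
    generalize cos (y - yc) = c at *
    rcases k with _ | k <;> rcases M with _ | M <;>
      simp only [Nat.cast_zero, Nat.cast_succ, Nat.add_sub_cancel, pow_succ, pow_zero] <;>
      ring_nf <;> simp only [h1] <;> ring
  have hintg : ∫ y in (0:ℝ)..(2 * π),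
      ((2 * k + 1) * (((1 - cos (y - yc)) / 2) ^ k * ((1 + cos (y - yc)) / 2) ^ (M + 1)) -
        (2 * M + 1) * (((1 - cos (y - yc)) / 2) ^ (k + 1) * ((1 + cos (y - yc)) / 2) ^ M)) = 0 := by
    rw [intervalIntegral.integral_eq_sub_of_hasDerivAt (fun y _ => hd y)
      (Continuous.intervalIntegrable (by fun_prop) _ _)]
    have e : 2 * π - yc = 0 - yc + 2 * π := by ring
    rw [e, Real.sin_add_two_pi, Real.cos_add_two_pi, sub_self]
  rw [intervalIntegral.integral_sub ((trigMoment_integrable _ _ _).const_mul _)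
    ((trigMoment_integrable _ _ _).const_mul _), intervalIntegral.integral_const_mul,
    intervalIntegral.integral_const_mul] at hintg
  simp only [trigMoment]
  linarith

theorem trigMoment_nonneg (yc : ℝ) (k M : ℕ) : 0 ≤ trigMoment yc k M := by
  refine intervalIntegral.integral_nonneg two_pi_pos.le fun y _ => ?_
  have h1 := Real.cos_le_one (y - yc)
  have h2 := Real.neg_one_le_cos (y - yc)
  have : 0 ≤ (1 - cos (y - yc)) / 2 := by linarith
  have : 0 ≤ (1 + cos (y - yc)) / 2 := by linarith
  positivity

theorem trigMoment_pos (yc : ℝ) (M : ℕ) : 0 < trigMoment yc 0 M := by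
  induction M with
  | zero => simpa [trigMoment] using pi_pos
  | succ M ih =>
    have h1 := trigMoment_succ yc 0 M
    have h2 : trigMoment yc 0 M = trigMoment yc 1 M + trigMoment yc 0 (M + 1) := by
      simp only [trigMoment]
      rw [← intervalIntegral.integral_add (trigMoment_integrable _ _ _)
        (trigMoment_integrable _ _ _)]
      refine intervalIntegral.integral_congr fun y _ => ?_
      simp only [pow_zero, pow_succ]
      ring
    have h3 := trigMoment_nonneg yc 0 (M + 1)
    have h4 := trigMoment_nonneg yc 1 M
    rcases h3.lt_or_eq with h | h
    · exact h
    · rw [← h] at h1 h2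
      have : (0 : ℝ) < 2 * M + 1 := by positivity
      simp only [mul_zero, zero_add] at h1
      have := (mul_eq_zero.mp h1).resolve_left this.ne'
      linarith

theorem trigMoment_anti (yc : ℝ) (k M : ℕ) : trigMoment yc k (M + 1) ≤ trigMoment yc k M := by
  refine intervalIntegral.integral_mono_on two_pi_pos.le (trigMoment_integrable _ _ _)
    (trigMoment_integrable _ _ _) fun y _ => ?_
  have h1 := Real.cos_le_one (y - yc)
  have h2 := Real.neg_one_le_cos (y - yc)
  have h3 : 0 ≤ (1 - cos (y - yc)) / 2 := by linarith
  have h4 : 0 ≤ (1 + cos (y - yc)) / 2 := by linarith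
  gcongr ?_ * ?_
  exact pow_le_pow_of_le_one h4 (by linarith) (Nat.le_succ M)

/-- Each power of `sin²(z / 2)` costs a factor of order `1 / M` relative to the total mass of the
weight. -/
theorem exists_trigMoment_bound (n : ℕ) : ∃ B : ℝ, 0 ≤ B ∧ ∀ (yc : ℝ) (M : ℕ),
    (M : ℝ) ^ n * trigMoment yc n M ≤ B * trigMoment yc 0 M := by
  induction n with
  | zero => exact ⟨1, zero_le_one, fun yc M => by simp⟩
  | succ n ih =>
    obtain ⟨B, hB, h⟩ := ih
    refine ⟨(2 * n + 1) * B, by positivity, fun yc M => ?_⟩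
    have h1 := trigMoment_succ yc n M
    have h2 := trigMoment_anti yc n M
    have h3 := trigMoment_nonneg yc (n + 1) M
    calc (M : ℝ) ^ (n + 1) * trigMoment yc (n + 1) M
        = (M : ℝ) ^ n * (M * trigMoment yc (n + 1) M) := by ring
      _ ≤ (M : ℝ) ^ n * ((2 * n + 1) * trigMoment yc n M) := by
          refine mul_le_mul_of_nonneg_left ?_ (by positivity)
          nlinarith [mul_nonneg (Nat.cast_nonneg (α := ℝ) M) h3,
            mul_nonneg (Nat.cast_nonneg (α := ℝ) n) (sub_nonneg.mpr h2)]
      _ = (2 * n + 1) * ((M : ℝ) ^ n * trigMoment yc n M) := by ring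
      _ ≤ (2 * n + 1) * (B * trigMoment yc 0 M) := 
          mul_le_mul_of_nonneg_left (h yc M) (by positivity)
      _ = _ := by ring

/-- The profile `((1 + cos (y - yc)) / 2)^{K+1}`, concentrated around `yc` at scale `(K+1)^{-1/2}`.
The exponent is `K + 1` so that the closed forms of the derivatives need no subtraction in `ℕ`. -/
def bump (yc : ℝ) (K : ℕ) (y : ℝ) : ℝ := ((1 + cos (y - yc)) / 2) ^ (K + 1)

/-- The first derivative of `bump`, see `hasDerivAt_bump`. -/
def bumpDeriv (yc : ℝ) (K : ℕ) (y : ℝ) : ℝ :=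
  -((K + 1) / 2) * (sin (y - yc) * ((1 + cos (y - yc)) / 2) ^ K)

/-- The second derivative of `bump`, see `hasDerivAt_bumpDeriv`. -/
def bumpDeriv2 (yc : ℝ) (K : ℕ) (y : ℝ) : ℝ :=
  (K + 1) / 2 * ((2 * K + 1) * ((1 - cos (y - yc)) / 2 * ((1 + cos (y - yc)) / 2) ^ K) -
    ((1 + cos (y - yc)) / 2) ^ (K + 1))

theorem hasDerivAt_bump (yc : ℝ) (K : ℕ) (y : ℝ) :
    HasDerivAt (bump yc K) (bumpDeriv yc K y) y := by
  have h0 : HasDerivAt (fun y => y - yc) 1 y := (hasDerivAt_id y).sub_const yc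
  refine (((h0.cos.const_add 1).div_const 2).pow (K + 1)).congr_deriv ?_
  simp [bumpDeriv]
  ring

theorem hasDerivAt_bumpDeriv (yc : ℝ) (K : ℕ) (y : ℝ) :
    HasDerivAt (bumpDeriv yc K) (bumpDeriv2 yc K y) y := by
  have h0 : HasDerivAt (fun y => y - yc) 1 y := (hasDerivAt_id y).sub_const yc
  refine ((h0.sin.mul (((h0.cos.const_add 1).div_const 2).pow K)).const_mul
    (-((K + 1) / 2 : ℝ))).congr_deriv ?_
  have h1 : sin (y - yc) ^ 2 = 1 - cos (y - yc) ^ 2 := by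
    linear_combination sin_sq_add_cos_sq (y - yc)
  simp only [Pi.pow_apply, bumpDeriv2]
  generalize sin (y - yc) = s at *
  generalize cos (y - yc) = c at *
  rcases K with _ | K <;>
    simp only [Nat.cast_zero, Nat.cast_succ, Nat.add_sub_cancel, pow_succ, pow_zero] <;>
    ring_nf <;> simp only [h1] <;> ring

theorem integral_bump_sq (yc : ℝ) (K : ℕ) :
    ∫ y in (0:ℝ)..(2 * π), bump yc K y ^ 2 = trigMoment yc 0 (2 * (K + 1)) := by
  simp only [trigMoment, bump, pow_zero, one_mul, ← pow_mul, mul_comm]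

theorem integral_bumpDeriv2_sq (yc : ℝ) (K : ℕ) :
    ∫ y in (0:ℝ)..(2 * π), bumpDeriv2 yc K y ^ 2 ≤
      7 * (K + 1) ^ 2 * trigMoment yc 0 (2 * (K + 1)) := by
  have h1 := trigMoment_succ yc 1 (2 * K)
  have h2 := trigMoment_succ yc 0 (2 * K + 1)
  have h3 := trigMoment_nonneg yc 0 (2 * (K + 1))
  have hle : ∫ y in (0:ℝ)..(2 * π), bumpDeriv2 yc K y ^ 2 ≤ ∫ y in (0:ℝ)..(2 * π),
      ((K + 1) ^ 2 / 2 * (2 * K + 1) ^ 2 *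
        (((1 - cos (y - yc)) / 2) ^ 2 * ((1 + cos (y - yc)) / 2) ^ (2 * K)) +
      (K + 1) ^ 2 / 2 *
        (((1 - cos (y - yc)) / 2) ^ 0 * ((1 + cos (y - yc)) / 2) ^ (2 * (K + 1)))) := by
    refine intervalIntegral.integral_mono_on two_pi_pos.le
      (Continuous.intervalIntegrable (by unfold bumpDeriv2; fun_prop) _ _)
      (Continuous.intervalIntegrable (by fun_prop) _ _) fun y _ => ?_
    simp only [bumpDeriv2]
    generalize (1 - cos (y - yc)) / 2 = q
    generalize (1 + cos (y - yc)) / 2 = p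
    have : 0 ≤ ((K + 1) / 2 * ((2 * K + 1) * (q * p ^ K) + p ^ (K + 1))) ^ 2 := sq_nonneg _
    have e1 : p ^ (2 * K) = (p ^ K) ^ 2 := by rw [mul_comm, pow_mul]
    have e2 : p ^ (2 * (K + 1)) = (p ^ (K + 1)) ^ 2 := by rw [mul_comm, pow_mul]
    rw [e1, e2]
    linarith
  refine hle.trans ?_
  rw [intervalIntegral.integral_add ((trigMoment_integrable _ _ _).const_mul _)
    ((trigMoment_integrable _ _ _).const_mul _), intervalIntegral.integral_const_mul,
    intervalIntegral.integral_const_mul]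
  change _ * trigMoment yc 2 (2 * K) + _ * trigMoment yc 0 (2 * (K + 1)) ≤ _
  push_cast at h1 h2
  change _ = _ * trigMoment yc 0 (2 * (K + 1)) at h2
  have hK : (0 : ℝ) ≤ K := Nat.cast_nonneg K
  have h4 : (4 * K + 1) * (4 * K + 3) * trigMoment yc 2 (2 * K) =
      3 * trigMoment yc 0 (2 * (K + 1)) := by
    change _ * trigMoment yc 2 (2 * K) = _ * trigMoment yc 1 (2 * K + 1) at h1
    change _ * trigMoment yc 1 (2 * K + 1) = _ at h2
    linear_combination (4 * K + 3) * h1 + 3 * h2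
  have h5 := trigMoment_nonneg yc 2 (2 * K)
  have h6 : (2 * K + 1) ^ 2 * trigMoment yc 2 (2 * K) ≤ 3 * trigMoment yc 0 (2 * (K + 1)) := by
    rw [← h4]
    gcongr
    nlinarith
  nlinarith [mul_le_mul_of_nonneg_left h6 (sq_nonneg ((K : ℝ) + 1)),
    mul_nonneg (sq_nonneg ((K : ℝ) + 1)) h3]

/-- Powers of `(1 + cos (y - yc)) / 2` are trigonometric polynomials. -/
theorem exists_bump_coeff (yc : ℝ) (N : ℕ) : ∃ a : ℤ →₀ ℂ, ∀ y : ℝ,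
    (((1 + cos (y - yc)) / 2 : ℝ) : ℂ) ^ N =
      a.sum fun m z => z * Complex.exp (m * y * Complex.I) := by
  induction N with
  | zero => exact ⟨Finsupp.single 0 1, fun y => by simp⟩
  | succ N ih =>
    obtain ⟨a, ha⟩ := ih
    let sh : ℤ → ℂ → ℤ →₀ ℂ := fun j w => (w • a).mapDomain (· + j)
    have hsh : ∀ (j : ℤ) (w : ℂ) (y : ℝ),
        ((sh j w).sum fun m z => z * Complex.exp (m * y * Complex.I)) =
          w * Complex.exp (j * y * Complex.I) *
            a.sum fun m z => z * Complex.exp (m * y * Complex.I) := by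
      intro j w y
      simp only [sh]
      rw [Finsupp.sum_mapDomain_index (by simp) (by intros; ring),
        Finsupp.sum_smul_index (by simp), Finsupp.mul_sum]
      refine Finsupp.sum_congr fun m _ => ?_
      have : Complex.exp (((m + j : ℤ) : ℂ) * y * Complex.I) =
          Complex.exp (m * y * Complex.I) * Complex.exp (j * y * Complex.I) := by
        rw [← Complex.exp_add]; congr 1; push_cast; ring
      rw [this]
      ring
    refine ⟨sh 0 (1 / 2) + sh 1 (Complex.exp (-(yc * Complex.I)) / 4) +
      sh (-1) (Complex.exp (yc * Complex.I) / 4), fun y => ?_⟩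
    rw [Finsupp.sum_add_index' (by simp) (by intros; ring),
      Finsupp.sum_add_index' (by simp) (by intros; ring), hsh, hsh, hsh, pow_succ, ha]
    have e1 : Complex.exp ((y - yc : ℂ) * Complex.I) =
        Complex.exp (-(yc * Complex.I)) * Complex.exp (y * Complex.I) := by
      rw [← Complex.exp_add]; congr 1; ring
    have e2 : Complex.exp (-(y - yc : ℂ) * Complex.I) =
        Complex.exp (yc * Complex.I) * Complex.exp (-(y * Complex.I)) := by
      rw [← Complex.exp_add]; congr 1; ring
    push_cast
    rw [Complex.cos, e1, e2]
    simp only [zero_mul, Complex.exp_zero, one_mul, neg_mul]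
    ring

/-! ### Solutions carried by the first Fourier mode in `x` -/

theorem integral_re_exp_sq {F : ℝ → ℂ} (hF : Continuous F) :
    ∫ x in (0:ℝ)..(2 * π), ∫ y in (0:ℝ)..(2 * π),
      (Complex.exp (x * Complex.I) * F y).re ^ 2 = π * ∫ y in (0:ℝ)..(2 * π), ‖F y‖ ^ 2 := by
  have hre : Continuous fun y => (F y).re := Complex.continuous_re.comp hF
  have him : Continuous fun y => (F y).im := Complex.continuous_im.comp hF
  set P := ∫ y in (0:ℝ)..(2 * π), (F y).re ^ 2 with hP
  set Q := ∫ y in (0:ℝ)..(2 * π), (F y).im ^ 2 with hQ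
  set S := ∫ y in (0:ℝ)..(2 * π), (F y).re * (F y).im with hS
  have h1 : ∀ x : ℝ, ∫ y in (0:ℝ)..(2 * π), (Complex.exp (x * Complex.I) * F y).re ^ 2 =
      P * cos x ^ 2 + Q * sin x ^ 2 - 2 * S * (sin x * cos x) := by
    intro x
    have : ∀ y, (Complex.exp (x * Complex.I) * F y).re ^ 2 =
        cos x ^ 2 * (F y).re ^ 2 + sin x ^ 2 * (F y).im ^ 2 -
          2 * (sin x * cos x) * ((F y).re * (F y).im) := by
      intro y
      rw [Complex.mul_re, Complex.exp_ofReal_mul_I_re, Complex.exp_ofReal_mul_I_im]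
      ring
    simp only [this]
    rw [intervalIntegral.integral_sub, intervalIntegral.integral_add,
      intervalIntegral.integral_const_mul, intervalIntegral.integral_const_mul,
      intervalIntegral.integral_const_mul]
    · ring
    all_goals exact Continuous.intervalIntegrable (by fun_prop) _ _
  simp only [h1]
  have h2 : ∫ y in (0:ℝ)..(2 * π), ‖F y‖ ^ 2 = P + Q := by
    rw [hP, hQ, ← intervalIntegral.integral_add]
    · refine intervalIntegral.integral_congr fun y _ => ?_
      simp only [Complex.sq_norm, Complex.normSq_apply]
      ring
    all_goals exact Continuous.intervalIntegrable (by fun_prop) _ _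
  rw [h2, intervalIntegral.integral_sub, intervalIntegral.integral_add,
    intervalIntegral.integral_const_mul, intervalIntegral.integral_const_mul,
    intervalIntegral.integral_const_mul, integral_cos_sq, integral_sin_sq, integral_sin_mul_cos₁]
  · simp
    ring
  all_goals exact Continuous.intervalIntegrable (by fun_prop) _ _

theorem integral_re_exp_eq_zero (z : ℂ) :
    ∫ x in (0:ℝ)..(2 * π), (Complex.exp (x * Complex.I) * z).re = 0 := by
  simp only [Complex.mul_re, Complex.exp_ofReal_mul_I_re, Complex.exp_ofReal_mul_I_im]
  rw [intervalIntegral.integral_sub (Continuous.intervalIntegrable (by fun_prop) _ _)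
    (Continuous.intervalIntegrable (by fun_prop) _ _), intervalIntegral.integral_mul_const,
    intervalIntegral.integral_mul_const]
  simp

/-- Two integrations by parts over a period; the boundary terms cancel. -/
theorem integral_mul_deriv2_periodic {φ φ' φ'' : ℝ → ℝ} {g g' g'' : ℝ → ℂ}
    (hφ : ∀ y, HasDerivAt φ (φ' y) y) (hφ' : ∀ y, HasDerivAt φ' (φ'' y) y)
    (hg : ∀ y, HasDerivAt g (g' y) y) (hg' : ∀ y, HasDerivAt g' (g'' y) y)
    (hφc : Continuous φ'') (hgc : Continuous g'')
    (p1 : φ (2 * π) = φ 0) (p2 : φ' (2 * π) = φ' 0) (p3 : g (2 * π) = g 0)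
    (p4 : g' (2 * π) = g' 0) :
    ∫ y in (0:ℝ)..(2 * π), (φ y : ℂ) * g'' y = ∫ y in (0:ℝ)..(2 * π), (φ'' y : ℂ) * g y := by
  have cφ : Continuous φ := continuous_iff_continuousAt.mpr fun y => (hφ y).continuousAt
  have cg : Continuous g := continuous_iff_continuousAt.mpr fun y => (hg y).continuousAt
  have hd : ∀ y : ℝ, HasDerivAt (fun y => (φ y : ℂ) * g' y - (φ' y : ℂ) * g y)
      ((φ y : ℂ) * g'' y - (φ'' y : ℂ) * g y) y := by
    intro y
    refine (((hφ y).ofReal_comp.mul (hg' y)).sub ((hφ' y).ofReal_comp.mul (hg y))).congr_deriv ?_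
    ring
  have i1 : IntervalIntegrable (fun y => (φ y : ℂ) * g'' y) volume 0 (2 * π) :=
    Continuous.intervalIntegrable (by fun_prop) _ _
  have i2 : IntervalIntegrable (fun y => (φ'' y : ℂ) * g y) volume 0 (2 * π) :=
    Continuous.intervalIntegrable (by fun_prop) _ _
  have h := intervalIntegral.integral_eq_sub_of_hasDerivAt (a := 0) (b := 2 * π)
    (fun y _ => hd y) (i1.sub i2)
  rw [intervalIntegral.integral_sub i1 i2, p1, p2, p3, p4, sub_self, sub_eq_zero] at h
  exact h

/-- The time-integrated form of `d/dt ∫ φ f = ∫ (κ ∂ᵧᵧφ + V φ) f` for a solution `f` of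
`∂ₜf = κ ∂ᵧᵧf + V f`; the pairing is bilinear, without complex conjugation. -/
theorem pairing_identity {κ T : ℝ} (hT : 0 ≤ T) {V : ℝ → ℂ} (hV : Continuous V)
    {f fy fyy : ℝ → ℝ → ℂ}
    (hf : Continuous (fun p : ℝ × ℝ => f p.1 p.2))
    (hfyy : Continuous (fun p : ℝ × ℝ => fyy p.1 p.2))
    (hp : ∀ t y, f t (y + 2 * π) = f t y) (hpy : ∀ t y, fy t (y + 2 * π) = fy t y)
    (hd : ∀ t y, HasDerivAt (f t) (fy t y) y) (hd2 : ∀ t y, HasDerivAt (fy t) (fyy t y) y)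
    (ht : ∀ t, 0 < t → ∀ y, HasDerivAt (fun s => f s y) (κ * fyy t y + V y * f t y) t)
    {φ φ' φ'' : ℝ → ℝ} (hφ : ∀ y, HasDerivAt φ (φ' y) y) (hφ' : ∀ y, HasDerivAt φ' (φ'' y) y)
    (hφc : Continuous φ'') (p1 : φ (2 * π) = φ 0) (p2 : φ' (2 * π) = φ' 0) :
    (∫ y in (0:ℝ)..(2 * π), (φ y : ℂ) * f T y) - ∫ y in (0:ℝ)..(2 * π), (φ y : ℂ) * f 0 y =
      ∫ t in (0:ℝ)..T, ∫ y in (0:ℝ)..(2 * π), (κ * φ'' y + V y * φ y) * f t y := by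
  have cφ : Continuous φ := continuous_iff_continuousAt.mpr fun y => (hφ y).continuousAt
  have cf : ∀ t, Continuous (f t) := fun t => hf.comp (by fun_prop : Continuous fun y => (t, y))
  have cfyy : ∀ t, Continuous (fyy t) :=
    fun t => hfyy.comp (by fun_prop : Continuous fun y => (t, y))
  have cf' : ∀ y, Continuous (fun t => f t y) :=
    fun y => hf.comp (by fun_prop : Continuous fun t => (t, y))
  have cfyy' : ∀ y, Continuous (fun t => fyy t y) :=
    fun y => hfyy.comp (by fun_prop : Continuous fun t => (t, y))
  have h1 : ∀ y, f T y - f 0 y = ∫ t in (0:ℝ)..T, (κ * fyy t y + V y * f t y) := by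
    intro y
    refine (intervalIntegral.integral_eq_sub_of_hasDerivAt_of_le hT (cf' y).continuousOn
      (fun t h => ht t h.1 y) (Continuous.intervalIntegrable ?_ _ _)).symm
    have := cf' y
    have := cfyy' y
    fun_prop
  rw [← intervalIntegral.integral_sub
    (Continuous.intervalIntegrable (by have := cf T; fun_prop) _ _)
    (Continuous.intervalIntegrable (by have := cf 0; fun_prop) _ _)]
  have h2 : ∀ y, (φ y : ℂ) * f T y - φ y * f 0 y =
      ∫ t in (0:ℝ)..T, (φ y : ℂ) * (κ * fyy t y + V y * f t y) := by
    intro y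
    rw [intervalIntegral.integral_const_mul, ← h1]
    ring
  simp only [h2]
  rw [intervalIntegral_intervalIntegral_swap]
  · refine intervalIntegral.integral_congr fun t _ => ?_
    have hib := integral_mul_deriv2_periodic hφ hφ' (hd t) (hd2 t) hφc (cfyy t) p1 p2
      (by simpa using hp t 0) (by simpa using hpy t 0)
    have c1 := cf t
    have c2 := cfyy t
    have e1 : ∀ y, (φ y : ℂ) * (κ * fyy t y + V y * f t y) =
        κ * (φ y * fyy t y) + V y * φ y * f t y := fun y => by ring
    have e2 : ∀ y, (κ * φ'' y + V y * φ y) * f t y =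
        κ * (φ'' y * f t y) + V y * φ y * f t y := fun y => by ring
    simp only [e1, e2]
    rw [intervalIntegral.integral_add, intervalIntegral.integral_add,
      intervalIntegral.integral_const_mul, intervalIntegral.integral_const_mul, hib]
    all_goals exact Continuous.intervalIntegrable (by fun_prop) _ _
  · refine (ContinuousOn.integrableOn_compact (isCompact_uIcc.prod isCompact_uIcc)
      (Continuous.continuousOn ?_)).mono_set (Set.prod_mono uIoc_subset_uIcc uIoc_subset_uIcc)
    have g1 : Continuous fun p : ℝ × ℝ => f p.2 p.1 := hf.comp continuous_swap
    have g2 : Continuous fun p : ℝ × ℝ => fyy p.2 p.1 := hfyy.comp continuous_swap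
    simp only [Function.uncurry_def]
    fun_prop

theorem hasDerivAt_re {g : ℝ → ℂ} {g' : ℂ} {x : ℝ} (h : HasDerivAt g g' x) :
    HasDerivAt (fun s => (g s).re) g'.re x :=
  Complex.reCLM.hasFDerivAt.comp_hasDerivAt x h

theorem hasDerivAt_exp_affine (a b s : ℝ) :
    HasDerivAt (fun s : ℝ => Complex.exp (((a + b * s : ℝ) : ℂ) * Complex.I))
      (b * Complex.I * Complex.exp (((a + b * s : ℝ) : ℂ) * Complex.I)) s := by
  have h0 : HasDerivAt (fun s : ℝ => a + b * s) b s := by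
    simpa using ((hasDerivAt_id s).const_mul b).const_add a
  refine (h0.ofReal_comp.mul_const Complex.I).cexp.congr_deriv ?_
  ring

/-- The real function `Re (e^{i (x - v t)} f(t, y))`, the first Fourier mode in `x` with profile `f`
in the frame moving with speed `v`. -/
def modeSolution (v : ℝ) (f : ℝ → ℝ → ℂ) (t x y : ℝ) : ℝ :=
  (Complex.exp (((x - v * t : ℝ) : ℂ) * Complex.I) * f t y).re

/-- A solution of `∂ₜf = κ ∂ᵧᵧf - (i (u - v) + κ δ) f` gives a solution of the shear
advection–diffusion equation. -/
theorem isShearSolution_modeSolution {δ κ v : ℝ} {u : ℝ → ℝ} (hu : Continuous u)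
    {f fy fyy : ℝ → ℝ → ℂ}
    (hf : Continuous (fun p : ℝ × ℝ => f p.1 p.2))
    (hfyy : Continuous (fun p : ℝ × ℝ => fyy p.1 p.2))
    (hp : ∀ t y, f t (y + 2 * π) = f t y)
    (hd : ∀ t y, HasDerivAt (f t) (fy t y) y) (hd2 : ∀ t y, HasDerivAt (fy t) (fyy t y) y)
    (ht : ∀ t, 0 < t → ∀ y, HasDerivAt (fun s => f s y)
      (κ * fyy t y + -(((u y - v : ℝ) : ℂ) * Complex.I + ((κ * δ : ℝ) : ℂ)) * f t y) t) :
    IsShearSolution δ κ u (modeSolution v f) := by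
  set E : ℝ → ℝ → ℂ := fun t x => Complex.exp (((x - v * t : ℝ) : ℂ) * Complex.I) with hE
  have hEx : ∀ t x, HasDerivAt (E t) (Complex.I * E t x) x := by
    intro t x
    have := hasDerivAt_exp_affine (-(v * t)) 1 x
    have e : ∀ x : ℝ, -(v * t) + 1 * x = x - v * t := fun x => by ring
    simp only [e] at this
    simp only [Complex.ofReal_one, one_mul] at this
    exact this
  have hEt : ∀ t x, HasDerivAt (fun s => E s x) (-(v * Complex.I) * E t x) t := by
    intro t x
    have := hasDerivAt_exp_affine x (-v) t
    have e : ∀ t : ℝ, x + -v * t = x - v * t := fun x => by ring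
    simp only [e] at this
    exact this.congr_deriv (by rw [Complex.ofReal_neg, neg_mul])
  have Dx : ∀ t x y, HasDerivAt (fun a => modeSolution v f t a y)
      (Complex.I * E t x * f t y).re x := fun t x y =>
    hasDerivAt_re ((hEx t x).mul_const (f t y))
  have Dxx : ∀ t x y, HasDerivAt (fun a => deriv (fun b => modeSolution v f t b y) a)
      (Complex.I * (Complex.I * E t x) * f t y).re x := by
    intro t x y
    have : (fun a => deriv (fun b => modeSolution v f t b y) a) =
        fun a => (Complex.I * E t a * f t y).re := funext fun a => (Dx t a y).deriv
    rw [this]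
    exact hasDerivAt_re (((hEx t x).const_mul Complex.I).mul_const (f t y))
  have Dy : ∀ t x y, HasDerivAt (fun b => modeSolution v f t x b) (E t x * fy t y).re y :=
    fun t x y => hasDerivAt_re ((hd t y).const_mul (E t x))
  have Dyy : ∀ t x y, HasDerivAt (fun b => deriv (fun c => modeSolution v f t x c) b)
      (E t x * fyy t y).re y := by
    intro t x y
    have : (fun b => deriv (fun c => modeSolution v f t x c) b) =
        fun b => (E t x * fy t b).re := funext fun b => (Dy t x b).deriv
    rw [this]
    exact hasDerivAt_re ((hd2 t y).const_mul (E t x))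
  have Dt : ∀ t, 0 < t → ∀ x y, HasDerivAt (fun s => modeSolution v f s x y)
      (-(v * Complex.I) * E t x * f t y + E t x * (κ * fyy t y +
        -(((u y - v : ℝ) : ℂ) * Complex.I + ((κ * δ : ℝ) : ℂ)) * f t y)).re t :=
    fun t h x y => hasDerivAt_re ((hEt t x).mul (ht t h y))
  have cE : Continuous fun p : ℝ × ℝ × ℝ => E p.1 p.2.1 := by
    simp only [hE]
    fun_prop
  have cf : Continuous fun p : ℝ × ℝ × ℝ => f p.1 p.2.2 :=
    hf.comp (by fun_prop : Continuous fun p : ℝ × ℝ × ℝ => (p.1, p.2.2))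
  have cfyy : Continuous fun p : ℝ × ℝ × ℝ => fyy p.1 p.2.2 :=
    hfyy.comp (by fun_prop : Continuous fun p : ℝ × ℝ × ℝ => (p.1, p.2.2))
  exact
    { cont := (Complex.continuous_re.comp (cE.mul cf)).continuousOn
      periodic_x := fun t x y => by
        have e : (((x + 2 * π - v * t : ℝ) : ℂ) * Complex.I) =
            ((x - v * t : ℝ) : ℂ) * Complex.I + 2 * π * Complex.I := by
          push_cast
          ring
        simp only [modeSolution]
        rw [e, Complex.exp_periodic]
      periodic_y := fun t x y => by simp only [modeSolution, hp]
      diff_t := fun t h x y => (Dt t h x y).differentiableAt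
      diff_x := fun t _ x y => (Dx t x y).differentiableAt
      diff_xx := fun t _ x y => (Dxx t x y).differentiableAt
      diff_y := fun t _ x y => (Dy t x y).differentiableAt
      diff_yy := fun t _ x y => (Dyy t x y).differentiableAt
      cont_dt := by
        refine ContinuousOn.congr (Continuous.continuousOn ?_)
          fun p h => (Dt p.1 h p.2.1 p.2.2).deriv
        refine Complex.continuous_re.comp ?_
        fun_prop
      cont_dxx := by
        simp only [(Dxx _ _ _).deriv]
        refine (Complex.continuous_re.comp ?_).continuousOn
        fun_prop
      cont_dyy := by
        simp only [(Dyy _ _ _).deriv]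
        refine (Complex.continuous_re.comp ?_).continuousOn
        fun_prop
      pde := fun t h x y => by
        rw [(Dt t h x y).deriv, (Dx t x y).deriv, (Dxx t x y).deriv, (Dyy t x y).deriv]
        simp only [Complex.add_re, Complex.mul_re, Complex.mul_im, Complex.neg_re, Complex.neg_im,
          Complex.I_re, Complex.I_im, Complex.ofReal_re, Complex.ofReal_im, Complex.add_im]
        ring }

theorem l2normSq_modeSolution (v : ℝ) {f : ℝ → ℝ → ℂ}
    (hf : Continuous (fun p : ℝ × ℝ => f p.1 p.2)) (t : ℝ) :
    l2normSq (modeSolution v f) t = π * ∫ y in (0:ℝ)..(2 * π), ‖f t y‖ ^ 2 := by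
  have cf : Continuous (f t) := hf.comp (by fun_prop : Continuous fun y => (t, y))
  have h := integral_re_exp_sq
    (F := fun y => Complex.exp (((-(v * t) : ℝ) : ℂ) * Complex.I) * f t y) (by fun_prop)
  simp only [norm_mul, Complex.norm_exp_ofReal_mul_I, one_mul] at h
  rw [← h]
  simp only [l2normSq, modeSolution, ← mul_assoc, ← Complex.exp_add, ← add_mul,
    ← Complex.ofReal_add, ← sub_eq_add_neg]

theorem modeSolution_mean_zero (v : ℝ) (f : ℝ → ℝ → ℂ) (y : ℝ) :
    ∫ x in (0:ℝ)..(2 * π), modeSolution v f 0 x y = 0 := by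
  simp only [modeSolution, mul_zero, sub_zero, integral_re_exp_eq_zero]

/-! ### The quasimode argument -/

/-- If the profile `φ` solves the stationary mode equation up to a residual of relative `L²` size
`B`, then solutions starting from `φ` cannot decay at a rate beyond `8 C² B`. -/
theorem rate_le_of_quasimode {κ r C B : ℝ} (hr : 0 < r) (hC : 1 ≤ C) (hB : 0 < B)
    {V : ℝ → ℂ} (hV : Continuous V) {f fy fyy : ℝ → ℝ → ℂ}
    (hf : Continuous (fun p : ℝ × ℝ => f p.1 p.2))
    (hfyy : Continuous (fun p : ℝ × ℝ => fyy p.1 p.2))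
    (hp : ∀ t y, f t (y + 2 * π) = f t y) (hpy : ∀ t y, fy t (y + 2 * π) = fy t y)
    (hd : ∀ t y, HasDerivAt (f t) (fy t y) y) (hd2 : ∀ t y, HasDerivAt (fy t) (fyy t y) y)
    (ht : ∀ t, 0 < t → ∀ y, HasDerivAt (fun s => f s y) (κ * fyy t y + V y * f t y) t)
    {φ φ' φ'' : ℝ → ℝ} (hφ : ∀ y, HasDerivAt φ (φ' y) y) (hφ' : ∀ y, HasDerivAt φ' (φ'' y) y)
    (hφc : Continuous φ'') (p1 : φ (2 * π) = φ 0) (p2 : φ' (2 * π) = φ' 0)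
    (h0 : ∀ y, f 0 y = φ y) (hΦ : 0 < ∫ y in (0:ℝ)..(2 * π), φ y ^ 2)
    (hψ : ∫ y in (0:ℝ)..(2 * π), ‖(κ * φ'' y + V y * φ y : ℂ)‖ ^ 2 ≤
      B ^ 2 * ∫ y in (0:ℝ)..(2 * π), φ y ^ 2)
    (hdec : ∀ t, 0 ≤ t → ∫ y in (0:ℝ)..(2 * π), ‖f t y‖ ^ 2 ≤
      C * exp (-r * t) * ∫ y in (0:ℝ)..(2 * π), ‖f 0 y‖ ^ 2) :
    r ≤ 8 * C ^ 2 * B := by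
  have cφ : Continuous φ := continuous_iff_continuousAt.mpr fun y => (hφ y).continuousAt
  have cf : ∀ t, Continuous (f t) := fun t => hf.comp (by fun_prop : Continuous fun y => (t, y))
  have hf0 : ∫ y in (0:ℝ)..(2 * π), ‖f 0 y‖ ^ 2 = ∫ y in (0:ℝ)..(2 * π), φ y ^ 2 := by
    simp [h0]
  rw [hf0] at hdec
  set Φ := ∫ y in (0:ℝ)..(2 * π), φ y ^ 2 with hΦdef
  -- Up to time `T` the pairing with `φ` loses at most half of its initial value `Φ`.
  set T : ℝ := 1 / (2 * B * C) with hT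
  have hTpos : 0 < T := by positivity
  have hpair := pairing_identity hTpos.le hV hf hfyy hp hpy hd hd2 ht hφ hφ' hφc p1 p2
  have hinit : ∫ y in (0:ℝ)..(2 * π), (φ y : ℂ) * f 0 y = (Φ : ℂ) := by
    rw [hΦdef, ← intervalIntegral.integral_ofReal]
    refine intervalIntegral.integral_congr fun y _ => ?_
    simp [h0, sq]
  -- The residual pairing is small, by the Young inequality with weight `B`.
  have hres : ∀ t, 0 ≤ t →
      ‖∫ y in (0:ℝ)..(2 * π), (κ * φ'' y + V y * φ y : ℂ) * f t y‖ ≤ B * C * Φ := by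
    intro t h
    have c1 := cf t
    have hle : ∫ y in (0:ℝ)..(2 * π), ‖(κ * φ'' y + V y * φ y : ℂ) * f t y‖ ≤
        ∫ y in (0:ℝ)..(2 * π),
          (1 / (2 * B) * ‖(κ * φ'' y + V y * φ y : ℂ)‖ ^ 2 + B / 2 * ‖f t y‖ ^ 2) := by
      refine intervalIntegral.integral_mono_on two_pi_pos.le
        (Continuous.intervalIntegrable (by fun_prop) _ _)
        (Continuous.intervalIntegrable (by fun_prop) _ _) fun y _ => ?_
      rw [norm_mul]
      generalize ‖(κ * φ'' y + V y * φ y : ℂ)‖ = a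
      generalize ‖f t y‖ = b
      have : 1 / (2 * B) * a ^ 2 + B / 2 * b ^ 2 - a * b = 1 / (2 * B) * (a - B * b) ^ 2 := by
        field_simp
        ring
      have : 0 ≤ 1 / (2 * B) * (a - B * b) ^ 2 := by positivity
      linarith
    refine (intervalIntegral.norm_integral_le_integral_norm two_pi_pos.le).trans (hle.trans ?_)
    rw [intervalIntegral.integral_add (Continuous.intervalIntegrable (by fun_prop) _ _)
      (Continuous.intervalIntegrable (by fun_prop) _ _), intervalIntegral.integral_const_mul,
      intervalIntegral.integral_const_mul]
    have h1 : 1 / (2 * B) * ∫ y in (0:ℝ)..(2 * π), ‖(κ * φ'' y + V y * φ y : ℂ)‖ ^ 2 ≤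
        1 / (2 * B) * (B ^ 2 * Φ) := by gcongr
    have h2 : ∫ y in (0:ℝ)..(2 * π), ‖f t y‖ ^ 2 ≤ C * Φ := by
      refine (hdec t h).trans ?_
      have : exp (-r * t) ≤ 1 := exp_le_one_iff.mpr (by nlinarith)
      have : C * exp (-r * t) ≤ C * 1 := by gcongr
      nlinarith
    have h3 : B / 2 * ∫ y in (0:ℝ)..(2 * π), ‖f t y‖ ^ 2 ≤ B / 2 * (C * Φ) := by gcongr
    have h4 : 1 / (2 * B) * (B ^ 2 * Φ) = B / 2 * Φ := by field_simp
    have h5 : B / 2 * Φ ≤ B / 2 * (C * Φ) := by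
      gcongr
      nlinarith
    linarith
  have hdiff : ‖∫ t in (0:ℝ)..T, ∫ y in (0:ℝ)..(2 * π),
      (κ * φ'' y + V y * φ y : ℂ) * f t y‖ ≤ Φ / 2 := by
    refine (intervalIntegral.norm_integral_le_of_norm_le_const fun t h => hres t ?_).trans ?_
    · rw [uIoc_of_le hTpos.le] at h
      exact h.1.le
    · rw [sub_zero, abs_of_pos hTpos, hT]
      apply le_of_eq
      field_simp
  rw [← hpair, hinit] at hdiff
  have hlow : Φ / 2 ≤ ‖∫ y in (0:ℝ)..(2 * π), (φ y : ℂ) * f T y‖ := by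
    have h1 := norm_sub_norm_le (Φ : ℂ) (∫ y in (0:ℝ)..(2 * π), (φ y : ℂ) * f T y)
    rw [norm_sub_rev, Complex.norm_real, Real.norm_of_nonneg hΦ.le] at h1
    linarith
  have hup : ‖∫ y in (0:ℝ)..(2 * π), (φ y : ℂ) * f T y‖ ≤
      Φ / 4 + ∫ y in (0:ℝ)..(2 * π), ‖f T y‖ ^ 2 := by
    have c1 := cf T
    have hle : ∫ y in (0:ℝ)..(2 * π), ‖(φ y : ℂ) * f T y‖ ≤
        ∫ y in (0:ℝ)..(2 * π), (1 / 4 * φ y ^ 2 + ‖f T y‖ ^ 2) := by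
      refine intervalIntegral.integral_mono_on two_pi_pos.le
        (Continuous.intervalIntegrable (by fun_prop) _ _)
        (Continuous.intervalIntegrable (by fun_prop) _ _) fun y _ => ?_
      rw [norm_mul, Complex.norm_real, Real.norm_eq_abs, ← sq_abs (φ y)]
      nlinarith [sq_nonneg (|φ y| / 2 - ‖f T y‖)]
    refine (intervalIntegral.norm_integral_le_integral_norm two_pi_pos.le).trans (hle.trans ?_)
    rw [intervalIntegral.integral_add (Continuous.intervalIntegrable (by fun_prop) _ _)
      (Continuous.intervalIntegrable (by fun_prop) _ _), intervalIntegral.integral_const_mul]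
    linarith
  have h1 : 1 / 4 * Φ ≤ C * exp (-r * T) * Φ := by linarith [hdec T hTpos.le]
  have h2 : 1 / 4 ≤ C * exp (-r * T) := le_of_mul_le_mul_right h1 hΦ
  have h3 : exp (r * T) ≤ 4 * C := by
    have h4 : exp (-r * T) * exp (r * T) = 1 := by rw [← exp_add]; simp
    nlinarith [exp_pos (r * T)]
  have h4 : r * T ≤ 4 * C := by linarith [add_one_le_exp (r * T)]
  rw [hT, mul_one_div, div_le_iff₀ (by positivity)] at h4
  linarith

/-- The choice of exponent for the profile: with `K + 1 = ⌈κ^{-2/(n+2)}⌉` and `s = κ^{n/(n+2)}`, the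
diffusive size `κ (K + 1)` and the advective size `(K + 1)^{-n/2}` of the residual are both `O(s)`. -/
theorem exists_concentration (n : ℕ) {κ : ℝ} (h0 : 0 < κ) (h1 : κ ≤ 1) : ∃ K : ℕ,
    κ * (K + 1) ≤ 2 * κ ^ ((n : ℝ) / (n + 2)) ∧
    1 ≤ ((K : ℝ) + 1) ^ n * (κ ^ ((n : ℝ) / (n + 2))) ^ 2 ∧
    κ ≤ κ ^ ((n : ℝ) / (n + 2)) := by
  have hn : (0 : ℝ) < n + 2 := by positivity
  set w : ℝ := κ ^ (-(2 / ((n : ℝ) + 2))) with hw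
  have hw1 : 1 ≤ w := one_le_rpow_of_pos_of_le_one_of_nonpos h0 h1
    (neg_nonpos.mpr (by positivity))
  have hN : 1 ≤ ⌈w⌉₊ := Nat.one_le_ceil_iff.mpr (by linarith)
  have hK : ((⌈w⌉₊ - 1 : ℕ) : ℝ) + 1 = ⌈w⌉₊ := by
    rw [Nat.cast_sub hN]
    simp
  have hs : κ * w = κ ^ ((n : ℝ) / (n + 2)) := by
    rw [hw]
    nth_rewrite 1 [← rpow_one κ]
    rw [← rpow_add h0]
    congr 1
    field_simp
    ring
  refine ⟨⌈w⌉₊ - 1, ?_, ?_, ?_⟩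
  · rw [hK, ← hs]
    have := (Nat.ceil_lt_add_one (by linarith : 0 ≤ w)).le
    nlinarith
  · rw [hK]
    have e : w ^ n * (κ ^ ((n : ℝ) / (n + 2))) ^ 2 = 1 := by
      rw [hw, ← rpow_natCast, ← rpow_natCast, ← rpow_mul h0.le, ← rpow_mul h0.le, ← rpow_add h0]
      have : -(2 / ((n : ℝ) + 2)) * n + n / (n + 2) * ((2 : ℕ) : ℝ) = 0 := by
        push_cast
        ring
      rw [this, rpow_zero]
    rw [← e]
    gcongr
    exact Nat.le_ceil w
  · rw [← hs]
    exact le_mul_of_one_le_right h0.le hw1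

/-- The residual of `bump` in the mode equation has relative `L²` size `O(s)`. The three
contributions are `κ ∂ᵧᵧφ`, `(u - u(yc)) φ` and `κ δ φ`. -/
theorem residual_bound {n : ℕ} {δ κ s A D : ℝ} (hδ : δ = 0 ∨ δ = 1) (hκ : 0 < κ) (hA : 0 ≤ A)
    {u : ℝ → ℝ} (hu : Continuous u) {yc : ℝ}
    (hA' : ∀ y, (u y - u yc) ^ 2 ≤ A * ((1 - cos (y - yc)) / 2) ^ n)
    (hD' : ∀ M : ℕ, (M : ℝ) ^ n * trigMoment yc n M ≤ D * trigMoment yc 0 M)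
    {K : ℕ} (h1 : κ * (K + 1) ≤ 2 * s) (h2 : 1 ≤ ((K : ℝ) + 1) ^ n * s ^ 2) (h3 : κ ≤ s) :
    ∫ y in (0:ℝ)..(2 * π), ‖(κ * bumpDeriv2 yc K y +
        -(((u y - u yc : ℝ) : ℂ) * Complex.I + ((κ * δ : ℝ) : ℂ)) * bump yc K y : ℂ)‖ ^ 2 ≤
      (58 + A * D) * s ^ 2 * ∫ y in (0:ℝ)..(2 * π), bump yc K y ^ 2 := by
  have cb : Continuous (bump yc K) := by unfold bump; fun_prop
  have cb2 : Continuous (bumpDeriv2 yc K) := by unfold bumpDeriv2; fun_prop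
  have hΦ0 := trigMoment_nonneg yc 0 (2 * (K + 1))
  have hle : ∫ y in (0:ℝ)..(2 * π), ‖(κ * bumpDeriv2 yc K y +
        -(((u y - u yc : ℝ) : ℂ) * Complex.I + ((κ * δ : ℝ) : ℂ)) * bump yc K y : ℂ)‖ ^ 2 ≤
      ∫ y in (0:ℝ)..(2 * π), (2 * κ ^ 2 * bumpDeriv2 yc K y ^ 2 +
        A * (((1 - cos (y - yc)) / 2) ^ n * ((1 + cos (y - yc)) / 2) ^ (2 * (K + 1))) +
        2 * κ ^ 2 * bump yc K y ^ 2) := by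
    refine intervalIntegral.integral_mono_on two_pi_pos.le
      (Continuous.intervalIntegrable (by fun_prop) _ _)
      (Continuous.intervalIntegrable (by fun_prop) _ _) fun y _ => ?_
    have e1 : ‖(κ * bumpDeriv2 yc K y +
        -(((u y - u yc : ℝ) : ℂ) * Complex.I + ((κ * δ : ℝ) : ℂ)) * bump yc K y : ℂ)‖ ^ 2 =
        (κ * bumpDeriv2 yc K y - κ * δ * bump yc K y) ^ 2 +
          (u y - u yc) ^ 2 * bump yc K y ^ 2 := by
      rw [Complex.sq_norm, Complex.normSq_apply]
      simp only [Complex.add_re, Complex.mul_re, Complex.mul_im, Complex.neg_re, Complex.neg_im,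
        Complex.I_re, Complex.I_im, Complex.ofReal_re, Complex.ofReal_im, Complex.add_im]
      ring
    have e2 : ((1 + cos (y - yc)) / 2) ^ (2 * (K + 1)) = bump yc K y ^ 2 := by
      rw [bump, ← pow_mul, mul_comm]
    have e3 : (κ * bumpDeriv2 yc K y - κ * δ * bump yc K y) ^ 2 ≤
        2 * κ ^ 2 * bumpDeriv2 yc K y ^ 2 + 2 * κ ^ 2 * bump yc K y ^ 2 := by
      rcases hδ with rfl | rfl
      · nlinarith [sq_nonneg (κ * bumpDeriv2 yc K y), sq_nonneg (κ * bump yc K y)]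
      · nlinarith [sq_nonneg (κ * bumpDeriv2 yc K y + κ * bump yc K y)]
    have e4 := mul_le_mul_of_nonneg_right (hA' y) (sq_nonneg (bump yc K y))
    rw [e1, e2]
    linarith
  refine hle.trans ?_
  rw [intervalIntegral.integral_add (Continuous.intervalIntegrable (by fun_prop) _ _)
    (Continuous.intervalIntegrable (by fun_prop) _ _),
    intervalIntegral.integral_add (Continuous.intervalIntegrable (by fun_prop) _ _)
    (Continuous.intervalIntegrable (by fun_prop) _ _), intervalIntegral.integral_const_mul,
    intervalIntegral.integral_const_mul, intervalIntegral.integral_const_mul, integral_bump_sq]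
  change _ + A * trigMoment yc n (2 * (K + 1)) + _ ≤ _
  set Φ := trigMoment yc 0 (2 * (K + 1))
  have b1 : 2 * κ ^ 2 * ∫ y in (0:ℝ)..(2 * π), bumpDeriv2 yc K y ^ 2 ≤ 56 * s ^ 2 * Φ := by
    have := mul_le_mul_of_nonneg_left (integral_bumpDeriv2_sq yc K)
      (by positivity : 0 ≤ 2 * κ ^ 2)
    refine this.trans ?_
    have hsq : (κ * (K + 1)) ^ 2 ≤ (2 * s) ^ 2 := by gcongr
    calc 2 * κ ^ 2 * (7 * (K + 1) ^ 2 * Φ) = 14 * (κ * (K + 1)) ^ 2 * Φ := by ring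
      _ ≤ 14 * (2 * s) ^ 2 * Φ := by gcongr
      _ = 56 * s ^ 2 * Φ := by ring
  have b2 : trigMoment yc n (2 * (K + 1)) ≤ D * s ^ 2 * Φ := by
    have hM : ((K : ℝ) + 1) ^ n ≤ ((2 * (K + 1) : ℕ) : ℝ) ^ n := by
      push_cast
      gcongr
      linarith [Nat.cast_nonneg (α := ℝ) K]
    have hnn := trigMoment_nonneg yc n (2 * (K + 1))
    calc trigMoment yc n (2 * (K + 1))
        ≤ ((K : ℝ) + 1) ^ n * s ^ 2 * trigMoment yc n (2 * (K + 1)) :=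
          le_mul_of_one_le_left hnn h2
      _ ≤ ((2 * (K + 1) : ℕ) : ℝ) ^ n * s ^ 2 * trigMoment yc n (2 * (K + 1)) := by gcongr
      _ = s ^ 2 * (((2 * (K + 1) : ℕ) : ℝ) ^ n * trigMoment yc n (2 * (K + 1))) := by ring
      _ ≤ s ^ 2 * (D * Φ) := mul_le_mul_of_nonneg_left (hD' _) (sq_nonneg s)
      _ = _ := by ring
  have b3 : 2 * κ ^ 2 * Φ ≤ 2 * s ^ 2 * Φ := by gcongr
  have b4 := mul_le_mul_of_nonneg_left b2 hA
  linarith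

/-- Sharpness of the enhanced diffusion rate `κ^{n/(n+2)}` for
`C^{n+1}` shear flows having a point where `u⁽ʲ⁾` vanishes for `1 ≤ j ≤ n-1`. -/
theorem sharpness_regular_shear (n : ℕ) (hn : 1 ≤ n) (δ : ℝ) (hδ : δ = 0 ∨ δ = 1)
    (u : ℝ → ℝ) (hu_smooth : ContDiff ℝ (n + 1 : ℕ) u) (hu_per : ∀ y, u (y + 2 * π) = u y)
    (y_c : ℝ) (hcrit : ∀ j : ℕ, 1 ≤ j → j ≤ n - 1 → iteratedDeriv j u y_c = 0)
    (κ₀ : ℝ) (hκ₀ : κ₀ ∈ Ioo (0:ℝ) 1) (r : ℝ → ℝ) (hr : IsRateFunction κ₀ r)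
    (henh : DiffusionEnhancing δ κ₀ u r) :
    ∃ c : ℝ, 0 < c ∧ ∃ κ₁ ∈ Ioc (0:ℝ) κ₀, ∀ κ ∈ Ioc (0:ℝ) κ₁,
      r κ ≤ c⁻¹ * κ ^ ((n : ℝ) / (n + 2)) := by
  obtain ⟨C, hC, hdecay⟩ := henh
  obtain ⟨A, hA, hA'⟩ := shear_global_bound hn hu_smooth hu_per hcrit
  obtain ⟨D, hD, hD'⟩ := exists_trigMoment_bound n
  have hu : Continuous u := hu_smooth.continuous
  have hpos : 0 < 58 + A * D := by positivity
  refine ⟨(8 * C ^ 2 * √(58 + A * D))⁻¹, by positivity, κ₀, ⟨hκ₀.1, le_rfl⟩, fun κ hκ => ?_⟩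
  obtain ⟨K, hK1, hK2, hK3⟩ := exists_concentration n hκ.1 (hκ.2.trans hκ₀.2.le)
  have hs : 0 < κ ^ ((n : ℝ) / (n + 2)) := rpow_pos_of_pos hκ.1 _
  set s : ℝ := κ ^ ((n : ℝ) / (n + 2))
  rw [inv_inv, mul_assoc]
  set V : ℝ → ℂ := fun y => -(((u y - u y_c : ℝ) : ℂ) * Complex.I + ((κ * δ : ℝ) : ℂ)) with hVdef
  have hV : ContDiff ℝ 2 V := by
    have h2 : ContDiff ℝ 2 u := hu_smooth.of_le (by exact_mod_cast Nat.succ_le_succ hn)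
    have h3 : ContDiff ℝ 2 fun y => ((u y - u y_c : ℝ) : ℂ) :=
      Complex.ofRealCLM.contDiff.comp (h2.sub contDiff_const)
    exact ((h3.mul contDiff_const).add contDiff_const).neg
  obtain ⟨a, ha⟩ := exists_bump_coeff y_c (K + 1)
  obtain ⟨f, fy, fyy, hf, hfyy, h0, hp, hpy, hd, hd2, ht⟩ :=
    exists_mode_solution hκ.1 hV (fun x => by simp only [hVdef, hu_per]) a
  have hinit : ∀ y, f 0 y = bump y_c K y := fun y => by
    rw [h0, ← ha, bump, Complex.ofReal_pow]
  have hsol : IsShearSolution δ κ u (modeSolution (u y_c) f) :=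
    isShearSolution_modeSolution hu hf hfyy hp hd hd2 ht
  have hper : ∀ y : ℝ, cos (2 * π - y) = cos (0 - y) ∧ sin (2 * π - y) = sin (0 - y) :=
    fun y => by simp
  refine rate_le_of_quasimode (hr.2.2.1 κ hκ).1 hC (by positivity) hV.continuous hf hfyy hp hpy
    hd hd2 ht (hasDerivAt_bump y_c K) (hasDerivAt_bumpDeriv y_c K)
    (by unfold bumpDeriv2; fun_prop) (by simp only [bump, hper]) (by simp only [bumpDeriv, hper])
    hinit (by rw [integral_bump_sq]; exact trigMoment_pos _ _) ?_ fun t h => ?_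
  · rw [mul_pow, sq_sqrt hpos.le]
    exact residual_bound hδ hκ.1 hA hu hA' (hD' y_c) hK1 hK2 hK3
  · have h1 := hdecay κ hκ _ hsol (modeSolution_mean_zero _ f) t h
    rw [l2normSq_modeSolution _ hf, l2normSq_modeSolution _ hf] at h1
    refine le_of_mul_le_mul_left ?_ pi_pos
    linarith

end
end

section
/- Let α ∈ (0,1), δ ∈ {0,1}, and let u : ℝ → ℝ be a 2π-periodic function satisfying the Hölder bound |u(y) − u(y')| ≤ c_H |y − y'|^α for all y, y' ∈ ℝ, for some c_H > 0. If u is diffusion enhancing at some rate r : (0,κ₀] → (0,1), then liminf_{κ→0⁺} κ^{α/(α+2)}/r(κ) > 0; that is, there exist c > 0 and κ₁ ∈ (0,κ₀] such that r(κ) ≤ c⁻¹ κ^{α/(α+2)} for all κ ∈ (0,κ₁]. -/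
/-!
A diffusion-enhancing rate is at most a constant times the error of any quasimode, and a Hölder
shear has a quasimode with error of order `κ^{α/(α+2)}`.

On the first Fourier mode `ρ = Re (e^{ix} f(t, y))` the equation becomes `∂ₜ f = κ ∂ᵧᵧ f - V f` with
`V = κ δ + i u`. Let `φ` be a real periodic `C²` function, `u₀` a real number and
`Ψ = κ φ'' - (V - i u₀) φ`. Integration by parts shows that `w(t) = e^{i u₀ t} ∫ f(t) φ` satisfies
`w' = e^{i u₀ t} ∫ f(t) Ψ`. If solutions decay like `C e^{-rt}` in squared `L²` norm, then
`|w'| ≤ √C ‖f(0)‖ ‖Ψ‖ e^{-rt/2}` and `w → 0`, so `r |w(0)| ≤ 2 √C ‖f(0)‖ ‖Ψ‖`. Taking `f(0)` to `φ`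
gives `r ‖φ‖ ≤ 2 √C ‖Ψ‖` (`rate_le_of_quasimode`).

For `φ` take a bump of width `√s` around `y = π`, and `u₀ = u(π)` (`exists_bump`). Then
`‖κ φ''‖ ≲ (κ / s) ‖φ‖` and, by the Hölder bound, `‖(u - u₀) φ‖ ≲ s^{α/2} ‖φ‖`. The choice
`s = κ^{2/(α+2)}` makes both factors equal to `κ^{α/(α+2)}` (`quasimode_error`).

The enhancement hypothesis concerns classical solutions only, so enough of these have to be
constructed. On the Banach space of bounded continuous functions the operator `κ ∂ᵧᵧ - V` has a
resolvent with `‖R(μ)‖ ≤ 1 / (μ - ‖V‖)` (`exists_resolvent`): without `V` it is found by factoring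
`a² - ∂²` into first-order operators, and `V` is included by a contraction. The Hille–Yosida argument
(`exists_orbit_of_resolvent`) then gives an orbit that is differentiable in the supremum norm for
the initial datum `(m R(m))³ φ`, which tends to `φ` as `m → ∞` (`exists_solution_near`).
Uniqueness for the resolvent equation makes `R(μ)` commute with the translation by `2π`, so the
orbit is periodic in `y`.
-/

open MeasureTheory Real Set Filter

noncomputable section

/-! ### Semigroup generated by a quasi-contractive resolvent family -/

lemma norm_opExp_le {X : Type*} [NormedAddCommGroup X] [NormedSpace ℝ X] [CompleteSpace X]
    (S : X →L[ℝ] X) : ‖NormedSpace.exp S‖ ≤ Real.exp ‖S‖ := by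
  have h1 : HasSum (fun n : ℕ => (n.factorial : ℝ)⁻¹ • S ^ n) (NormedSpace.exp S) :=
    NormedSpace.exp_series_hasSum_exp' S
  have h2 : HasSum (fun n : ℕ => (n.factorial : ℝ)⁻¹ * ‖S‖ ^ n) (Real.exp ‖S‖) := by
    have := NormedSpace.exp_series_hasSum_exp' (𝕂 := ℝ) ‖S‖
    rw [← Real.exp_eq_exp_ℝ] at this
    simpa using this
  rw [← h1.tsum_eq, ← h2.tsum_eq]
  refine tsum_of_norm_bounded h2.summable.hasSum fun n => ?_
  rw [norm_smul, Real.norm_of_nonneg (by positivity)]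
  gcongr
  rcases n with _ | n
  · rw [pow_zero, pow_zero]
    exact ContinuousLinearMap.norm_id_le
  · exact norm_pow_le' S n.succ_pos

section HilleYosida

variable {X : Type*} [NormedAddCommGroup X] [NormedSpace ℝ X]

/-- The Yosida approximation `μ A R(μ) = μ² R(μ) - μ` of the generator `A` whose resolvent
at `μ` is `R`. -/
def yosida (R : X →L[ℝ] X) (μ : ℝ) : X →L[ℝ] X := μ ^ 2 • R - μ • 1

/-- On `D(A²)`, written as the range of `K²` with `K = R(m)`, the error of the Yosida
approximation is `A_μ - A = R(μ) A²`. -/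
lemma yosida_error {R K : X →L[ℝ] X} {μ m : ℝ} (h : R - K = (m - μ) • (R * K)) (g : X) :
    yosida R μ (K (K g)) =
      (m • K (K g) - K g) + R (m • K (m • K g - g) - (m • K g - g)) := by
  have e : ∀ x, R x = K x + (m - μ) • R (K x) := by
    intro x
    have := congrArg (fun S : X →L[ℝ] X => S x) h
    simp only [sub_apply, smul_apply,
      mul_apply_eq_comp] at this
    rw [← this]; abel
  have e1 := e g
  have e2 := e (K g)
  simp only [yosida, sub_apply, smul_apply,
    one_apply_eq_self, map_sub, map_smul]
  rw [e1, e2]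
  module

variable [CompleteSpace X]

lemma norm_exp_yosida_le {M μ : ℝ} (hM : 0 ≤ M) (hμ : 2 * M + 1 ≤ μ) {R : X →L[ℝ] X}
    (hR : ‖R‖ ≤ 1 / (μ - M)) {t : ℝ} (ht : 0 ≤ t) :
    ‖NormedSpace.exp (t • yosida R μ)‖ ≤ Real.exp (2 * M * t) := by
  have hsplit : t • yosida R μ = (t * μ ^ 2) • R + (-(t * μ)) • (1 : X →L[ℝ] X) := by
    unfold yosida
    module
  have hc : Commute ((t * μ ^ 2) • R) ((-(t * μ)) • (1 : X →L[ℝ] X)) :=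
    (Commute.one_right _).smul_right _
  have hsc : NormedSpace.exp ((-(t * μ)) • (1 : X →L[ℝ] X)) = Real.exp (-(t * μ)) • 1 := by
    have := NormedSpace.algebraMap_exp_comm (𝕂 := ℝ) (𝔸 := X →L[ℝ] X) (-(t * μ))
    rw [← Real.exp_eq_exp_ℝ] at this
    simpa [Algebra.algebraMap_eq_smul_one] using this.symm
  let _ : NormedAlgebra ℚ (X →L[ℝ] X) := NormedAlgebra.restrictScalars ℚ ℝ _
  rw [hsplit, NormedSpace.exp_add_of_commute hc, hsc, mul_smul_comm, mul_one, norm_smul,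
    Real.norm_of_nonneg (Real.exp_pos _).le]
  have hpos : 0 < μ - M := by linarith
  calc Real.exp (-(t * μ)) * ‖NormedSpace.exp ((t * μ ^ 2) • R)‖
      ≤ Real.exp (-(t * μ)) * Real.exp (‖(t * μ ^ 2) • R‖) := by
        gcongr; exact norm_opExp_le _
    _ = Real.exp (-(t * μ) + ‖(t * μ ^ 2) • R‖) := (Real.exp_add _ _).symm
    _ ≤ Real.exp (2 * M * t) := by
        gcongr
        rw [norm_smul, Real.norm_of_nonneg (by positivity)]
        have h1 : t * μ ^ 2 * ‖R‖ ≤ t * μ ^ 2 * (1 / (μ - M)) := by gcongr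
        have h2 : μ ^ 2 * (1 / (μ - M)) ≤ μ + 2 * M := by
          rw [mul_one_div, div_le_iff₀ hpos]; nlinarith
        nlinarith [mul_le_mul_of_nonneg_left h2 ht]

lemma hasDerivAt_exp_smul_apply (A : X →L[ℝ] X) (x : X) (t : ℝ) :
    HasDerivAt (fun s : ℝ => NormedSpace.exp (s • A) x) (NormedSpace.exp (t • A) (A x)) t := by
  have h := hasDerivAt_exp_smul_const (𝕂 := ℝ) A t
  have := ((ContinuousLinearMap.apply ℝ X x).hasFDerivAt).comp_hasDerivAt t h
  simpa [Function.comp_def] using this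

/-- Duhamel comparison of the exponentials of two commuting operators. -/
lemma norm_exp_sub_exp_apply_le {A B : X →L[ℝ] X} (hAB : Commute A B) {M : ℝ}
    (hA : ∀ t : ℝ, 0 ≤ t → ‖NormedSpace.exp (t • A)‖ ≤ Real.exp (2 * M * t))
    (hB : ∀ t : ℝ, 0 ≤ t → ‖NormedSpace.exp (t • B)‖ ≤ Real.exp (2 * M * t))
    (x : X) {t : ℝ} (ht : 0 ≤ t) :
    ‖NormedSpace.exp (t • A) x - NormedSpace.exp (t • B) x‖
      ≤ t * Real.exp (2 * M * t) * ‖A x - B x‖ := by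
  have hd : ∀ s : ℝ, HasDerivAt
      (fun s : ℝ => NormedSpace.exp (s • A) (NormedSpace.exp ((t - s) • B) x))
      (NormedSpace.exp (s • A) (NormedSpace.exp ((t - s) • B) (A x - B x))) s := by
    intro s
    have h1 := hasDerivAt_exp_smul_const (𝕂 := ℝ) A s
    have h2 := (hasDerivAt_exp_smul_apply B x (t - s)).scomp s
      ((hasDerivAt_id s).const_sub t)
    have h3 := h1.clm_apply h2
    refine h3.congr_deriv ?_
    have hc : Commute A (NormedSpace.exp ((t - s) • B)) := (hAB.smul_right _).exp_right
    have hc' : A (NormedSpace.exp ((t - s) • B) x) = NormedSpace.exp ((t - s) • B) (A x) :=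
      congrArg (fun S : X →L[ℝ] X => S x) hc.eq
    change NormedSpace.exp (s • A) (A (NormedSpace.exp ((t - s) • B) x)) + _ = _
    rw [hc', map_sub, map_sub, neg_smul, one_smul, map_neg, ← sub_eq_add_neg]
  have hmv := norm_image_sub_le_of_norm_deriv_le_segment' (a := 0) (b := t)
    (C := Real.exp (2 * M * t) * ‖A x - B x‖)
    (fun s _ => (hd s).hasDerivWithinAt) (fun s hs => ?_) t (right_mem_Icc.2 ht)
  · simp only [sub_self, zero_smul, NormedSpace.exp_zero, sub_zero,
      one_apply_eq_self] at hmv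
    linarith
  · have hs0 := hs.1
    have hs1 : 0 ≤ t - s := by linarith [hs.2]
    calc _ ≤ ‖NormedSpace.exp (s • A)‖ *
          (‖NormedSpace.exp ((t - s) • B)‖ * ‖A x - B x‖) :=
          (ContinuousLinearMap.le_opNorm _ _).trans
            (by gcongr; exact ContinuousLinearMap.le_opNorm _ _)
      _ ≤ Real.exp (2 * M * s) * (Real.exp (2 * M * (t - s)) * ‖A x - B x‖) := by
          gcongr
          · exact hA s hs0
          · exact hB _ hs1
      _ = Real.exp (2 * M * t) * ‖A x - B x‖ := by
          rw [← mul_assoc, ← Real.exp_add]; ring_nf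

/-- Generation theorem. A family of bounded operators on a Banach space satisfying the resolvent
identity and `‖R(μ)‖ ≤ 1/(μ - M)` is to be thought of as `R(μ) = (μ - A)⁻¹`; for the initial datum
`R(m)³ g` the equation `f' = A f` has a solution `f = R(m) p` with `p` continuous, where `A f` is
`m f - p`. Any bounded operator that commutes with the resolvent and fixes `g` fixes `p`. -/
theorem exists_orbit_of_resolvent {M : ℝ} (hM : 0 ≤ M) (R : ℝ → X →L[ℝ] X)
    (hres : ∀ μ ν, M < μ → M < ν → R μ - R ν = (ν - μ) • (R μ * R ν))
    (hnorm : ∀ μ, M < μ → ‖R μ‖ ≤ 1 / (μ - M)) {m : ℝ} (hm : M < m)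
    (T : X →L[ℝ] X) (hT : ∀ μ, M < μ → Commute T (R μ)) (g : X) (hg : T g = g) :
    ∃ p : ℝ → X, Continuous p ∧ p 0 = R m (R m g) ∧ (∀ t, T (p t) = p t) ∧
      ∀ t, 0 < t → HasDerivAt (fun s => R m (p s)) (m • R m (p t) - p t) t := by
  have hcomm : ∀ μ ν, M < μ → M < ν → Commute (R μ) (R ν) := by
    intro μ ν hμ hν
    rcases eq_or_ne μ ν with rfl | hne
    · exact Commute.refl _
    have h1 := hres μ ν hμ hν
    have h2 := hres ν μ hν hμ
    have h3 : (ν - μ) • (R μ * R ν) = (ν - μ) • (R ν * R μ) := by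
      rw [← h1, ← neg_sub (R ν), h2, ← neg_smul, neg_sub]
    exact smul_right_injective _ (sub_ne_zero.2 hne.symm) h3
  set K := R m with hK
  set l : ℕ → ℝ := fun n => 2 * M + 1 + n with hl
  have hl1 : ∀ n, 2 * M + 1 ≤ l n := fun n => by simp [hl]
  have hlM : ∀ n, M < l n := fun n => by linarith [hl1 n]
  set A : ℕ → X →L[ℝ] X := fun n => yosida (R (l n)) (l n) with hA
  set E : ℕ → ℝ → X →L[ℝ] X := fun n t => NormedSpace.exp (t • A n) with hE
  have hEn : ∀ n t, 0 ≤ t → ‖E n t‖ ≤ Real.exp (2 * M * t) := fun n t ht =>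
    norm_exp_yosida_le hM (hl1 n) (hnorm _ (hlM n)) ht
  have hcA : ∀ (S : X →L[ℝ] X), (∀ μ, M < μ → Commute S (R μ)) → ∀ n, Commute S (A n) :=
    fun S hS n => ((hS _ (hlM n)).smul_right _).sub_right ((Commute.one_right S).smul_right _)
  have hcE : ∀ (S : X →L[ℝ] X), (∀ μ, M < μ → Commute S (R μ)) → ∀ n t x,
      E n t (S x) = S (E n t x) := fun S hS n t x =>
    (congrArg (fun U : X →L[ℝ] X => U x) (((hcA S hS n).smul_right t).exp_right).eq).symm
  have hcK : ∀ μ, M < μ → Commute K (R μ) := fun μ hμ => hcomm _ _ hm hμ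
  have hcAA : ∀ a b, Commute (A a) (A b) := fun a b =>
    (hcA (A a) (fun μ hμ => (hcA (R μ) (fun ν hν => hcomm _ _ hμ hν) a).symm) b)
  set B2 : X := m • K (m • K g - g) - (m • K g - g) with hB2
  have hRn : ∀ n x, ‖R (l n) x‖ ≤ ‖x‖ / (n + 1) := by
    intro n x
    have h1 : ‖R (l n)‖ ≤ 1 / ((n : ℝ) + 1) := by
      refine (hnorm _ (hlM n)).trans ?_
      have : (n : ℝ) + 1 ≤ l n - M := by simp only [hl]; linarith
      gcongr
    calc _ ≤ ‖R (l n)‖ * ‖x‖ := ContinuousLinearMap.le_opNorm _ _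
      _ ≤ 1 / ((n : ℝ) + 1) * ‖x‖ := by gcongr
      _ = _ := by ring
  have herr : ∀ n, A n (K (K g)) = (m • K (K g) - K g) + R (l n) B2 := fun n =>
    yosida_error (hres _ _ (hlM n) hm) g
  set q : ℕ → ℝ → X := fun n t => E n (max t 0) (K (K g)) with hq
  have hqq : ∀ a b t, ‖q a t - q b t‖ ≤ max t 0 * Real.exp (2 * M * max t 0) *
      (‖B2‖ / (a + 1) + ‖B2‖ / (b + 1)) := by
    intro a b t
    have h0 : 0 ≤ max t 0 := le_max_right _ _
    refine (norm_exp_sub_exp_apply_le (hcAA a b) (hEn a) (hEn b) (K (K g)) h0).trans ?_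
    gcongr
    rw [herr a, herr b, add_sub_add_left_eq_sub]
    exact (norm_sub_le _ _).trans (add_le_add (hRn _ _) (hRn _ _))
  have hlim0 : Tendsto (fun n : ℕ => ‖B2‖ / ((n : ℝ) + 1)) atTop (nhds 0) :=
    by simpa [div_eq_mul_inv] using
      (tendsto_one_div_add_atTop_nhds_zero_nat (𝕜 := ℝ)).const_mul ‖B2‖
  have hcauchy : ∀ t, ∃ y, Tendsto (fun n => q n t) atTop (nhds y) := by
    intro t
    refine cauchySeq_tendsto_of_complete ?_
    refine cauchySeq_of_le_tendsto_0
      (fun n : ℕ => max t 0 * Real.exp (2 * M * max t 0) * (‖B2‖ / (n + 1) + ‖B2‖ / (n + 1)))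
      (fun a b N ha hb => ?_) ?_
    · rw [dist_eq_norm]
      refine (hqq a b t).trans ?_
      have : (0:ℝ) ≤ max t 0 := le_max_right _ _
      gcongr
    · simpa using (hlim0.add hlim0).const_mul (max t 0 * Real.exp (2 * M * max t 0))
  -- `p` is the limit of the orbits `exp(t Aₙ) R(m)² g` of the Yosida approximations, frozen at
  -- their initial value for `t < 0`.
  choose p hp using hcauchy
  have hqp : ∀ n t, ‖q n t - p t‖ ≤ max t 0 * Real.exp (2 * M * max t 0) * (‖B2‖ / (n + 1)) := by
    intro n t
    have h1 : Tendsto (fun b => ‖q n t - q b t‖) atTop (nhds ‖q n t - p t‖) :=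
      ((tendsto_const_nhds).sub (hp t)).norm
    have h2 : Tendsto (fun b : ℕ => max t 0 * Real.exp (2 * M * max t 0) *
        (‖B2‖ / (n + 1) + ‖B2‖ / (b + 1))) atTop
        (nhds (max t 0 * Real.exp (2 * M * max t 0) * (‖B2‖ / (n + 1) + 0))) :=
      (tendsto_const_nhds.add hlim0).const_mul _
    rw [add_zero] at h2
    exact le_of_tendsto_of_tendsto' h1 h2 fun b => hqq n b t
  have hunif : ∀ T0 : ℝ, 0 ≤ T0 → TendstoUniformlyOn q p atTop (Iio T0) := by
    intro T0 hT0
    rw [Metric.tendstoUniformlyOn_iff]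
    intro ε hε
    have h0 : Tendsto (fun n : ℕ => T0 * Real.exp (2 * M * T0) * (‖B2‖ / ((n : ℝ) + 1)))
        atTop (nhds 0) := by simpa using hlim0.const_mul (T0 * Real.exp (2 * M * T0))
    filter_upwards [h0.eventually_lt_const hε] with n hn t ht
    rw [dist_comm, dist_eq_norm]
    refine lt_of_le_of_lt ((hqp n t).trans ?_) hn
    have : max t 0 ≤ T0 := max_le ht.le hT0
    gcongr
  have hloc : TendstoLocallyUniformly q p atTop := by
    rw [← tendstoLocallyUniformlyOn_univ]
    refine tendstoLocallyUniformlyOn_of_forall_exists_nhds fun t _ => ?_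
    refine ⟨Iio (|t| + 1), ?_, hunif _ (by positivity)⟩
    rw [nhdsWithin_univ]
    exact Iio_mem_nhds (by linarith [le_abs_self t])
  have hqc : ∀ n, Continuous (q n) := by
    intro n
    have h1 : Continuous fun t : ℝ => E n t (K (K g)) :=
      continuous_iff_continuousAt.2 fun t =>
        (hasDerivAt_exp_smul_apply (A n) (K (K g)) t).continuousAt
    exact h1.comp (continuous_id.max continuous_const)
  refine ⟨p, hloc.continuous (Frequently.of_forall hqc), ?_, ?_, ?_⟩
  · refine tendsto_nhds_unique (hp 0) ?_
    simp [hq, hE, NormedSpace.exp_zero]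
  · intro t
    refine tendsto_nhds_unique ((T.continuous.tendsto _).comp (hp t)) ?_
    refine (hp t).congr fun n => ?_
    have hTK : ∀ x, T (K x) = K (T x) := fun x =>
      congrArg (fun U : X →L[ℝ] X => U x) (hT m hm).eq
    simp only [hq, Function.comp_apply]
    rw [← hcE T hT, hTK, hTK, hg]
  · intro t ht
    -- On `(0, ∞)` the derivative of `K qₙ` is `(m K - 1) qₙ` up to an `O(1/n)` error.
    have hder : ∀ n, ∀ s ∈ Ioi (0:ℝ), HasDerivAt (fun s => K (q n s))
        ((m • K (q n s) - q n s) + K (E n (max s 0) (R (l n) B2))) s := by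
      intro n s hs
      have h1 := K.hasFDerivAt.comp_hasDerivAt s
        (hasDerivAt_exp_smul_apply (A n) (K (K g)) s)
      have h2 : (fun s => K (q n s)) =ᶠ[nhds s]
          K ∘ (fun s => NormedSpace.exp (s • A n) (K (K g))) := by
        filter_upwards [Ioi_mem_nhds hs] with s' hs'
        simp [hq, hE, max_eq_left (le_of_lt (show (0:ℝ) < s' from hs'))]
      refine (h1.congr_of_eventuallyEq h2).congr_deriv ?_
      simp only [hq, max_eq_left (le_of_lt (show (0:ℝ) < s from hs))]
      rw [herr n, map_add, map_add, map_sub, map_smul, map_sub, map_smul]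
      change m • K (E n s (K (K g))) - K (E n s (K g)) + K (E n s _) = _
      rw [← hcE K hcK n s (K g)]
    have herr0 : TendstoLocallyUniformlyOn
        (fun n s => (m • K (q n s) - q n s) + K (E n (max s 0) (R (l n) B2)))
        (fun s => m • K (p s) - p s) atTop (Ioi 0) := by
      refine tendstoLocallyUniformlyOn_of_forall_exists_nhds fun t ht => ?_
      have ht' : (0:ℝ) < t := ht
      refine ⟨Iio (t + 1), mem_nhdsWithin_of_mem_nhds (Iio_mem_nhds (by linarith)), ?_⟩
      have hu := hunif (t + 1) (by linarith)
      have hlin := (m • K - 1 : X →L[ℝ] X).uniformContinuous.comp_tendstoUniformlyOn hu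
      have hz : TendstoUniformlyOn (fun (n : ℕ) s => K (E n (max s 0) (R (l n) B2)))
          (fun _ => (0 : X)) atTop (Iio (t + 1)) := by
        rw [Metric.tendstoUniformlyOn_iff]
        intro ε hε
        have h0 : Tendsto (fun n : ℕ => ‖K‖ * Real.exp (2 * M * (t + 1)) *
            (‖B2‖ / ((n : ℝ) + 1))) atTop (nhds 0) := by
          simpa using hlim0.const_mul (‖K‖ * Real.exp (2 * M * (t + 1)))
        filter_upwards [h0.eventually_lt_const hε] with n hn s hs
        rw [dist_zero_left]
        refine lt_of_le_of_lt ?_ hn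
        have hmx : max s 0 ≤ t + 1 := max_le (le_of_lt hs) (by linarith)
        calc _ ≤ ‖K‖ * (‖E n (max s 0)‖ * ‖R (l n) B2‖) :=
              (K.le_opNorm _).trans (by gcongr; exact ContinuousLinearMap.le_opNorm _ _)
          _ ≤ ‖K‖ * (Real.exp (2 * M * (t + 1)) * (‖B2‖ / ((n : ℝ) + 1))) := by
              gcongr
              · exact (hEn n _ (le_max_right _ _)).trans (by gcongr)
              · exact hRn _ _
          _ = _ := by ring
      have := hlin.add hz
      simpa [Function.comp_def, Pi.add_def] using this
    exact hasDerivAt_of_tendstoLocallyUniformlyOn isOpen_Ioi herr0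
      (Eventually.of_forall hder)
      (fun s _ => (K.continuous.tendsto _).comp (hp s)) ht

end HilleYosida

/-! ### Resolvent of `κ ∂ᵧᵧ - V` on bounded continuous functions -/

/-- The Banach space of bounded continuous functions `ℝ → ℂ` with the supremum norm. -/
abbrev BC := BoundedContinuousFunction ℝ ℂ

/-- Bounded solutions of `f' + a f = g` satisfy `‖f‖ ≤ ‖g‖ / a`: integrate `(e^{ay} f)' = e^{ay} g`
from `-∞`. -/
lemma norm_le_of_forward {a : ℝ} (ha : 0 < a) {f g : BC}
    (h : ∀ y, HasDerivAt f (g y - a * f y) y) : ‖f‖ ≤ ‖g‖ / a := by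
  refine (BoundedContinuousFunction.norm_le (by positivity)).2 fun y => ?_
  have hexp : ∀ x : ℝ, HasDerivAt (fun x : ℝ => Real.exp (a * x)) (a * Real.exp (a * x)) x := by
    intro x
    have := ((hasDerivAt_id x).const_mul a).exp
    simpa [mul_comm] using this
  have hF : ∀ x, HasDerivAt (fun x : ℝ => Real.exp (a * x) • f x) (Real.exp (a * x) • g x) x := by
    intro x
    refine ((hexp x).smul (h x)).congr_deriv ?_
    simp only [Complex.real_smul, Complex.ofReal_mul]
    ring
  have key : ∀ z ≤ y, Real.exp (a * y) * ‖f y‖ ≤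
      Real.exp (a * z) * ‖f‖ + ‖g‖ / a * (Real.exp (a * y) - Real.exp (a * z)) := by
    intro z hz
    have := image_norm_le_of_norm_deriv_right_le_deriv_boundary (a := z) (b := y)
      (f := fun x : ℝ => Real.exp (a * x) • f x)
      (f' := fun x => Real.exp (a * x) • g x)
      (B := fun x => Real.exp (a * z) * ‖f‖ + ‖g‖ / a * (Real.exp (a * x) - Real.exp (a * z)))
      (B' := fun x => ‖g‖ / a * (a * Real.exp (a * x)))
      (fun x _ => (hF x).continuousAt.continuousWithinAt)
      (fun x _ => (hF x).hasDerivWithinAt)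
      (by
        rw [norm_smul, Real.norm_of_nonneg (Real.exp_pos _).le, sub_self, mul_zero, add_zero]
        gcongr
        exact f.norm_coe_le_norm z)
      (fun x => (((hexp x).sub_const _).const_mul _).const_add _)
      (fun x _ => by
        rw [norm_smul, Real.norm_of_nonneg (Real.exp_pos _).le]
        have := g.norm_coe_le_norm x
        have h2 : ‖g‖ / a * (a * Real.exp (a * x)) = Real.exp (a * x) * ‖g‖ := by
          field_simp
        rw [h2]
        gcongr)
      (right_mem_Icc.2 hz)
    simpa only [norm_smul, Real.norm_of_nonneg (Real.exp_pos _).le] using this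
  have h0 : Tendsto (fun z : ℝ => Real.exp (a * z)) atBot (nhds 0) :=
    Real.tendsto_exp_atBot.comp (tendsto_id.const_mul_atBot ha)
  have hlim : Tendsto (fun z : ℝ => Real.exp (a * z) * ‖f‖ +
      ‖g‖ / a * (Real.exp (a * y) - Real.exp (a * z))) atBot
      (nhds (0 * ‖f‖ + ‖g‖ / a * (Real.exp (a * y) - 0))) :=
    (h0.mul_const _).add ((tendsto_const_nhds.sub h0).const_mul _)
  have := ge_of_tendsto hlim ((eventually_le_atBot y).mono key)
  rw [zero_mul, zero_add, sub_zero, mul_comm (‖g‖ / a)] at this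
  exact le_of_mul_le_mul_left this (Real.exp_pos _)

lemma exists_forward {a : ℝ} (ha : 0 < a) (g : BC) :
    ∃ f : BC, ∀ y, HasDerivAt f (g y - a * f y) y := by
  have hintble : ∀ y, IntegrableOn (fun z : ℝ => Real.exp (a * z) • g z) (Iic y) := by
    intro y
    refine ((integrableOn_exp_mul_Iic ha y).smul_const ‖g‖).mono'
      (by fun_prop) (Eventually.of_forall fun z => ?_)
    rw [norm_smul, Real.norm_of_nonneg (Real.exp_pos _).le, smul_eq_mul]
    gcongr
    exact g.norm_coe_le_norm z
  let F : ℝ → ℂ := fun y => Real.exp (-(a * y)) • ∫ z in Iic y, Real.exp (a * z) • g z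
  have hI : ∀ y, HasDerivAt (fun y => ∫ z in Iic y, Real.exp (a * z) • g z)
      (Real.exp (a * y) • g y) y := by
    intro y
    have hc : Continuous fun z : ℝ => Real.exp (a * z) • g z := by fun_prop
    have h1 := (intervalIntegral.integral_hasDerivAt_right (hc.intervalIntegrable 0 y)
      hc.stronglyMeasurable.stronglyMeasurableAtFilter hc.continuousAt).const_add
      (∫ z in Iic (0:ℝ), Real.exp (a * z) • g z)
    refine h1.congr_of_eventuallyEq (Eventually.of_forall fun x => ?_)
    simp only
    rw [← intervalIntegral.integral_Iic_sub_Iic (hintble 0) (hintble x)]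
    abel
  have hF : ∀ y, HasDerivAt F (g y - a * F y) y := by
    intro y
    have he : HasDerivAt (fun y : ℝ => Real.exp (-(a * y))) (Real.exp (-(a * y)) * (-a)) y := by
      have := (((hasDerivAt_id y).const_mul a).neg).exp
      simpa using this
    refine (he.smul (hI y)).congr_deriv ?_
    have h1 : (Real.exp (-(a * y)) : ℂ) * (Real.exp (a * y) : ℂ) = 1 := by
      rw [← Complex.ofReal_mul, ← Real.exp_add]; simp
    simp only [F, Complex.real_smul, Complex.ofReal_mul, Complex.ofReal_neg]
    linear_combination g y * h1
  have hb : ∀ y, ‖F y‖ ≤ ‖g‖ / a := by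
    intro y
    have h1 : ‖∫ z in Iic y, Real.exp (a * z) • g z‖ ≤ ∫ z in Iic y, Real.exp (a * z) * ‖g‖ := by
      refine norm_integral_le_of_norm_le ((integrableOn_exp_mul_Iic ha y).mul_const ‖g‖)
        (Eventually.of_forall fun z => ?_)
      rw [norm_smul, Real.norm_of_nonneg (Real.exp_pos _).le]
      gcongr
      exact g.norm_coe_le_norm z
    rw [integral_mul_const, integral_exp_mul_Iic ha] at h1
    calc ‖F y‖ = Real.exp (-(a * y)) * ‖∫ z in Iic y, Real.exp (a * z) • g z‖ := by
          simp only [F]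
          rw [norm_smul, Real.norm_of_nonneg (Real.exp_pos _).le]
      _ ≤ Real.exp (-(a * y)) * (Real.exp (a * y) / a * ‖g‖) := by gcongr
      _ = ‖g‖ / a := by
          have : Real.exp (-(a * y)) * Real.exp (a * y) = 1 := by
            rw [← Real.exp_add]; simp
          field_simp
          linear_combination ‖g‖ * this
  exact ⟨BoundedContinuousFunction.ofNormedAddCommGroup F
    (continuous_iff_continuousAt.2 fun y => (hF y).continuousAt) _ hb, hF⟩

/-- Reflection `f ↦ f(-·)`. -/
def reflectBC (f : BC) : BC := f.compContinuous ⟨fun y => -y, continuous_neg⟩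

lemma reflectBC_apply (f : BC) (y : ℝ) : reflectBC f y = f (-y) := rfl

lemma norm_reflectBC_le (f : BC) : ‖reflectBC f‖ ≤ ‖f‖ :=
  (BoundedContinuousFunction.norm_le (norm_nonneg _)).2 fun y => f.norm_coe_le_norm (-y)

lemma norm_le_of_backward {a : ℝ} (ha : 0 < a) {f g : BC}
    (h : ∀ y, HasDerivAt f (a * f y - g y) y) : ‖f‖ ≤ ‖g‖ / a := by
  have h1 : ∀ y, HasDerivAt (reflectBC f) (reflectBC g y - a * reflectBC f y) y := by
    intro y
    refine ((h (-y)).scomp y (hasDerivAt_neg y)).congr_deriv ?_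
    simp [reflectBC_apply]
  have h2 : ‖f‖ ≤ ‖reflectBC f‖ :=
    (BoundedContinuousFunction.norm_le (norm_nonneg _)).2 fun y => by
      simpa [reflectBC_apply] using (reflectBC f).norm_coe_le_norm (-y)
  refine h2.trans ((norm_le_of_forward ha h1).trans ?_)
  gcongr
  exact norm_reflectBC_le g

lemma exists_backward {a : ℝ} (ha : 0 < a) (g : BC) :
    ∃ f : BC, ∀ y, HasDerivAt f (a * f y - g y) y := by
  obtain ⟨f, hf⟩ := exists_forward ha (reflectBC g)
  refine ⟨reflectBC f, fun y => ?_⟩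
  refine ((hf (-y)).scomp y (hasDerivAt_neg y)).congr_deriv ?_
  simp [reflectBC_apply]

/-- `φ` (with derivative `φ₁`) solves the resolvent equation `μ φ - (κ φ'' - V φ) = g`. -/
def SolvesResolvent (κ : ℝ) (V : BC) (μ : ℝ) (g φ φ₁ : BC) : Prop :=
  (∀ y, HasDerivAt φ (φ₁ y) y) ∧ ∀ y, HasDerivAt φ₁ ((μ * φ y + V y * φ y - g y) / κ) y

lemma SolvesResolvent.add_smul {κ μ : ℝ} {V g φ φ₁ g' φ' φ₁' : BC}
    (h : SolvesResolvent κ V μ g φ φ₁) (h' : SolvesResolvent κ V μ g' φ' φ₁') (c : ℝ) :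
    SolvesResolvent κ V μ (g + c • g') (φ + c • φ') (φ₁ + c • φ₁') := by
  refine ⟨fun y => ?_, fun y => ?_⟩
  · simpa using! (h.1 y).add ((h'.1 y).const_smul c)
  · refine ((h.2 y).add ((h'.2 y).const_smul c)).congr_deriv ?_
    simp only [BoundedContinuousFunction.coe_add, BoundedContinuousFunction.coe_smul, Pi.add_apply,
      Complex.real_smul]
    ring

/-- The factorization `a² - ∂² = (a - ∂)(a + ∂)` reduces the bound to the first-order ones. -/
lemma norm_le_of_solves_free {κ μ : ℝ} (hκ : 0 < κ) (hμ : 0 < μ) {g φ φ₁ : BC}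
    (h : SolvesResolvent κ 0 μ g φ φ₁) : ‖φ‖ ≤ ‖g‖ / μ := by
  set a := √(μ / κ) with ha
  have ha0 : 0 < a := Real.sqrt_pos.2 (by positivity)
  have ha2 : a ^ 2 * κ = μ := by rw [ha, Real.sq_sqrt (by positivity)]; field_simp
  have ha2' : (a : ℂ) ^ 2 * κ = μ := by exact_mod_cast ha2
  have hκc : (κ : ℂ) ≠ 0 := by exact_mod_cast hκ.ne'
  have h1 : ‖φ₁ + a • φ‖ ≤ ‖κ⁻¹ • g‖ / a := by
    refine norm_le_of_backward ha0 fun y => ?_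
    refine ((h.2 y).add ((h.1 y).const_smul a)).congr_deriv ?_
    simp only [BoundedContinuousFunction.coe_add, BoundedContinuousFunction.coe_smul, Pi.add_apply,
      Complex.real_smul, BoundedContinuousFunction.coe_zero, Pi.zero_apply, Complex.ofReal_inv]
    field_simp
    linear_combination (-φ y) * ha2'
  have h2 : ‖φ‖ ≤ ‖φ₁ + a • φ‖ / a := by
    refine norm_le_of_forward ha0 fun y => ?_
    refine (h.1 y).congr_deriv ?_
    simp
  rw [norm_smul, norm_inv, Real.norm_of_nonneg hκ.le] at h1
  calc ‖φ‖ ≤ ‖φ₁ + a • φ‖ / a := h2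
    _ ≤ κ⁻¹ * ‖g‖ / a / a := by gcongr
    _ = ‖g‖ / μ := by rw [← ha2]; field_simp

lemma exists_solves_free {κ μ : ℝ} (hκ : 0 < κ) (hμ : 0 < μ) (g : BC) :
    ∃ φ φ₁ : BC, SolvesResolvent κ 0 μ g φ φ₁ := by
  set a := √(μ / κ) with ha
  have ha0 : 0 < a := Real.sqrt_pos.2 (by positivity)
  have ha2 : a ^ 2 * κ = μ := by rw [ha, Real.sq_sqrt (by positivity)]; field_simp
  have ha2' : (a : ℂ) ^ 2 * κ = μ := by exact_mod_cast ha2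
  have hκc : (κ : ℂ) ≠ 0 := by exact_mod_cast hκ.ne'
  obtain ⟨ψ, hψ⟩ := exists_backward ha0 (κ⁻¹ • g)
  obtain ⟨φ, hφ⟩ := exists_forward ha0 ψ
  refine ⟨φ, ψ - a • φ, fun y => ?_, fun y => ?_⟩
  · refine (hφ y).congr_deriv ?_
    simp
  · refine ((hψ y).sub ((hφ y).const_smul a)).congr_deriv ?_
    simp only [BoundedContinuousFunction.coe_smul,
      Complex.real_smul, BoundedContinuousFunction.coe_zero, Pi.zero_apply, Complex.ofReal_inv]
    field_simp
    linear_combination (φ y) * ha2'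

lemma SolvesResolvent.free {κ μ : ℝ} {V g φ φ₁ : BC} (h : SolvesResolvent κ V μ g φ φ₁) :
    SolvesResolvent κ 0 μ (g - V * φ) φ φ₁ :=
  ⟨h.1, fun y => (h.2 y).congr_deriv (by simp; ring)⟩

lemma norm_le_of_solves {κ μ : ℝ} (hκ : 0 < κ) {V g φ φ₁ : BC} (hμ : ‖V‖ < μ)
    (h : SolvesResolvent κ V μ g φ φ₁) : ‖φ‖ ≤ ‖g‖ / (μ - ‖V‖) := by
  have hμ0 : 0 < μ := (norm_nonneg V).trans_lt hμ
  have h1 := norm_le_of_solves_free hκ hμ0 h.free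
  rw [le_div_iff₀ hμ0] at h1
  rw [le_div_iff₀ (by linarith)]
  have h2 : ‖g - V * φ‖ ≤ ‖g‖ + ‖V‖ * ‖φ‖ :=
    (norm_sub_le _ _).trans (by gcongr; exact norm_mul_le _ _)
  nlinarith

lemma solves_unique {κ μ : ℝ} (hκ : 0 < κ) {V g φ φ₁ φ' φ₁' : BC} (hμ : ‖V‖ < μ)
    (h : SolvesResolvent κ V μ g φ φ₁) (h' : SolvesResolvent κ V μ g φ' φ₁') : φ = φ' := by
  have h1 := norm_le_of_solves hκ hμ (h.add_smul h' (-1))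
  rw [neg_one_smul, neg_one_smul, ← sub_eq_add_neg, ← sub_eq_add_neg, sub_self, norm_zero,
    zero_div] at h1
  exact sub_eq_zero.1 (norm_eq_zero.1 (le_antisymm h1 (norm_nonneg _)))

/-- Solvability with a bounded potential, by the contraction `φ ↦ R⁰(g - V φ)` with `R⁰` the
free resolvent. -/
lemma exists_solves {κ μ : ℝ} (hκ : 0 < κ) {V : BC} (hμ : ‖V‖ < μ) (g : BC) :
    ∃ φ φ₁ : BC, SolvesResolvent κ V μ g φ φ₁ := by
  have hμ0 : 0 < μ := (norm_nonneg V).trans_lt hμ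
  choose Φ Φ₁ hΦ using fun h : BC => exists_solves_free hκ hμ0 h
  obtain ⟨k, hk⟩ : ∃ k : NNReal, (k : ℝ) = ‖V‖ / μ := ⟨⟨_, by positivity⟩, rfl⟩
  have hlip : LipschitzWith k fun φ : BC => Φ (g - V * φ) := by
    refine LipschitzWith.of_dist_le_mul fun φ ψ => ?_
    have h1 := norm_le_of_solves_free hκ hμ0
      ((hΦ (g - V * φ)).add_smul (hΦ (g - V * ψ)) (-1))
    rw [neg_one_smul, neg_one_smul, ← sub_eq_add_neg, ← sub_eq_add_neg,
      show g - V * φ - (g - V * ψ) = -(V * (φ - ψ)) by ring, norm_neg] at h1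
    rw [dist_eq_norm, dist_eq_norm]
    refine h1.trans ?_
    rw [hk, div_mul_eq_mul_div]
    gcongr
    exact norm_mul_le _ _
  have hcon : ContractingWith k fun φ : BC => Φ (g - V * φ) := by
    refine ⟨?_, hlip⟩
    rw [← NNReal.coe_lt_coe, hk, NNReal.coe_one, div_lt_one hμ0]
    exact hμ
  have hfix : Φ (g - V * hcon.fixedPoint _) = hcon.fixedPoint _ := hcon.fixedPoint_isFixedPt
  set φ := hcon.fixedPoint _
  have hs := hΦ (g - V * φ)
  rw [hfix] at hs
  refine ⟨φ, Φ₁ (g - V * φ), hs.1, fun y => (hs.2 y).congr_deriv ?_⟩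
  simp
  ring

/-- The resolvent `R(μ) = (μ - (κ ∂ᵧᵧ - V))⁻¹` as a family of bounded operators, for `μ > ‖V‖`. -/
lemma exists_resolvent {κ : ℝ} (hκ : 0 < κ) (V : BC) :
    ∃ R : ℝ → BC →L[ℝ] BC, ∀ μ, ‖V‖ < μ →
      ‖R μ‖ ≤ 1 / (μ - ‖V‖) ∧ ∀ g, ∃ φ₁, SolvesResolvent κ V μ g (R μ g) φ₁ := by
  have : ∀ μ : ℝ, ∃ S : BC →L[ℝ] BC, ‖V‖ < μ →
      ‖S‖ ≤ 1 / (μ - ‖V‖) ∧ ∀ g, ∃ φ₁, SolvesResolvent κ V μ g (S g) φ₁ := by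
    intro μ
    by_cases hμ : ‖V‖ < μ
    swap
    · exact ⟨0, fun h => absurd h hμ⟩
    choose Φ Φ₁ hΦ using fun h : BC => exists_solves hκ hμ h
    let L : BC →ₗ[ℝ] BC :=
      { toFun := Φ
        map_add' := fun g h => by
          have := (hΦ g).add_smul (hΦ h) 1
          rw [one_smul, one_smul] at this
          exact solves_unique hκ hμ (hΦ _) this
        map_smul' := fun c g => by
          have h0 : SolvesResolvent κ V μ 0 0 0 :=
            ⟨fun y => hasDerivAt_const y 0, fun y =>
              (hasDerivAt_const y (0:ℂ)).congr_deriv (by simp)⟩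
          have := h0.add_smul (hΦ g) c
          rw [zero_add, zero_add] at this
          exact solves_unique hκ hμ (hΦ _) this }
    refine ⟨L.mkContinuous (1 / (μ - ‖V‖)) fun g => ?_, fun _ => ⟨?_, fun g => ⟨_, hΦ g⟩⟩⟩
    · rw [div_mul_eq_mul_div, one_mul]
      exact norm_le_of_solves hκ hμ (hΦ g)
    · exact L.mkContinuous_norm_le (by have := sub_pos.2 hμ; positivity) _
  choose R hR using this
  exact ⟨R, hR⟩

/-- Translation by one period, `f ↦ f(· + 2π)`. -/
def shiftBC : BC →L[ℝ] BC :=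
  LinearMap.mkContinuous
    { toFun := fun f => f.compContinuous ⟨fun y => y + 2 * π, by fun_prop⟩
      map_add' := fun _ _ => rfl
      map_smul' := fun _ _ => rfl } 1 fun f => by
    rw [one_mul]
    exact (BoundedContinuousFunction.norm_le (norm_nonneg _)).2 fun y =>
      f.norm_coe_le_norm (y + 2 * π)

lemma shiftBC_apply (f : BC) (y : ℝ) : shiftBC f y = f (y + 2 * π) := rfl

lemma shiftBC_eq_iff (f : BC) : shiftBC f = f ↔ ∀ y, f (y + 2 * π) = f y := by
  rw [BoundedContinuousFunction.ext_iff]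
  rfl

/-- For every periodic `C²` function `φ` there are classical solutions of
`∂ₜ f = κ ∂ᵧᵧ f - V f` whose initial datum is arbitrarily close to `φ`. Here `h = ∂ₜ f`. -/
theorem exists_solution_near {κ : ℝ} (hκ : 0 < κ) {V : BC} (hV : ∀ y, V (y + 2 * π) = V y)
    {φ φ₁ φ₂ : BC} (hφ₁ : ∀ y, HasDerivAt φ (φ₁ y) y) (hφ₂ : ∀ y, HasDerivAt φ₁ (φ₂ y) y)
    (hφ : ∀ y, φ (y + 2 * π) = φ y) {ε : ℝ} (hε : 0 < ε) :
    ∃ f h : ℝ → BC, Continuous f ∧ Continuous h ∧ ‖f 0 - φ‖ ≤ ε ∧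
      (∀ t y, f t (y + 2 * π) = f t y) ∧
      (∀ t, ∃ f₁ : BC, (∀ y, HasDerivAt (f t) (f₁ y) y) ∧
        ∀ y, HasDerivAt f₁ ((h t y + V y * f t y) / κ) y) ∧
      ∀ t, 0 < t → HasDerivAt f (h t) t := by
  obtain ⟨R, hR⟩ := exists_resolvent hκ V
  have hκc : (κ : ℂ) ≠ 0 := by exact_mod_cast hκ.ne'
  have hres : ∀ μ ν, ‖V‖ < μ → ‖V‖ < ν → R μ - R ν = (ν - μ) • (R μ * R ν) := by
    intro μ ν hμ hν
    ext1 g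
    obtain ⟨ψ, hψ⟩ := (hR ν hν).2 g
    have h1 : SolvesResolvent κ V μ (g - (ν - μ) • R ν g) (R ν g) ψ :=
      ⟨hψ.1, fun y => (hψ.2 y).congr_deriv (by simp; ring)⟩
    obtain ⟨_, h2⟩ := (hR μ hμ).2 (g - (ν - μ) • R ν g)
    have h3 := solves_unique hκ hμ h2 h1
    rw [map_sub, map_smul] at h3
    change R μ g - R ν g = (ν - μ) • R μ (R ν g)
    exact sub_eq_iff_comm.1 h3
  have hT : ∀ μ, ‖V‖ < μ → Commute shiftBC (R μ) := by
    intro μ hμ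
    change shiftBC * R μ = R μ * shiftBC
    ext1 g
    obtain ⟨ψ, hψ⟩ := (hR μ hμ).2 g
    obtain ⟨_, h2⟩ := (hR μ hμ).2 (shiftBC g)
    have h1 : SolvesResolvent κ V μ (shiftBC g) (shiftBC (R μ g)) (shiftBC ψ) := by
      refine ⟨fun y => (hψ.1 _).comp_add_const y _, fun y => ?_⟩
      refine ((hψ.2 _).comp_add_const y _).congr_deriv ?_
      simp only [shiftBC_apply, hV]
    exact solves_unique hκ hμ h1 h2
  -- The initial datum is `(m R(m))³ φ`. It tends to `φ` as `m → ∞` because `m R(m) φ - φ = R(m) h₀`;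
  -- since `‖m R(m)‖ ≤ 2`, the error is at most `(4 + 2 + 1) ‖R(m) h₀‖`.
  set h₀ : BC := κ • φ₂ - V * φ with hh₀
  set m : ℝ := 2 * ‖V‖ + 1 + 7 * ‖h₀‖ / ε with hm_def
  have hq0 : 0 ≤ 7 * ‖h₀‖ / ε := by positivity
  have hm : ‖V‖ < m := by have := norm_nonneg V; linarith
  have hm0 : 0 < m := (norm_nonneg V).trans_lt hm
  have hdiff : m • R m φ - φ = R m h₀ := by
    have h1 : SolvesResolvent κ V m (m • φ - h₀) φ φ₁ := by
      refine ⟨hφ₁, fun y => (hφ₂ y).congr_deriv ?_⟩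
      simp [hh₀]
      field_simp
    obtain ⟨_, h2⟩ := (hR m hm).2 (m • φ - h₀)
    have h3 := solves_unique hκ hm h2 h1
    rw [map_sub, map_smul] at h3
    exact sub_eq_iff_comm.1 h3
  obtain ⟨p, hpc, hp0, hpT, hpd⟩ := exists_orbit_of_resolvent (norm_nonneg V) R hres
    (fun μ hμ => (hR μ hμ).1) hm shiftBC hT (m ^ 3 • φ)
    (by rw [map_smul, (shiftBC_eq_iff φ).2 hφ])
  refine ⟨fun t => R m (p t), fun t => m • R m (p t) - p t, by fun_prop, by fun_prop, ?_, ?_, ?_,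
    hpd⟩
  · simp only [hp0]
    set S : BC →L[ℝ] BC := m • R m with hS
    have hSn : ∀ x, ‖S x‖ ≤ 2 * ‖x‖ := by
      intro x
      have h1 : ‖S x‖ = m * ‖R m x‖ := by
        rw [hS, smul_apply, norm_smul, Real.norm_of_nonneg hm0.le]
      have h2 : ‖R m x‖ ≤ 1 / (m - ‖V‖) * ‖x‖ :=
        ((R m).le_opNorm x).trans (by gcongr; exact (hR m hm).1)
      have h3 : m * (1 / (m - ‖V‖)) ≤ 2 := by
        rw [mul_one_div, div_le_iff₀ (by linarith)]; linarith
      calc ‖S x‖ ≤ m * (1 / (m - ‖V‖) * ‖x‖) := by rw [h1]; gcongr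
        _ = m * (1 / (m - ‖V‖)) * ‖x‖ := by ring
        _ ≤ 2 * ‖x‖ := by gcongr
    have hS1 : S φ - φ = R m h₀ := hdiff
    have hd : ‖R m h₀‖ ≤ ε / 7 := by
      have h2 : ‖R m h₀‖ ≤ 1 / (m - ‖V‖) * ‖h₀‖ :=
        ((R m).le_opNorm _).trans (by gcongr; exact (hR m hm).1)
      refine h2.trans ?_
      rw [div_mul_eq_mul_div, one_mul, div_le_iff₀ (by linarith)]
      have h4 : 7 * ‖h₀‖ / ε ≤ m - ‖V‖ := by have := norm_nonneg V; linarith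
      rw [div_le_iff₀ hε] at h4
      linarith
    have e : R m (R m (R m (m ^ 3 • φ))) = S (S (S φ)) := by
      simp only [hS, smul_apply, map_smul, smul_smul]
      congr 1
      ring
    rw [e, show S (S (S φ)) - φ = S (S (S φ - φ)) + S (S φ - φ) + (S φ - φ) by
      simp only [map_sub]; abel, hS1]
    calc _ ≤ ‖S (S (R m h₀))‖ + ‖S (R m h₀)‖ + ‖R m h₀‖ := norm_add₃_le
      _ ≤ 2 * (2 * ‖R m h₀‖) + 2 * ‖R m h₀‖ + ‖R m h₀‖ := by
          gcongr
          · exact (hSn _).trans (by gcongr; exact hSn _)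
          · exact hSn _
      _ ≤ ε := by linarith
  · intro t
    rw [← shiftBC_eq_iff]
    have := congrArg (fun U : BC →L[ℝ] BC => U (p t)) (hT m hm).eq
    change shiftBC (R m (p t)) = R m (shiftBC (p t)) at this
    rw [this, hpT]
  · intro t
    obtain ⟨ψ, hψ⟩ := (hR m hm).2 (p t)
    refine ⟨ψ, hψ.1, fun y => (hψ.2 y).congr_deriv ?_⟩
    simp
    ring

/-! ### The single-mode solution `Re (e^{ix} f(t, y))` -/

/-- The function `Re (e^{ix} f(t, y))`. -/
def modeWave (f : ℝ → BC) (t x y : ℝ) : ℝ :=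
  Real.cos x * (f t y).re - Real.sin x * (f t y).im

/-- `∫₀^{2π} |g|²`. -/
def sqNormBC (g : BC) : ℝ := ∫ y in (0:ℝ)..(2 * π), ‖g y‖ ^ 2

lemma sqNormBC_nonneg (g : BC) : 0 ≤ sqNormBC g :=
  intervalIntegral.integral_nonneg (by positivity) fun _ _ => by positivity

lemma isShearSolution_modeWave {κ δ : ℝ} (hκ : 0 < κ) {u : ℝ → ℝ} {V : BC}
    (hV : ∀ y, V y = ((κ * δ : ℝ) : ℂ) + (u y : ℂ) * Complex.I) {f h : ℝ → BC}
    (hf : Continuous f) (hh : Continuous h) (hper : ∀ t y, f t (y + 2 * π) = f t y)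
    (hyy : ∀ t, ∃ f₁ : BC, (∀ y, HasDerivAt (f t) (f₁ y) y) ∧
        ∀ y, HasDerivAt f₁ ((h t y + V y * f t y) / κ) y)
    (ht : ∀ t, 0 < t → HasDerivAt f (h t) t) :
    IsShearSolution δ κ u (modeWave f) := by
  have hκc : (κ : ℂ) ≠ 0 := by exact_mod_cast hκ.ne'
  have hev : ∀ {w : ℝ → BC}, Continuous w → Continuous fun p : ℝ × ℝ × ℝ => w p.1 p.2.2 :=
    fun hw => (hw.comp continuous_fst).eval (continuous_snd.comp continuous_snd)
  have hre : ∀ {F : ℝ → ℂ} {F' : ℂ} {y : ℝ}, HasDerivAt F F' y →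
      HasDerivAt (fun y => (F y).re) F'.re y := fun h =>
    Complex.reCLM.hasFDerivAt.comp_hasDerivAt _ h
  have him : ∀ {F : ℝ → ℂ} {F' : ℂ} {y : ℝ}, HasDerivAt F F' y →
      HasDerivAt (fun y => (F y).im) F'.im y := fun h =>
    Complex.imCLM.hasFDerivAt.comp_hasDerivAt _ h
  have hwave : ∀ {F : ℝ → ℂ} {F' : ℂ} {y : ℝ} (x : ℝ), HasDerivAt F F' y →
      HasDerivAt (fun y => Real.cos x * (F y).re - Real.sin x * (F y).im)
        (Real.cos x * F'.re - Real.sin x * F'.im) y := fun x h =>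
    ((hre h).const_mul _).sub ((him h).const_mul _)
  choose f₁ hf₁ hf₂ using hyy
  have dt : ∀ t, 0 < t → ∀ x y, HasDerivAt (fun s => modeWave f s x y)
      (Real.cos x * (h t y).re - Real.sin x * (h t y).im) t := fun t h0 x y =>
    hwave (F := fun s => f s y) x (by
      exact (BoundedContinuousFunction.evalCLM ℝ y : BC →L[ℝ] ℂ).hasFDerivAt.comp_hasDerivAt t
        (ht t h0))
  have dx : ∀ t x y, HasDerivAt (fun a => modeWave f t a y)
      (-Real.sin x * (f t y).re - Real.cos x * (f t y).im) x := fun t x y =>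
    ((Real.hasDerivAt_cos x).mul_const _).sub ((Real.hasDerivAt_sin x).mul_const _)
  have dx' : ∀ t y, deriv (fun a => modeWave f t a y) =
      fun x => -Real.sin x * (f t y).re - Real.cos x * (f t y).im :=
    fun t y => funext fun x => (dx t x y).deriv
  have dxx : ∀ t x y, HasDerivAt (fun a => deriv (fun b => modeWave f t b y) a)
      (-Real.cos x * (f t y).re - -Real.sin x * (f t y).im) x := by
    intro t x y
    simp only [dx']
    exact (((Real.hasDerivAt_sin x).neg).mul_const _).sub ((Real.hasDerivAt_cos x).mul_const _)
  have dy : ∀ t x y, HasDerivAt (fun b => modeWave f t x b)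
      (Real.cos x * (f₁ t y).re - Real.sin x * (f₁ t y).im) y := fun t x y =>
    hwave x (hf₁ t y)
  have dy' : ∀ t x, deriv (fun b => modeWave f t x b) =
      fun y => Real.cos x * (f₁ t y).re - Real.sin x * (f₁ t y).im :=
    fun t x => funext fun y => (dy t x y).deriv
  have dyy : ∀ t x y, HasDerivAt (fun b => deriv (fun c => modeWave f t x c) b)
      (Real.cos x * ((h t y + V y * f t y) / κ).re -
        Real.sin x * ((h t y + V y * f t y) / κ).im) y := by
    intro t x y
    simp only [dy']
    exact hwave x (hf₂ t y)
  have hfe := hev hf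
  have hhe := hev hh
  refine ⟨?_, ?_, ?_, fun t h0 x y => (dt t h0 x y).differentiableAt,
    fun t _ x y => (dx t x y).differentiableAt, fun t _ x y => (dxx t x y).differentiableAt,
    fun t _ x y => (dy t x y).differentiableAt, fun t _ x y => (dyy t x y).differentiableAt,
    ?_, ?_, ?_, ?_⟩
  · refine Continuous.continuousOn ?_
    unfold modeWave
    fun_prop
  · intro t x y
    simp [modeWave]
  · intro t x y
    simp only [modeWave, hper]
  · refine ContinuousOn.congr (f := fun p : ℝ × ℝ × ℝ =>
      Real.cos p.2.1 * (h p.1 p.2.2).re - Real.sin p.2.1 * (h p.1 p.2.2).im) ?_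
      fun p hp => (dt p.1 hp p.2.1 p.2.2).deriv
    exact Continuous.continuousOn (by fun_prop)
  · simp only [(dxx _ _ _).deriv]
    exact Continuous.continuousOn (by fun_prop)
  · simp only [(dyy _ _ _).deriv]
    exact Continuous.continuousOn (by fun_prop)
  · intro t h0 x y
    rw [(dt t h0 x y).deriv, (dx t x y).deriv, (dxx t x y).deriv, (dyy t x y).deriv]
    rw [Complex.div_ofReal_re, Complex.div_ofReal_im, hV y]
    simp
    field_simp
    ring

lemma integral_modeWave (f : ℝ → BC) (t y : ℝ) :
    (∫ x in (0:ℝ)..(2 * π), modeWave f t x y) = 0 := by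
  unfold modeWave
  rw [intervalIntegral.integral_sub (Continuous.intervalIntegrable (by fun_prop) _ _)
    (Continuous.intervalIntegrable (by fun_prop) _ _), intervalIntegral.integral_mul_const,
    intervalIntegral.integral_mul_const, integral_cos, integral_sin]
  simp

lemma l2normSq_modeWave (f : ℝ → BC) (t : ℝ) :
    l2normSq (modeWave f) t = π * sqNormBC (f t) := by
  set a : ℝ → ℝ := fun y => (f t y).re
  set b : ℝ → ℝ := fun y => (f t y).im
  have ha : Continuous a := by fun_prop
  have hb : Continuous b := by fun_prop
  have hin : ∀ x : ℝ, (∫ y in (0:ℝ)..(2 * π), modeWave f t x y ^ 2) =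
      Real.cos x ^ 2 * (∫ y in (0:ℝ)..(2 * π), a y ^ 2)
      + (Real.sin x ^ 2 * (∫ y in (0:ℝ)..(2 * π), b y ^ 2)
      - Real.sin x * Real.cos x * (2 * ∫ y in (0:ℝ)..(2 * π), a y * b y)) := by
    intro x
    simp only [← intervalIntegral.integral_const_mul]
    rw [← intervalIntegral.integral_sub (Continuous.intervalIntegrable (by fun_prop) _ _)
      (Continuous.intervalIntegrable (by fun_prop) _ _),
      ← intervalIntegral.integral_add (Continuous.intervalIntegrable (by fun_prop) _ _)
      (Continuous.intervalIntegrable (by fun_prop) _ _)]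
    refine intervalIntegral.integral_congr fun y _ => ?_
    simp only [modeWave, a, b]
    ring
  have hs : sqNormBC (f t) =
      (∫ y in (0:ℝ)..(2 * π), a y ^ 2) + ∫ y in (0:ℝ)..(2 * π), b y ^ 2 := by
    rw [← intervalIntegral.integral_add (Continuous.intervalIntegrable (by fun_prop) _ _)
      (Continuous.intervalIntegrable (by fun_prop) _ _)]
    refine intervalIntegral.integral_congr fun y _ => ?_
    simp only [← Complex.normSq_eq_norm_sq, Complex.normSq_apply, a, b]
    ring
  unfold l2normSq
  simp only [hin]
  rw [intervalIntegral.integral_add (Continuous.intervalIntegrable (by fun_prop) _ _)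
      (Continuous.intervalIntegrable (by fun_prop) _ _),
    intervalIntegral.integral_sub (Continuous.intervalIntegrable (by fun_prop) _ _)
      (Continuous.intervalIntegrable (by fun_prop) _ _),
    intervalIntegral.integral_mul_const, intervalIntegral.integral_mul_const,
    intervalIntegral.integral_mul_const, integral_cos_sq, integral_sin_sq,
    integral_sin_mul_cos₁, hs]
  simp
  ring

/-! ### Quasimodes bound the decay rate -/

/-- The pairing `∫₀^{2π} f φ`, as a bounded functional of `f`. -/
def pairBC (φ : BC) : BC →L[ℝ] ℂ :=
  LinearMap.mkContinuous
    { toFun := fun f => ∫ y in (0:ℝ)..(2 * π), f y * φ y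
      map_add' := fun f g => by
        rw [← intervalIntegral.integral_add (Continuous.intervalIntegrable (by fun_prop) _ _)
          (Continuous.intervalIntegrable (by fun_prop) _ _)]
        simp only [BoundedContinuousFunction.coe_add, Pi.add_apply, add_mul]
      map_smul' := fun c f => by
        simp only [RingHom.id_apply]
        rw [← intervalIntegral.integral_smul]
        simp only [BoundedContinuousFunction.coe_smul, smul_mul_assoc] }
    (‖φ‖ * (2 * π)) fun f => by
      have := intervalIntegral.norm_integral_le_of_norm_le_const (a := 0) (b := 2 * π)
        (f := fun y => f y * φ y) (C := ‖f‖ * ‖φ‖) fun y _ => by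
          rw [norm_mul]
          gcongr
          · exact f.norm_coe_le_norm y
          · exact φ.norm_coe_le_norm y
      rw [sub_zero, abs_of_pos (by positivity)] at this
      calc _ ≤ ‖f‖ * ‖φ‖ * (2 * π) := this
        _ = _ := by ring

lemma pairBC_apply (φ f : BC) : pairBC φ f = ∫ y in (0:ℝ)..(2 * π), f y * φ y := rfl

lemma norm_pairBC_le (φ f : BC) : ‖pairBC φ f‖ ≤ √(sqNormBC f * sqNormBC φ) := by
  rw [pairBC_apply]
  set P := ∫ y in (0:ℝ)..(2 * π), ‖f y‖ * ‖φ y‖ with hP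
  have h1 : ‖∫ y in (0:ℝ)..(2 * π), f y * φ y‖ ≤ P := by
    refine (intervalIntegral.norm_integral_le_integral_norm (by positivity)).trans_eq ?_
    simp only [norm_mul, hP]
  -- The quadratic `∫ (s |f| + |φ|)²` in `s` is nonnegative, so its discriminant is nonpositive.
  have hquad : ∀ s : ℝ, 0 ≤ sqNormBC f * (s * s) + 2 * P * s + sqNormBC φ := by
    intro s
    have : sqNormBC f * (s * s) + 2 * P * s + sqNormBC φ =
        ∫ y in (0:ℝ)..(2 * π), (s * ‖f y‖ + ‖φ y‖) ^ 2 := by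
      rw [show 2 * P * s = P * (2 * s) by ring, sqNormBC, sqNormBC, hP,
        ← intervalIntegral.integral_mul_const, ← intervalIntegral.integral_mul_const,
        ← intervalIntegral.integral_add (Continuous.intervalIntegrable (by fun_prop) _ _)
          (Continuous.intervalIntegrable (by fun_prop) _ _),
        ← intervalIntegral.integral_add (Continuous.intervalIntegrable (by fun_prop) _ _)
          (Continuous.intervalIntegrable (by fun_prop) _ _)]
      refine intervalIntegral.integral_congr fun y _ => ?_
      ring
    rw [this]
    exact intervalIntegral.integral_nonneg (by positivity) fun _ _ => by positivity
  have hd := discrim_le_zero hquad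
  rw [discrim] at hd
  refine h1.trans (Real.le_sqrt_of_sq_le ?_)
  linarith

/-- Integration by parts over a period: the pairing with `φ` intertwines `f ↦ κ f'' - V f` with its
formal transpose, which sends `φ` to `Ψ - i u₀ φ`. -/
lemma pairBC_generator {κ : ℝ} (hκ : 0 < κ) {V φ φ₁ φ₂ f f₁ h Ψ : BC} {u₀ : ℝ}
    (hφ₁ : ∀ y, HasDerivAt φ (φ₁ y) y) (hφ₂ : ∀ y, HasDerivAt φ₁ (φ₂ y) y)
    (hφ : ∀ y, φ (y + 2 * π) = φ y) (hf : ∀ y, f (y + 2 * π) = f y)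
    (hf₁ : ∀ y, HasDerivAt f (f₁ y) y)
    (hf₂ : ∀ y, HasDerivAt f₁ ((h y + V y * f y) / κ) y)
    (hΨ : ∀ y, Ψ y = κ * φ₂ y - (V y - u₀ * Complex.I) * φ y) :
    pairBC φ h + u₀ * Complex.I * pairBC φ f = pairBC Ψ f := by
  have hκc : (κ : ℂ) ≠ 0 := by exact_mod_cast hκ.ne'
  have hper : ∀ {g g₁ : BC}, (∀ y, g (y + 2 * π) = g y) → (∀ y, HasDerivAt g (g₁ y) y) →
      ∀ y, g₁ (y + 2 * π) = g₁ y := by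
    intro g g₁ hg hg₁ y
    have h1 := (hg₁ (y + 2 * π)).comp_add_const y (2 * π)
    simp only [hg] at h1
    exact h1.unique (hg₁ y)
  have hG : ∀ y, HasDerivAt (fun y => κ * (f₁ y * φ y - f y * φ₁ y))
      (h y * φ y + u₀ * Complex.I * (f y * φ y) - f y * Ψ y) y := by
    intro y
    have := (((hf₂ y).mul (hφ₁ y)).sub ((hf₁ y).mul (hφ₂ y))).const_mul (κ : ℂ)
    refine this.congr_deriv ?_
    rw [hΨ]
    field_simp
    ring
  have hintble := intervalIntegral.integral_eq_sub_of_hasDerivAt (a := 0) (b := 2 * π)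
    (fun y _ => hG y) (Continuous.intervalIntegrable (by fun_prop) _ _)
  have e1 := hper hφ hφ₁ 0
  have e2 := hper hf hf₁ 0
  have e3 := hφ 0
  have e4 := hf 0
  rw [zero_add] at e1 e2 e3 e4
  rw [e1, e2, e3, e4, sub_self,
    intervalIntegral.integral_sub (Continuous.intervalIntegrable (by fun_prop) _ _)
      (Continuous.intervalIntegrable (by fun_prop) _ _),
    intervalIntegral.integral_add (Continuous.intervalIntegrable (by fun_prop) _ _)
      (Continuous.intervalIntegrable (by fun_prop) _ _),
    intervalIntegral.integral_const_mul] at hintble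
  rw [pairBC_apply, pairBC_apply, pairBC_apply]
  exact sub_eq_zero.mp hintble

/-- A curve that tends to `0` and whose speed is at most `D e^{-rt/2}` starts within `2D/r`
of the origin. -/
lemma mul_norm_le_of_decay {w w' : ℝ → ℂ} {D r : ℝ} (hr : 0 < r) (hw : Continuous w)
    (hw' : ∀ t, 0 < t → HasDerivAt w (w' t) t)
    (hD : ∀ t, 0 < t → ‖w' t‖ ≤ D * Real.exp (-(r / 2) * t))
    (hlim : Tendsto w atTop (nhds 0)) : r * ‖w 0‖ ≤ 2 * D := by
  have hD0 : 0 ≤ D := by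
    have := (norm_nonneg _).trans (hD 1 one_pos)
    exact nonneg_of_mul_nonneg_left this (Real.exp_pos _)
  have key : ∀ a, 0 < a → ∀ T, a ≤ T → ‖w T - w a‖ ≤ 2 * D / r := by
    intro a ha T haT
    have hB : ∀ x, HasDerivAt
        (fun x => 2 * D / r * (Real.exp (-(r / 2) * a) - Real.exp (-(r / 2) * x)))
        (D * Real.exp (-(r / 2) * x)) x := by
      intro x
      have := ((((hasDerivAt_id x).const_mul (-(r / 2))).exp).const_sub
        (Real.exp (-(r / 2) * a))).const_mul (2 * D / r)
      refine this.congr_deriv ?_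
      simp only [id]
      field_simp
    have := image_norm_le_of_norm_deriv_right_le_deriv_boundary (a := a) (b := T)
      (f := fun x => w x - w a) (f' := w')
      ((hw.sub continuous_const).continuousOn)
      (fun x hx => ((hw' x (ha.trans_le hx.1)).sub_const (w a)).hasDerivWithinAt)
      (by simp) hB (fun x hx => hD x (ha.trans_le hx.1)) (x := T) ⟨haT, le_rfl⟩
    refine this.trans ?_
    have h1 : Real.exp (-(r / 2) * a) ≤ 1 := Real.exp_le_one_iff.mpr (by nlinarith)
    have h2 := Real.exp_pos (-(r / 2) * T)
    have h3 : 0 ≤ 2 * D / r := by positivity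
    nlinarith
  have key2 : ∀ a, 0 < a → ‖w a‖ ≤ 2 * D / r := by
    intro a ha
    have h1 : Tendsto (fun T => ‖w T - w a‖) atTop (nhds ‖(0 : ℂ) - w a‖) :=
      (hlim.sub_const _).norm
    rw [zero_sub, norm_neg] at h1
    exact le_of_tendsto h1 ((eventually_ge_atTop a).mono (key a ha))
  have h0 : ‖w 0‖ ≤ 2 * D / r := by
    refine le_of_tendsto (x := nhdsWithin 0 (Ioi 0)) (hw.norm.continuousWithinAt).tendsto ?_
    filter_upwards [self_mem_nhdsWithin] with a ha using key2 a ha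
  rw [le_div_iff₀ hr] at h0
  linarith

lemma continuous_sqNormBC : Continuous sqNormBC := by
  unfold sqNormBC
  refine intervalIntegral.continuous_parametric_intervalIntegral_of_continuous' ?_ _ _
  have : Continuous fun p : BC × ℝ => p.1 p.2 := continuous_eval
  exact this.norm.pow 2

/-- If the equation decays at rate `R`, then no real `φ` can be an approximate eigenfunction, with
an imaginary eigenvalue, to within much less than `R`: pairing a solution that starts near `φ` with
`φ` gives a quantity of size `‖φ‖²` that has to reach `0` at speed at most a multiple of
`‖Ψ‖ ‖φ‖ e^{-Rt/2}`. -/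
theorem rate_le_of_quasimode_s1 {κ δ C R u₀ : ℝ} (hκ : 0 < κ) (hR : 0 < R) {u : ℝ → ℝ}
    {V : BC} (hV : ∀ y, V y = ((κ * δ : ℝ) : ℂ) + (u y : ℂ) * Complex.I)
    (hVper : ∀ y, V (y + 2 * π) = V y)
    (hdecay : ∀ ρ : ℝ → ℝ → ℝ → ℝ, IsShearSolution δ κ u ρ →
      (∀ y : ℝ, (∫ x in (0:ℝ)..(2 * π), ρ 0 x y) = 0) →
      ∀ t : ℝ, 0 ≤ t → l2normSq ρ t ≤ C * Real.exp (-R * t) * l2normSq ρ 0)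
    {φ φ₁ φ₂ Ψ : BC} (hφ₁ : ∀ y, HasDerivAt φ (φ₁ y) y) (hφ₂ : ∀ y, HasDerivAt φ₁ (φ₂ y) y)
    (hφ : ∀ y, φ (y + 2 * π) = φ y) (hreal : ∀ y, (φ y).im = 0)
    (hΨ : ∀ y, Ψ y = κ * φ₂ y - (V y - u₀ * Complex.I) * φ y) :
    R * sqNormBC φ ≤ 2 * √(C * sqNormBC φ * sqNormBC Ψ) := by
  -- The closed condition on `g` that holds for initial data `g` arbitrarily near `φ`.
  let S : Set BC := {g | R * ‖pairBC φ g‖ ≤ 2 * √(C * sqNormBC g * sqNormBC Ψ)}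
  have hS : IsClosed S := by
    refine isClosed_le ((pairBC φ).continuous.norm.const_mul R) ?_
    have := continuous_sqNormBC
    fun_prop
  have hmem : φ ∈ S := by
    rw [← hS.closure_eq, Metric.mem_closure_iff]
    intro ε hε
    obtain ⟨f, h, hfc, hhc, hf0, hfper, hyy, ht⟩ :=
      exists_solution_near hκ hVper hφ₁ hφ₂ hφ (half_pos hε)
    refine ⟨f 0, ?_, by rw [dist_comm, dist_eq_norm]; linarith⟩
    have hen : ∀ t, 0 ≤ t → sqNormBC (f t) ≤ C * Real.exp (-R * t) * sqNormBC (f 0) := by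
      intro t h0
      have := hdecay _ (isShearSolution_modeWave hκ hV hfc hhc hfper hyy ht)
        (integral_modeWave f 0) t h0
      rw [l2normSq_modeWave, l2normSq_modeWave] at this
      have hpi := Real.pi_pos
      nlinarith
    have hhalf : ∀ t, Real.exp (-R * t) = Real.exp (-(R / 2) * t) ^ 2 := by
      intro t
      rw [← Real.exp_nat_mul]
      congr 1
      push_cast
      ring
    have hpair : ∀ χ : BC, ∀ t, 0 ≤ t →
        ‖pairBC χ (f t)‖ ≤ √(C * sqNormBC (f 0) * sqNormBC χ) * Real.exp (-(R / 2) * t) := by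
      intro χ t h0
      refine (norm_pairBC_le χ (f t)).trans ?_
      rw [← Real.sqrt_sq (Real.exp_pos (-(R / 2) * t)).le, ← hhalf,
        ← Real.sqrt_mul' _ (Real.exp_pos _).le]
      refine Real.sqrt_le_sqrt ?_
      calc _ ≤ C * Real.exp (-R * t) * sqNormBC (f 0) * sqNormBC χ :=
            mul_le_mul_of_nonneg_right (hen t h0) (sqNormBC_nonneg χ)
        _ = _ := by ring
    let e : ℝ → ℂ := fun t => Complex.exp (t * (u₀ * Complex.I))
    have he : ∀ t, HasDerivAt e (e t * (u₀ * Complex.I)) t := by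
      intro t
      have := (((hasDerivAt_id t).ofReal_comp).mul_const (u₀ * Complex.I : ℂ)).cexp
      simpa [e] using this
    have hen1 : ∀ t, ‖e t‖ = 1 := by
      intro t
      have : (t * (u₀ * Complex.I) : ℂ) = ((t * u₀ : ℝ) : ℂ) * Complex.I := by push_cast; ring
      simp only [e, this, Complex.norm_exp_ofReal_mul_I]
    have hec : Continuous e := by fun_prop
    have := mul_norm_le_of_decay (w := fun t => e t * pairBC φ (f t))
      (w' := fun t => e t * pairBC Ψ (f t)) (D := √(C * sqNormBC (f 0) * sqNormBC Ψ)) hR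
      (hec.mul ((pairBC φ).continuous.comp hfc)) ?_ ?_ ?_
    · simpa [S, hen1] using this
    · intro t h0
      obtain ⟨f₁, hf₁, hf₂⟩ := hyy t
      refine ((he t).mul ((pairBC φ).hasFDerivAt.comp_hasDerivAt t (ht t h0))).congr_deriv ?_
      rw [← pairBC_generator hκ hφ₁ hφ₂ hφ (hfper t) hf₁ hf₂ hΨ]
      simp only [Function.comp]
      ring
    · intro t h0
      rw [norm_mul, hen1, one_mul]
      exact hpair Ψ t h0.le
    · refine squeeze_zero_norm' (a := fun t =>
        √(C * sqNormBC (f 0) * sqNormBC φ) * Real.exp (-(R / 2) * t)) ?_ ?_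
      · filter_upwards [eventually_ge_atTop 0] with t h0
        rw [norm_mul, hen1, one_mul]
        exact hpair φ t h0
      · set A := √(C * sqNormBC (f 0) * sqNormBC φ)
        rw [← mul_zero A]
        refine Tendsto.const_mul _ (Real.tendsto_exp_atBot.comp ?_)
        exact tendsto_id.const_mul_atTop_of_neg (by linarith)
  have hself : pairBC φ φ = (sqNormBC φ : ℂ) := by
    rw [pairBC_apply, sqNormBC, ← intervalIntegral.integral_ofReal]
    refine intervalIntegral.integral_congr fun y _ => ?_
    rw [← Complex.normSq_eq_norm_sq, Complex.normSq_apply]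
    apply Complex.ext <;> simp [hreal]
  have := hmem
  simp only [S, mem_ofPred_eq, hself, Complex.norm_real, Real.norm_eq_abs,
    abs_of_nonneg (sqNormBC_nonneg φ)] at this
  exact this

/-! ### A bump concentrated at scale `√s` around `π` -/

lemma exists_BC_eq {g : ℝ → ℂ} (hg : Continuous g) (hper : ∀ y, g (y + 2 * π) = g y) :
    ∃ G : BC, ∀ y, G y = g y := by
  have hb := Function.Periodic.isBounded_of_continuous (f := g) (c := 2 * π) hper
    (by positivity) hg
  obtain ⟨M, hM⟩ := isBounded_iff_forall_norm_le.mp hb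
  exact ⟨BoundedContinuousFunction.ofNormedAddCommGroup g hg M fun y => hM _ ⟨y, rfl⟩,
    fun _ => rfl⟩

lemma hasDerivAt_max_zero_pow (n : ℕ) (t : ℝ) :
    HasDerivAt (fun t : ℝ => max t 0 ^ (n + 2)) ((n + 2) * max t 0 ^ (n + 1)) t := by
  rcases lt_trichotomy t 0 with h | rfl | h
  · rw [max_eq_right h.le, zero_pow (by simp), mul_zero]
    refine (hasDerivAt_const t (0 : ℝ)).congr_of_eventuallyEq ?_
    filter_upwards [eventually_lt_nhds h] with x hx
    simp [max_eq_right hx.le]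
  · rw [hasDerivAt_iff_tendsto_slope]
    have h1 : Tendsto (fun t : ℝ => max t 0 ^ (n + 1)) (nhdsWithin 0 {0}ᶜ)
        (nhds ((n + 2) * max (0 : ℝ) 0 ^ (n + 1))) := by
      have h2 : Continuous fun t : ℝ => max t 0 ^ (n + 1) := by fun_prop
      have := (h2.tendsto 0).mono_left (nhdsWithin_le_nhds (s := {0}ᶜ))
      simpa using this
    refine h1.congr' ?_
    filter_upwards [self_mem_nhdsWithin] with x hx
    have hx : x ≠ 0 := hx
    rw [slope_def_field]
    rcases le_total x 0 with h | h
    · simp [max_eq_right h]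
    · simp only [max_eq_left h, max_self]
      rw [sub_zero, zero_pow (by simp), sub_zero, pow_succ x (n + 1), mul_div_cancel_right₀ _ hx]
  · rw [max_eq_left h.le]
    refine HasDerivAt.congr_of_eventuallyEq (f := fun t : ℝ => t ^ (n + 2)) ?_ ?_
    · simpa using hasDerivAt_pow (n + 2) t
    · filter_upwards [eventually_gt_nhds h] with x hx
      simp [max_eq_left (le_of_lt hx)]

/-- The test function is `((s - 1 - cos y)₊)³`, which is `C²`, has size `s³` and lives at scale
`√s` around `y = π`. -/
theorem exists_bump {s : ℝ} (hs0 : 0 < s) (hs1 : s ≤ 1) : ∃ φ φ₁ φ₂ : BC,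
    (∀ y, HasDerivAt φ (φ₁ y) y) ∧ (∀ y, HasDerivAt φ₁ (φ₂ y) y) ∧
    (∀ y, φ (y + 2 * π) = φ y) ∧ (∀ y, φ₂ (y + 2 * π) = φ₂ y) ∧ (∀ y, (φ y).im = 0) ∧
    0 < sqNormBC φ ∧ s ^ 2 * sqNormBC φ₂ ≤ 43200 * sqNormBC φ ∧
    ∀ y ∈ Icc 0 (2 * π), φ y ≠ 0 → |y - π| ≤ 3 * √s := by
  set X : ℝ → ℝ := fun y => max (s - 1 - Real.cos y) 0 with hX
  have hXc : Continuous X := by fun_prop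
  have hX0 : ∀ y, 0 ≤ X y := fun y => le_max_right _ _
  have hXs : ∀ y, X y ≤ s := fun y => max_le (by linarith [Real.neg_one_le_cos y]) hs0.le
  have hXper : ∀ y, X (y + 2 * π) = X y := fun y => by simp [hX]
  have hdX : ∀ (n : ℕ) y, HasDerivAt (fun y => X y ^ (n + 2))
      ((n + 2) * X y ^ (n + 1) * Real.sin y) y := by
    intro n y
    have h1 : HasDerivAt (fun y => s - 1 - Real.cos y) (Real.sin y) y := by
      simpa using (Real.hasDerivAt_cos y).const_sub (s - 1)
    exact (hasDerivAt_max_zero_pow n (s - 1 - Real.cos y)).comp y h1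
  set g : ℝ → ℝ := fun y => X y ^ 3 with hg
  set g₁ : ℝ → ℝ := fun y => 3 * X y ^ 2 * Real.sin y with hg₁
  set g₂ : ℝ → ℝ := fun y => 6 * X y * Real.sin y ^ 2 + 3 * X y ^ 2 * Real.cos y with hg₂
  have hd1 : ∀ y, HasDerivAt g (g₁ y) y := by
    intro y
    refine (hdX 1 y).congr_deriv ?_
    simp only [hg₁]
    norm_num
  have hd2 : ∀ y, HasDerivAt g₁ (g₂ y) y := by
    intro y
    refine (((hdX 0 y).const_mul 3).mul (Real.hasDerivAt_sin y)).congr_deriv ?_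
    simp only [hg₂]
    norm_num
    ring
  have hgc : Continuous g := by fun_prop
  have hg₂c : Continuous g₂ := by fun_prop
  obtain ⟨φ, hφ⟩ := exists_BC_eq (g := fun y => (g y : ℂ)) (by fun_prop)
    (fun y => by simp only [hg, hXper])
  obtain ⟨φ₁, hφ₁⟩ := exists_BC_eq (g := fun y => (g₁ y : ℂ)) (by fun_prop)
    (fun y => by simp only [hg₁, hXper, Real.sin_add_two_pi])
  have hg₂per : ∀ y, g₂ (y + 2 * π) = g₂ y := fun y => by
    simp only [hg₂, hXper, Real.sin_add_two_pi, Real.cos_add_two_pi]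
  obtain ⟨φ₂, hφ₂⟩ := exists_BC_eq (g := fun y => (g₂ y : ℂ)) (by fun_prop)
    (fun y => by rw [hg₂per])
  have eφ : (φ : ℝ → ℂ) = fun y => (g y : ℂ) := funext hφ
  have eφ₁ : (φ₁ : ℝ → ℂ) = fun y => (g₁ y : ℂ) := funext hφ₁
  have hpi := Real.pi_gt_three
  set q := √s with hq
  have hq0 : 0 < q := Real.sqrt_pos.mpr hs0
  have hqs : q ^ 2 = s := Real.sq_sqrt hs0.le
  have hq1 : q ≤ 1 := Real.sqrt_le_one.mpr hs1
  -- Jordan's inequality `cos z ≤ 1 - 2z²/π²` localises the support.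
  have hsupp : ∀ y ∈ Icc 0 (2 * π), X y ≠ 0 → |y - π| ≤ 3 * q := by
    intro y hy hne
    have hz : |y - π| ≤ π := abs_le.mpr ⟨by linarith [hy.1], by linarith [hy.2]⟩
    have h2 := Real.cos_le_one_sub_mul_cos_sq hz
    rw [Real.cos_sub_pi] at h2
    have h3 : 0 < s - 1 - Real.cos y := by
      by_contra! hcon
      exact hne (max_eq_right hcon)
    have hpi' := Real.pi_lt_d2
    have h4 : 2 / π ^ 2 * (y - π) ^ 2 ≤ s := by linarith
    rw [div_mul_eq_mul_div, div_le_iff₀ (by positivity)] at h4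
    refine abs_le_of_sq_le_sq (?_) (by positivity)
    have h5 : π ^ 2 ≤ 18 := by nlinarith
    rw [mul_pow, hqs]
    nlinarith
  -- Where `X > 0` one has `1 + cos y < s`, hence `sin² y ≤ 2s`.
  have hg₂b : ∀ y, |g₂ y| ≤ 15 * s ^ 2 := by
    intro y
    rcases eq_or_lt_of_le (hX0 y) with h0 | h0
    · simp only [hg₂, ← h0]
      norm_num
      positivity
    · have h1 : 0 < s - 1 - Real.cos y := by
        by_contra! hcon
        exact h0.ne' (max_eq_right hcon)
      have hc := Real.neg_one_le_cos y
      have hc' := Real.cos_le_one y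
      have h2 : Real.sin y ^ 2 ≤ 2 * s := by nlinarith [Real.sin_sq_add_cos_sq y]
      have h3 : X y * Real.sin y ^ 2 ≤ s * (2 * s) :=
        mul_le_mul (hXs y) h2 (by positivity) hs0.le
      have h4 : X y ^ 2 ≤ s ^ 2 := pow_le_pow_left₀ (hX0 y) (hXs y) 2
      have h5 : 0 ≤ X y * Real.sin y ^ 2 := mul_nonneg (hX0 y) (sq_nonneg _)
      have h6 : 0 ≤ X y ^ 2 := sq_nonneg _
      rw [abs_le]
      simp only [hg₂]
      constructor <;> nlinarith
  have hnorm : sqNormBC φ = ∫ y in (0:ℝ)..(2 * π), g y ^ 2 := by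
    refine intervalIntegral.integral_congr fun y _ => ?_
    simp [hφ]
  have hnorm₂ : sqNormBC φ₂ = ∫ y in (0:ℝ)..(2 * π), g₂ y ^ 2 := by
    refine intervalIntegral.integral_congr fun y _ => ?_
    simp only [hφ₂, Complex.norm_real, Real.norm_eq_abs, sq_abs]
  have hlow : 2 * q * (s / 2) ^ 6 ≤ sqNormBC φ := by
    have h1 : (∫ y in (π - q)..(π + q), g y ^ 2) ≤ sqNormBC φ := by
      rw [hnorm]
      refine intervalIntegral.integral_mono_interval (by linarith) (by linarith) (by linarith)
        (Eventually.of_forall fun y => by positivity)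
        (Continuous.intervalIntegrable (by fun_prop) _ _)
    have h2 : (∫ _ in (π - q)..(π + q), (s / 2) ^ 6) ≤ ∫ y in (π - q)..(π + q), g y ^ 2 := by
      refine intervalIntegral.integral_mono_on (by linarith)
        (Continuous.intervalIntegrable (by fun_prop) _ _)
        (Continuous.intervalIntegrable (by fun_prop) _ _) fun y hy => ?_
      have h3 := Real.one_sub_sq_div_two_le_cos (x := y - π)
      rw [Real.cos_sub_pi] at h3
      have h4 : (y - π) ^ 2 ≤ s := by
        rw [← hqs]
        exact sq_le_sq' (by linarith [hy.1]) (by linarith [hy.2])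
      have h5 : s / 2 ≤ X y := le_max_of_le_left (by linarith)
      calc (s / 2) ^ 6 ≤ X y ^ 6 := by gcongr
        _ = g y ^ 2 := by simp only [hg]; ring
    rw [intervalIntegral.integral_const, smul_eq_mul] at h2
    calc _ = (π + q - (π - q)) * (s / 2) ^ 6 := by ring
      _ ≤ _ := h2.trans h1
  have hup : sqNormBC φ₂ ≤ 6 * q * (15 * s ^ 2) ^ 2 := by
    have hintble : ∀ a b : ℝ, IntervalIntegrable (fun y => g₂ y ^ 2) volume a b := fun a b =>
      Continuous.intervalIntegrable (by fun_prop) _ _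
    have hzero : ∀ a b, 0 ≤ a → a ≤ b → b ≤ 2 * π → (∀ y ∈ Ioo a b, 3 * q < |y - π|) →
        (∫ y in a..b, g₂ y ^ 2) = 0 := by
      intro a b ha hab hb hout
      rw [← intervalIntegral.integral_zero (a := a) (b := b) (μ := volume)]
      refine intervalIntegral.integral_congr_Ioo_of_le hab fun y hy => ?_
      have h0 : X y = 0 := by
        by_contra hne
        exact absurd (hsupp y ⟨ha.trans hy.1.le, hy.2.le.trans hb⟩ hne) (not_le.mpr (hout y hy))
      simp [hg₂, h0]
    rw [hnorm₂, ← intervalIntegral.integral_add_adjacent_intervals (hintble 0 (π - 3 * q)) (hintble _ _),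
      ← intervalIntegral.integral_add_adjacent_intervals (hintble (π - 3 * q) (π + 3 * q)) (hintble _ _),
      hzero 0 (π - 3 * q) le_rfl (by linarith) (by linarith)
        (fun y hy => lt_abs.mpr (Or.inr (by linarith [hy.2]))),
      hzero (π + 3 * q) (2 * π) (by linarith) (by linarith) le_rfl
        (fun y hy => lt_abs.mpr (Or.inl (by linarith [hy.1]))), zero_add, add_zero]
    have h2 : (∫ y in (π - 3 * q)..(π + 3 * q), g₂ y ^ 2) ≤
        ∫ _ in (π - 3 * q)..(π + 3 * q), (15 * s ^ 2) ^ 2 := by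
      refine intervalIntegral.integral_mono_on (by linarith) (hintble _ _)
        (Continuous.intervalIntegrable (by fun_prop) _ _) fun y _ => ?_
      exact sq_le_sq.mpr ((hg₂b y).trans (le_abs_self _))
    rw [intervalIntegral.integral_const, smul_eq_mul] at h2
    linarith
  refine ⟨φ, φ₁, φ₂, ?_, ?_, ?_, ?_, ?_, ?_, ?_, ?_⟩
  · intro y
    rw [eφ, hφ₁]
    exact (hd1 y).ofReal_comp
  · intro y
    rw [eφ₁, hφ₂]
    exact (hd2 y).ofReal_comp
  · intro y
    simp only [hφ, hg, hXper]
  · intro y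
    simp only [hφ₂, hg₂per]
  · intro y
    simp [hφ]
  · exact lt_of_lt_of_le (by positivity) hlow
  · calc s ^ 2 * sqNormBC φ₂ ≤ s ^ 2 * (6 * q * (15 * s ^ 2) ^ 2) := by gcongr
      _ = 43200 * (2 * q * (s / 2) ^ 6) := by ring
      _ ≤ _ := by gcongr
  · intro y hy hne
    refine hsupp y hy fun h0 => hne ?_
    simp [hφ, hg, h0]

/-! ### Choice of the scale -/

/-- With the bump at scale `√s = κ^{1/(α+2)}`, the diffusion error `κ / s` and the Hölder error
`(√s)^α` of the quasimode both equal `κ^{α/(α+2)}`. -/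
lemma quasimode_error {α δ κ c_H : ℝ} (hα : α ∈ Ioo (0:ℝ) 1) (hδ : δ = 0 ∨ δ = 1)
    (hκ0 : 0 < κ) (hκ1 : κ < 1) {u : ℝ → ℝ} (hc_H : 0 < c_H)
    (hu_hold : ∀ y y' : ℝ, |u y - u y'| ≤ c_H * |y - y'| ^ α) {V φ φ₂ Ψ : BC}
    (hV : ∀ y, V y = ((κ * δ : ℝ) : ℂ) + (u y : ℂ) * Complex.I)
    (hΨ : ∀ y, Ψ y = κ * φ₂ y - (V y - u π * Complex.I) * φ y)
    (hφ₂ : (κ ^ (2 / (α + 2))) ^ 2 * sqNormBC φ₂ ≤ 43200 * sqNormBC φ)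
    (hsupp : ∀ y ∈ Icc 0 (2 * π), φ y ≠ 0 → |y - π| ≤ 3 * √(κ ^ (2 / (α + 2)))) :
    sqNormBC Ψ ≤ 3 * (43201 + 9 * c_H ^ 2) * (κ ^ (α / (α + 2))) ^ 2 * sqNormBC φ := by
  obtain ⟨hα0, hα1⟩ := hα
  set s := κ ^ (2 / (α + 2)) with hs
  set η := κ ^ (α / (α + 2)) with hη
  have hs0 : 0 < s := Real.rpow_pos_of_pos hκ0 _
  have hη0 : 0 < η := Real.rpow_pos_of_pos hκ0 _
  have hκs : κ = s * η := by
    rw [hs, hη, ← Real.rpow_add hκ0, ← add_div, add_comm 2 α, div_self (by linarith), Real.rpow_one]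
  have hs1 : s ≤ 1 := Real.rpow_le_one hκ0.le hκ1.le (by positivity)
  have hκη : κ ≤ η := by rw [hκs]; nlinarith
  have hL : (3 * √s) ^ α ≤ 3 * η := by
    rw [Real.mul_rpow (by norm_num) (Real.sqrt_nonneg s)]
    have h1 : √s ^ α = η := by
      rw [Real.sqrt_eq_rpow, hs, hη, ← Real.rpow_mul hκ0.le, ← Real.rpow_mul hκ0.le]
      congr 1
      field_simp
    rw [h1]
    gcongr
    calc (3:ℝ) ^ α ≤ 3 ^ (1:ℝ) := Real.rpow_le_rpow_of_exponent_le (by norm_num) hα1.le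
      _ = 3 := Real.rpow_one 3
  have hδ1 : |δ| ≤ 1 := by rcases hδ with rfl | rfl <;> simp
  have hpt : ∀ y ∈ Icc 0 (2 * π), ‖Ψ y‖ ^ 2 ≤
      3 * κ ^ 2 * ‖φ₂ y‖ ^ 2 + 3 * (1 + 9 * c_H ^ 2) * η ^ 2 * ‖φ y‖ ^ 2 := by
    intro y hy
    have hhol : |u y - u π| * ‖φ y‖ ≤ c_H * (3 * η) * ‖φ y‖ := by
      by_cases h0 : φ y = 0
      · simp [h0]
      · gcongr
        refine (hu_hold y π).trans ?_
        gcongr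
        exact (Real.rpow_le_rpow (abs_nonneg _) (hsupp y hy h0) hα0.le).trans hL
    have hdel : |κ * δ| * ‖φ y‖ ≤ η * ‖φ y‖ := by
      gcongr
      rw [abs_mul, abs_of_pos hκ0]
      nlinarith
    have e : Ψ y = κ * φ₂ y - ((κ * δ : ℝ) : ℂ) * φ y
        - ((u y - u π : ℝ) : ℂ) * Complex.I * φ y := by
      rw [hΨ, hV]
      push_cast
      ring
    have htri : ‖Ψ y‖ ≤ κ * ‖φ₂ y‖ + η * ‖φ y‖ + c_H * (3 * η) * ‖φ y‖ := by
      rw [e]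
      refine (norm_sub_le _ _).trans (add_le_add ((norm_sub_le _ _).trans (add_le_add ?_ ?_)) ?_)
      · rw [norm_mul, Complex.norm_real, Real.norm_eq_abs, abs_of_pos hκ0]
      · rwa [norm_mul, Complex.norm_real, Real.norm_eq_abs]
      · rwa [norm_mul, norm_mul, Complex.norm_I, mul_one, Complex.norm_real, Real.norm_eq_abs]
    set A := κ * ‖φ₂ y‖ with hA
    set B := η * ‖φ y‖ with hB
    have h1 : ‖Ψ y‖ ^ 2 ≤ (A + B + 3 * c_H * B) ^ 2 := by
      refine pow_le_pow_left₀ (norm_nonneg _) (htri.trans_eq ?_) 2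
      rw [hB]; ring
    refine h1.trans ?_
    have h2 : 3 * κ ^ 2 * ‖φ₂ y‖ ^ 2 + 3 * (1 + 9 * c_H ^ 2) * η ^ 2 * ‖φ y‖ ^ 2 =
        3 * A ^ 2 + 3 * B ^ 2 + 3 * (3 * c_H * B) ^ 2 := by rw [hA, hB]; ring
    rw [h2]
    nlinarith [sq_nonneg (A - B), sq_nonneg (A - 3 * c_H * B), sq_nonneg (B - 3 * c_H * B)]
  have hintble : sqNormBC Ψ ≤
      3 * κ ^ 2 * sqNormBC φ₂ + 3 * (1 + 9 * c_H ^ 2) * η ^ 2 * sqNormBC φ := by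
    unfold sqNormBC
    rw [← intervalIntegral.integral_const_mul, ← intervalIntegral.integral_const_mul,
      ← intervalIntegral.integral_add (Continuous.intervalIntegrable (by fun_prop) _ _)
      (Continuous.intervalIntegrable (by fun_prop) _ _)]
    exact intervalIntegral.integral_mono_on (by positivity)
      (Continuous.intervalIntegrable (by fun_prop) _ _)
      (Continuous.intervalIntegrable (by fun_prop) _ _) hpt
  calc _ ≤ _ := hintble
    _ = 3 * η ^ 2 * (s ^ 2 * sqNormBC φ₂) + 3 * (1 + 9 * c_H ^ 2) * η ^ 2 * sqNormBC φ := by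
        rw [hκs]; ring
    _ ≤ 3 * η ^ 2 * (43200 * sqNormBC φ) + 3 * (1 + 9 * c_H ^ 2) * η ^ 2 * sqNormBC φ := by
        gcongr
    _ = _ := by ring

/-- Sharpness of the enhanced diffusion rate `κ^{α/(α+2)}` for
`C^α` (Hölder) shear flows. -/
theorem sharpness_holder_shear (α : ℝ) (hα : α ∈ Ioo (0:ℝ) 1) (δ : ℝ) (hδ : δ = 0 ∨ δ = 1)
    (u : ℝ → ℝ) (hu_per : ∀ y, u (y + 2 * π) = u y)
    (c_H : ℝ) (hc_H : 0 < c_H) (hu_hold : ∀ y y' : ℝ, |u y - u y'| ≤ c_H * |y - y'| ^ α)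
    (κ₀ : ℝ) (hκ₀ : κ₀ ∈ Ioo (0:ℝ) 1) (r : ℝ → ℝ) (hr : IsRateFunction κ₀ r)
    (henh : DiffusionEnhancing δ κ₀ u r) :
    ∃ c : ℝ, 0 < c ∧ ∃ κ₁ ∈ Ioc (0:ℝ) κ₀, ∀ κ ∈ Ioc (0:ℝ) κ₁,
      r κ ≤ c⁻¹ * κ ^ (α / (α + 2)) := by
  obtain ⟨C, hC, hdecay⟩ := henh
  obtain ⟨-, -, hr01, -⟩ := hr
  have hu : Continuous u := by
    refine continuous_iff_continuousAt.mpr fun y => tendsto_iff_dist_tendsto_zero.mpr ?_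
    have h1 : Continuous fun z : ℝ => c_H * |z - y| ^ α :=
      continuous_const.mul ((continuous_id.sub continuous_const).abs.rpow_const
        fun _ => Or.inr hα.1.le)
    have h2 := h1.tendsto y
    simp only [sub_self, abs_zero, Real.zero_rpow hα.1.ne', mul_zero] at h2
    exact squeeze_zero (fun _ => dist_nonneg) (fun z => hu_hold z y) h2
  have hK : 0 < 3 * (43201 + 9 * c_H ^ 2) := by positivity
  set K := 3 * (43201 + 9 * c_H ^ 2)
  refine ⟨(2 * √(C * K))⁻¹, by positivity, κ₀, ⟨hκ₀.1, le_rfl⟩, fun κ hκ => ?_⟩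
  rw [inv_inv]
  have hκ1 : κ < 1 := hκ.2.trans_lt hκ₀.2
  have hα0 := hα.1
  obtain ⟨V, hV⟩ := exists_BC_eq
    (g := fun y => ((κ * δ : ℝ) : ℂ) + (u y : ℂ) * Complex.I) (by fun_prop)
    (fun y => by rw [hu_per])
  obtain ⟨φ, φ₁, φ₂, hφ₁, hφ₂, hφper, hφ₂per, hreal, hpos, hφ₂le, hsupp⟩ :=
    exists_bump (s := κ ^ (2 / (α + 2))) (Real.rpow_pos_of_pos hκ.1 _)
      (Real.rpow_le_one hκ.1.le hκ1.le (by positivity))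
  have hVper : ∀ y, V (y + 2 * π) = V y := fun y => by rw [hV, hV, hu_per]
  obtain ⟨Ψ, hΨ⟩ := exists_BC_eq
    (g := fun y => κ * φ₂ y - (V y - u π * Complex.I) * φ y) (by fun_prop)
    (fun y => by rw [hφ₂per, hVper, hφper])
  have hrate := rate_le_of_quasimode_s1 hκ.1 (hr01 κ hκ).1 hV hVper (hdecay κ hκ) hφ₁ hφ₂ hφper
    hreal hΨ
  have herr := quasimode_error hα hδ hκ.1 hκ1 hc_H hu_hold hV hΨ hφ₂le hsupp
  set η := κ ^ (α / (α + 2))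
  have hη : 0 < η := Real.rpow_pos_of_pos hκ.1 _
  have hsq : √(C * sqNormBC φ * sqNormBC Ψ) ≤ √(C * K) * (η * sqNormBC φ) := by
    rw [← Real.sqrt_sq (by positivity : 0 ≤ η * sqNormBC φ), ← Real.sqrt_mul (by positivity)]
    refine Real.sqrt_le_sqrt ?_
    calc _ ≤ C * sqNormBC φ * (K * η ^ 2 * sqNormBC φ) := by gcongr
      _ = _ := by ring
  refine le_of_mul_le_mul_right ?_ hpos
  linarith

end
end
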